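/- arXiv:1803.07975 — 2 statements merged into one kernel-verified Lean document; each statement's English description precedes it below -/
import Mathlib

section
/- Let Ω ⊊ ℝ^{n+1} be open, let x ∈ Ω and y ∈ cl(Ω) with δ_Ω(y) ≤ δ_Ω(x). Then: (i) for every λ ∈ (0,1) there exists C ≥ 1, depending only on λ and n, such that if there is a λ-carrot curve from x to y, then there is a C-good Harnack chain from x to y; and (ii) for every C ≥ 1 there exists λ ∈ (0,1), depending only on C and n, such that if there is a C-good Harnack chain from x to y, then there is a λ-carrot curve from x to y. -/
open Metric MeasureTheory Set Filter Topology

noncomputable section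

/-- Euclidean space `ℝ^d`. -/
abbrev Euc (d : ℕ) : Type := EuclideanSpace ℝ (Fin d)

namespace HarmMeas

/-- Distance between two sets. -/
def setD {d : ℕ} (s t : Set (Euc d)) : ℝ := sInf (Set.image2 dist s t)

/-- A continuous function is subharmonic on `U` if it satisfies the sub-mean-value
property on every ball whose closure is contained in `U`. -/
def SubharmonicOn {d : ℕ} (u : Euc d → ℝ) (U : Set (Euc d)) : Prop :=
  ContinuousOn u U ∧ ∀ x ∈ U, ∀ r : ℝ, 0 < r → closedBall x r ⊆ U →
    u x ≤ ⨍ y in ball x r, u y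

/-- Harmonic (continuous) functions: both `u` and `-u` are subharmonic. -/
def HarmonicOnS {d : ℕ} (u : Euc d → ℝ) (U : Set (Euc d)) : Prop :=
  SubharmonicOn u U ∧ SubharmonicOn (fun y => -u y) U

/-- The upper (Perron) class associated to boundary data `f` on the open set `Ω`:
superharmonic functions on `Ω`, bounded below, whose liminf at each boundary point
dominates `f` there. -/
def upperFamily {d : ℕ} (Ω : Set (Euc d)) (f : Euc d → ℝ) : Set (Euc d → ℝ) :=
  {u | SubharmonicOn (fun y => -u y) Ω ∧ BddBelow (u '' Ω) ∧
       ∀ ξ ∈ frontier Ω, f ξ ≤ Filter.liminf u (nhdsWithin ξ Ω)}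

/-- The (upper) Perron solution of the Dirichlet problem in `Ω` with boundary data `f`,
evaluated at `p`. -/
def perron {d : ℕ} (Ω : Set (Euc d)) (f : Euc d → ℝ) (p : Euc d) : ℝ :=
  sInf ((fun u => u p) '' upperFamily Ω f)

/-- Harmonic measure `ω^p(A)` of `A` for the open set `Ω` with pole `p`: the value at `p`
of the Perron solution with boundary data the characteristic function of `A`. -/
def hMeasure {d : ℕ} (Ω : Set (Euc d)) (p : Euc d) (A : Set (Euc d)) : ℝ :=
  perron Ω (A.indicator fun _ => 1) p

/-- The Green function `g(p,x)` of `Ω ⊆ ℝ^{n+1}` with pole `p`: the fundamental solution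
`|x-p|^{1-n}` minus the Perron solution with the fundamental solution as boundary data. -/
def greenFn (n : ℕ) (Ω : Set (Euc (n+1))) (p x : Euc (n+1)) : ℝ :=
  ‖x - p‖ ^ ((1 : ℤ) - n) - perron Ω (fun ξ => ‖ξ - p‖ ^ ((1 : ℤ) - n)) x

/-- `F ⊆ ℝ^{n+1}` is `n`-AD-regular with constant `C₀`. -/
def ADRegular (n : ℕ) (C₀ : ℝ) (F : Set (Euc (n+1))) : Prop :=
  ∀ x ∈ F, ∀ r : ℝ, 0 < r → ENNReal.ofReal r ≤ EMetric.diam F →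
    ENNReal.ofReal (C₀⁻¹ * r ^ n) ≤ μH[n] (F ∩ ball x r) ∧
      μH[n] (F ∩ ball x r) ≤ ENNReal.ofReal (C₀ * r ^ n)

/-- A `λ`-carrot curve from `x` to `y` in `Ω`: a curve `γ ⊆ Ω ∪ {y}` with endpoints `x`
and `y` such that `dist(z, ∂Ω) ≥ λ ⋅ ℋ¹(γ(y,z))` for every point `z = γ(t)` of the curve,
where `γ(y,z)` is the arc of `γ` between `y` and `z`. -/
def CarrotCurve {d : ℕ} (Ω : Set (Euc d)) (lam : ℝ) (x y : Euc d) : Prop :=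
  ∃ γ : ℝ → Euc d, ContinuousOn γ (Icc 0 1) ∧ γ 0 = x ∧ γ 1 = y ∧
    γ '' Icc 0 1 ⊆ Ω ∪ {y} ∧
    ∀ t ∈ Icc (0:ℝ) 1,
      ENNReal.ofReal lam * μH[1] (γ '' Icc t 1) ≤
        ENNReal.ofReal (infDist (γ t) (frontier Ω))

/-- A `C`-good Harnack chain from `x ∈ Ω` to `y ∈ cl Ω`, all of whose balls are moreover
contained in the set `W`: consecutive balls meet, each ball has radius comparable (with
constant `C`) to its distance to `∂Ω`, radii are quasi-monotone, and for each `t > 0`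
there are at most `C` balls of radius in `(t, 2t]`.  If `y ∈ Ω` the chain is finite and
`y` lies in its last ball; if `y ∈ ∂Ω` the chain is infinite and the balls converge
to `y`. -/
def GoodChainIn {d : ℕ} (Ω W : Set (Euc d)) (C : ℝ) (x y : Euc d) : Prop :=
  (y ∈ Ω ∧ ∃ (N : ℕ) (c : ℕ → Euc d) (r : ℕ → ℝ),
    x ∈ ball (c 0) (r 0) ∧ y ∈ ball (c N) (r N) ∧
    (∀ j ≤ N, 0 < r j ∧ ball (c j) (r j) ⊆ Ω ∩ W) ∧
    (∀ j < N, (ball (c j) (r j) ∩ ball (c (j+1)) (r (j+1))).Nonempty) ∧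
    (∀ j ≤ N, C⁻¹ * setD (ball (c j) (r j)) (frontier Ω) ≤ r j ∧
      r j ≤ C * setD (ball (c j) (r j)) (frontier Ω)) ∧
    (∀ i j, i ≤ N → j ≤ N → i < j → r j ≤ C * r i) ∧
    (∀ t : ℝ, 0 < t →
      {j | j ≤ N ∧ t < r j ∧ r j ≤ 2 * t}.Finite ∧
      (Nat.card {j | j ≤ N ∧ t < r j ∧ r j ≤ 2 * t} : ℝ) ≤ C))
  ∨ (y ∈ frontier Ω ∧ ∃ (c : ℕ → Euc d) (r : ℕ → ℝ),
    x ∈ ball (c 0) (r 0) ∧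
    Filter.Tendsto (fun j => infDist y (ball (c j) (r j))) atTop (nhds 0) ∧
    (∀ j, 0 < r j ∧ ball (c j) (r j) ⊆ Ω ∩ W) ∧
    (∀ j, (ball (c j) (r j) ∩ ball (c (j+1)) (r (j+1))).Nonempty) ∧
    (∀ j, C⁻¹ * setD (ball (c j) (r j)) (frontier Ω) ≤ r j ∧
      r j ≤ C * setD (ball (c j) (r j)) (frontier Ω)) ∧
    (∀ i j : ℕ, i < j → r j ≤ C * r i) ∧
    (∀ t : ℝ, 0 < t →
      {j | t < r j ∧ r j ≤ 2 * t}.Finite ∧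
      (Nat.card {j | t < r j ∧ r j ≤ 2 * t} : ℝ) ≤ C))

/-- A `C`-good Harnack chain from `x` to `y`. -/
def GoodChain {d : ℕ} (Ω : Set (Euc d)) (C : ℝ) (x y : Euc d) : Prop :=
  GoodChainIn Ω Set.univ C x y


lemma aux_packing (d : ℕ) (R : ℝ) : ∃ M : ℕ, ∀ (S : Set ℕ) (z : ℕ → Euc d) (p : Euc d) (ρ : ℝ),
    0 < ρ → (∀ j ∈ S, dist (z j) p ≤ R * ρ) →
    (∀ i ∈ S, ∀ j ∈ S, i < j → ρ ≤ dist (z j) (z i)) → S.Finite ∧ S.ncard ≤ M := by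
  obtain ⟨t, -, htf, htc⟩ := (isCompact_closedBall (0 : Euc d) R).finite_cover_balls
    (e := 1/2) (by norm_num)
  refine ⟨t.ncard, fun S z p ρ hρ hR hs => ?_⟩
  have h1 : ∀ j, ∃ q, j ∈ S → q ∈ t ∧ dist (ρ⁻¹ • (z j - p)) q < 1/2 := by
    intro j
    by_cases hj : j ∈ S
    · have : ρ⁻¹ • (z j - p) ∈ closedBall (0 : Euc d) R := by
        rw [mem_closedBall_zero_iff, norm_smul, norm_inv, Real.norm_of_nonneg hρ.le,
          ← dist_eq_norm, inv_mul_le_iff₀ hρ]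
        linarith [hR j hj, mul_comm R ρ]
      have := htc this
      simp only [mem_iUnion, mem_ball, exists_prop] at this
      obtain ⟨q, hq, h⟩ := this
      exact ⟨q, fun _ => ⟨hq, h⟩⟩
    · exact ⟨0, fun h => absurd h hj⟩
  choose f hf using h1
  have key : ∀ i ∈ S, ∀ j ∈ S, i < j → f i ≠ f j := by
    intro i hi j hj hij he
    have h2 := (hf i hi).2
    have h3 := (hf j hj).2
    rw [he] at h2
    have h4 : dist (ρ⁻¹ • (z j - p)) (ρ⁻¹ • (z i - p)) < 1 := by
      have := dist_triangle_right (ρ⁻¹ • (z j - p)) (ρ⁻¹ • (z i - p)) (f j)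
      linarith
    rw [dist_smul₀, dist_sub_right, norm_inv, Real.norm_of_nonneg hρ.le,
      inv_mul_lt_iff₀ hρ] at h4
    linarith [hs i hi j hj hij]
  have inj : Set.InjOn f S := by
    intro i hi j hj he
    rcases lt_trichotomy i j with h | h | h
    · exact absurd he (key i hi j hj h)
    · exact h
    · exact absurd he.symm (key j hj i hi h)
  have maps : Set.MapsTo f S t := fun j hj => (hf j hj).1
  exact ⟨Set.Finite.of_injOn maps inj htf, Set.ncard_le_ncard_of_injOn f maps inj htf⟩

lemma aux_count (d : ℕ) (lam : ℝ) (hl : 0 < lam) : ∃ M : ℕ, ∀ (S : Set ℕ) (z : ℕ → Euc d)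
    (D : ℕ → ℝ),
    (∀ i ∈ S, ∀ j ∈ S, i ≤ j → dist (z j) (z i) ≤ D i / lam) →
    (∀ i ∈ S, ∀ j ∈ S, i < j → D i / 4 ≤ dist (z j) (z i)) → ∀ t : ℝ, 0 < t →
    {j | j ∈ S ∧ t < D j / 2 ∧ D j / 2 ≤ 2 * t}.Finite ∧
      Nat.card {j | j ∈ S ∧ t < D j / 2 ∧ D j / 2 ≤ 2 * t} ≤ M := by
  obtain ⟨M, hM⟩ := aux_packing d (8 / lam)
  refine ⟨M, fun S z D h1 h2 t ht => ?_⟩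
  rw [Nat.card_coe_set_eq]
  classical
  rcases Set.eq_empty_or_nonempty {j | j ∈ S ∧ t < D j / 2 ∧ D j / 2 ≤ 2 * t} with he | hne
  · rw [he]; simp
  · have hi := Nat.find_spec hne
    have hmin := fun j (hj : j ∈ {j | j ∈ S ∧ t < D j / 2 ∧ D j / 2 ≤ 2 * t}) =>
      Nat.find_min' hne hj
    set i := Nat.find hne
    refine hM _ z (z i) (t / 2) (by positivity) ?_ ?_
    · intro j hj
      refine (h1 i hi.1 j hj.1 (hmin j hj)).trans ?_
      rw [div_mul_eq_mul_div]
      gcongr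
      linarith [hi.2.2]
    · intro a ha b hb hab
      refine le_trans ?_ (h2 a ha.1 b hb.1 hab)
      linarith [ha.2.1]

lemma aux_exit {d : ℕ} (γ : ℝ → Euc d) (hγ : ContinuousOn γ (Icc 0 1)) (t : ℝ)
    (ht : t ∈ Icc (0:ℝ) 1) (ρ : ℝ) (hρ : 0 ≤ ρ) :
    ∃ t1 ∈ Icc t 1, dist (γ t1) (γ t) ≤ ρ ∧
      (ρ < dist (γ 1) (γ t) → ∀ s ∈ Icc t1 1, ρ ≤ dist (γ s) (γ t)) := by
  have hc : ContinuousOn (fun s => dist (γ s) (γ t)) (Icc t 1) :=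
    by
    have := hγ.mono (Icc_subset_Icc_left (b := (1:ℝ)) ht.1)
    fun_prop
  have hcl : IsClosed (Icc t 1 ∩ (fun s => dist (γ s) (γ t)) ⁻¹' Iic ρ) :=
    hc.preimage_isClosed_of_isClosed isClosed_Icc isClosed_Iic
  have hcomp : IsCompact (Icc t 1 ∩ (fun s => dist (γ s) (γ t)) ⁻¹' Iic ρ) :=
    isCompact_Icc.of_isClosed_subset hcl inter_subset_left
  obtain ⟨t1, ht1, hg⟩ := hcomp.exists_isGreatest ⟨t, ⟨le_rfl, ht.2⟩, by simpa using hρ⟩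
  refine ⟨t1, ht1.1, ht1.2, fun h s hs => ?_⟩
  obtain ⟨u, hu, hu2⟩ := intermediate_value_Icc ht1.1.2 (hc.mono (Icc_subset_Icc_left ht1.1.1))
    ⟨ht1.2, h.le⟩
  have hut : u = t1 := le_antisymm
    (hg ⟨⟨ht1.1.1.trans hu.1, hu.2⟩, by simpa using hu2.le⟩) hu.1
  subst hut
  by_contra! hlt
  have hsu : s = u := le_antisymm (hg ⟨⟨ht1.1.1.trans hs.1, hs.2⟩, by simpa using hlt.le⟩) hs.1
  subst hsu
  simp only at hu2
  linarith

lemma aux_dist_le {d : ℕ} (K : Set (Euc d)) (hK : IsPreconnected K) (a b : Euc d) (ha : a ∈ K)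
    (hb : b ∈ K) : ENNReal.ofReal (dist a b) ≤ μH[1] K := by
  have h1 : Icc 0 (dist a b) ⊆ (fun q => dist a q) '' K :=
    (hK.image _ (by fun_prop)).Icc_subset ⟨a, ha, by simp⟩ ⟨b, hb, rfl⟩
  have h2 := (LipschitzWith.dist_right a).hausdorffMeasure_image_le (d := 1) zero_le_one K
  calc ENNReal.ofReal (dist a b) = volume (Icc 0 (dist a b)) := by simp
    _ ≤ volume ((fun q => dist a q) '' K) := measure_mono h1
    _ ≤ _ := by
      rw [← hausdorffMeasure_real]
      simpa using h2

lemma aux_ball_subset {d : ℕ} {Ω : Set (Euc d)} (hΩ : IsOpen Ω) {p : Euc d} (hp : p ∈ Ω) :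
    ball p (infDist p (frontier Ω)) ⊆ Ω := by
  intro q hq
  by_contra hqn
  have hpos : 0 < infDist p (frontier Ω) := dist_nonneg.trans_lt hq
  have hc : IsPreconnected (ball p (infDist p (frontier Ω))) :=
    (convex_ball _ _).isPreconnected
  have hnf : ∀ w ∈ ball p (infDist p (frontier Ω)), w ∉ frontier Ω := by
    intro w hw1 hw2
    have := infDist_le_dist_of_mem (x := p) hw2
    rw [mem_ball, dist_comm] at hw1
    linarith
  have hcov : ∀ w ∈ ball p (infDist p (frontier Ω)), w ∉ Ω → w ∈ (closure Ω)ᶜ := by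
    intro w hw hwn hcl
    exact hnf w hw (by rw [hΩ.frontier_eq]; exact ⟨hcl, hwn⟩)
  obtain ⟨w, -, hw1, hw2⟩ := hc Ω (closure Ω)ᶜ hΩ isClosed_closure.isOpen_compl
    (fun w hw => by
      by_cases h : w ∈ Ω
      · exact Or.inl h
      · exact Or.inr (hcov w hw h))
    ⟨p, mem_ball_self hpos, hp⟩ ⟨q, hq, hcov q hq hqn⟩
  exact hw2 (subset_closure hw1)

lemma aux_setD_le {d : ℕ} {B F : Set (Euc d)} {z : Euc d} (hz : z ∈ B) (hF : F.Nonempty) :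
    setD B F ≤ infDist z F := by
  rw [le_infDist hF]
  intro f hf
  exact csInf_le ⟨0, by rintro _ ⟨a, -, b, -, rfl⟩; exact dist_nonneg⟩ ⟨z, hz, f, hf, rfl⟩

lemma aux_le_setD {d : ℕ} {F : Set (Euc d)} {z : Euc d} (hF : F.Nonempty) (hz : 0 < infDist z F) :
    infDist z F / 2 ≤ setD (ball z (infDist z F / 2)) F := by
  refine le_csInf (Set.Nonempty.image2 ⟨z, mem_ball_self (by positivity)⟩ hF) ?_
  rintro _ ⟨a, ha, b, hb, rfl⟩
  have h1 := infDist_le_dist_of_mem (x := z) hb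
  have h2 := dist_triangle_left z b a
  rw [mem_ball] at ha
  linarith

lemma aux_part1 (d : ℕ) (lam : ℝ) (hl : 0 < lam) : ∃ C : ℝ, 1 ≤ C ∧
    ∀ (Ω : Set (Euc d)), IsOpen Ω → (frontier Ω).Nonempty →
      ∀ x ∈ Ω, ∀ y ∈ closure Ω, CarrotCurve Ω lam x y → GoodChain Ω C x y := by
  obtain ⟨M, hM⟩ := aux_count d lam hl
  have hli : 0 < 1 / lam := by positivity
  have hM0 : (0:ℝ) ≤ M := Nat.cast_nonneg _
  refine ⟨M + 2 + 1 / lam, by linarith, ?_⟩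
  rintro Ω hΩ hF x hx y hy ⟨γ, hγ, h0, h1, hsub, hcar⟩
  set C : ℝ := M + 2 + 1 / lam with hC
  have hC2 : 2 ≤ C := by linarith
  set D : Euc d → ℝ := fun p => infDist p (frontier Ω) with hD
  have hDnn : ∀ p, 0 ≤ D p := fun p => infDist_nonneg
  have hDpos : ∀ p ∈ Ω, 0 < D p := by
    intro p hp
    refine (isClosed_frontier.notMem_iff_infDist_pos hF).1 ?_
    rw [hΩ.frontier_eq]
    exact fun h => h.2 hp
  -- distances along the curve
  have hdist : ∀ s ∈ Icc (0:ℝ) 1, ∀ u ∈ Icc s 1, dist (γ u) (γ s) ≤ D (γ s) / lam := by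
    intro s hs u hu
    have hK : IsPreconnected (γ '' Icc s 1) :=
      isPreconnected_Icc.image _ (hγ.mono (Icc_subset_Icc_left hs.1))
    have h2 := aux_dist_le _ hK (γ u) (γ s) ⟨u, hu, rfl⟩ ⟨s, ⟨le_rfl, hs.2⟩, rfl⟩
    have h3 := (mul_le_mul_right h2 (ENNReal.ofReal lam)).trans (hcar s hs)
    rw [← ENNReal.ofReal_mul hl.le, ENNReal.ofReal_le_ofReal_iff (hDnn _)] at h3
    rw [le_div_iff₀ hl]
    linarith
  have hex : ∀ s, ∃ s1, s ∈ Icc (0:ℝ) 1 → s1 ∈ Icc s 1 ∧ dist (γ s1) (γ s) ≤ D (γ s) / 4 ∧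
      (D (γ s) / 4 < dist (γ 1) (γ s) → ∀ u ∈ Icc s1 1, D (γ s) / 4 ≤ dist (γ u) (γ s)) := by
    intro s
    by_cases hs : s ∈ Icc (0:ℝ) 1
    · obtain ⟨s1, a, b⟩ := aux_exit γ hγ s hs (D (γ s) / 4) (by linarith [hDnn (γ s)])
      exact ⟨s1, fun _ => ⟨a, b⟩⟩
    · exact ⟨0, fun h => absurd h hs⟩
  choose nxt hnxt using hex
  obtain ⟨T, hT0, hTs⟩ : ∃ T : ℕ → ℝ, T 0 = 0 ∧ ∀ j, T (j+1) = nxt (T j) :=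
    ⟨fun j => nxt^[j] 0, rfl, fun j => Function.iterate_succ_apply' _ _ _⟩
  have hTI : ∀ j, T j ∈ Icc (0:ℝ) 1 := by
    intro j
    induction j with
    | zero => rw [hT0]; simp
    | succ k ih =>
      have := (hnxt _ ih).1
      rw [hTs]
      exact ⟨ih.1.trans this.1, this.2⟩
  have hTm : Monotone T := monotone_nat_of_le_succ fun j => by
    rw [hTs]; exact (hnxt _ (hTI j)).1.1
  set z : ℕ → Euc d := fun j => γ (T j) with hz
  have hz0 : z 0 = x := by simp only [hz, hT0, h0]
  have hA : ∀ i j, i ≤ j → dist (z j) (z i) ≤ D (z i) / lam := fun i j hij =>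
    hdist _ (hTI i) _ ⟨hTm hij, (hTI j).2⟩
  have hAy : ∀ i, dist y (z i) ≤ D (z i) / lam := fun i => by
    rw [← h1]; exact hdist _ (hTI i) _ ⟨(hTI i).2, le_rfl⟩
  have hB : ∀ i j, i < j → D (z i) / 4 < dist y (z i) → D (z i) / 4 ≤ dist (z j) (z i) := by
    intro i j hij h
    rw [← h1] at h
    refine (hnxt _ (hTI i)).2.2 h (T j) ⟨?_, (hTI j).2⟩
    rw [← hTs]
    exact hTm hij
  have hstep : ∀ i, dist (z (i+1)) (z i) ≤ D (z i) / 4 := fun i => by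
    simp only [hz, hTs]
    exact (hnxt _ (hTI i)).2.1
  have hmono : ∀ i j, i < j → D (z j) / 2 ≤ C * (D (z i) / 2) := by
    intro i j hij
    have h2 : D (z j) ≤ D (z i) + dist (z j) (z i) := infDist_le_infDist_add_dist
    have h3 := hA i j hij.le
    have h4 : C * D (z i) = (M + 1) * D (z i) + D (z i) + D (z i) / lam := by rw [hC]; ring
    have h5 : 0 ≤ (M + 1) * D (z i) := mul_nonneg (by linarith) (hDnn _)
    linarith
  have hball : ∀ i, z i ∈ Ω → 0 < D (z i) / 2 ∧ ball (z i) (D (z i) / 2) ⊆ Ω ∩ univ := by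
    intro i hi
    have := hDpos _ hi
    refine ⟨by linarith, fun q hq => ⟨aux_ball_subset hΩ hi (ball_subset_ball ?_ hq), trivial⟩⟩
    change D (z i) / 2 ≤ D (z i)
    linarith
  have hset : ∀ i, z i ∈ Ω → C⁻¹ * setD (ball (z i) (D (z i) / 2)) (frontier Ω) ≤ D (z i) / 2 ∧
      D (z i) / 2 ≤ C * setD (ball (z i) (D (z i) / 2)) (frontier Ω) := by
    intro i hi
    have hp := hDpos _ hi
    have h2 : setD (ball (z i) (D (z i) / 2)) (frontier Ω) ≤ D (z i) :=
      aux_setD_le (mem_ball_self (by linarith)) hF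
    have h3 : D (z i) / 2 ≤ setD (ball (z i) (D (z i) / 2)) (frontier Ω) := aux_le_setD hF hp
    constructor
    · rw [inv_mul_le_iff₀ (by linarith)]
      nlinarith
    · nlinarith
  have hint : ∀ i, z i ∈ Ω → z (i+1) ∈ Ω →
      (ball (z i) (D (z i) / 2) ∩ ball (z (i+1)) (D (z (i+1)) / 2)).Nonempty := by
    intro i hi hi1
    have hp := hDpos _ hi
    have hp1 := hDpos _ hi1
    exact ⟨z (i+1), by rw [mem_ball]; linarith [hstep i], mem_ball_self (by linarith)⟩
  by_cases hyΩ : y ∈ Ω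
  · left
    refine ⟨hyΩ, ?_⟩
    have hzΩ : ∀ s ∈ Icc (0:ℝ) 1, γ s ∈ Ω := by
      intro s hs
      rcases hsub ⟨s, hs, rfl⟩ with h | h
      · exact h
      · rw [mem_singleton_iff] at h; rw [h]; exact hyΩ
    have hzO : ∀ i, z i ∈ Ω := fun i => hzΩ _ (hTI i)
    have hN : ∃ N, dist y (z N) ≤ D (z N) / 4 := by
      by_contra! hcon
      have hcont : ContinuousOn (fun s => D (γ s)) (Icc 0 1) :=
        (continuous_infDist_pt _).comp_continuousOn hγ
      obtain ⟨s0, hs0, hmin⟩ := isCompact_Icc.exists_isMinOn ⟨0, by simp⟩ hcont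
      have hp := hDpos _ (hzΩ s0 hs0)
      obtain ⟨M', hM'⟩ := aux_packing d (D (z 0) / lam / (D (γ s0) / 4))
      refine Set.infinite_univ (hM' univ z (z 0) (D (γ s0) / 4) (by linarith) ?_ ?_).1
      · intro j _
        rw [div_mul_cancel₀ _ (by linarith)]
        exact hA 0 j (Nat.zero_le _)
      · intro i _ j _ hij
        have h2 := hB i j hij (hcon i)
        have h3 : D (γ s0) ≤ D (z i) := hmin (hTI i)
        linarith
    classical
    have hNs := Nat.find_spec hN
    have hNm := fun m (h : m < Nat.find hN) => Nat.find_min hN h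
    set N := Nat.find hN
    have hcount := hM {j | j ≤ N} z (fun j => D (z j)) (fun i _ j _ hij => hA i j hij)
      (fun i _ j hj hij => hB i j hij (not_le.1 (hNm i (lt_of_lt_of_le hij hj))))
    refine ⟨N, z, fun j => D (z j) / 2, ?_, ?_, fun j _ => hball j (hzO j),
      fun j _ => hint j (hzO j) (hzO _), fun j _ => hset j (hzO j),
      fun i j _ _ hij => hmono i j hij, fun t ht => ⟨(hcount t ht).1, ?_⟩⟩
    · rw [← hz0]; exact mem_ball_self (hball 0 (hzO 0)).1
    · rw [mem_ball]; linarith [hDpos _ (hzO N)]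
    · have : ((Nat.card {j | j ≤ N ∧ t < D (z j) / 2 ∧ D (z j) / 2 ≤ 2 * t} : ℕ) : ℝ) ≤ M :=
        Nat.cast_le.2 (hcount t ht).2
      linarith
  · right
    have hyF : y ∈ frontier Ω := by rw [hΩ.frontier_eq]; exact ⟨hy, hyΩ⟩
    refine ⟨hyF, ?_⟩
    have hDy : ∀ p, D p ≤ dist y p := fun p => by
      rw [dist_comm]; exact infDist_le_dist_of_mem hyF
    have hzD : ∀ i, 0 < D (z i) := by
      intro i
      induction i with
      | zero => rw [hz0]; exact hDpos _ hx
      | succ k ih =>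
        have h2 : D (z k) ≤ D (z (k+1)) + dist (z k) (z (k+1)) := infDist_le_infDist_add_dist
        have h3 := hstep k
        rw [dist_comm] at h3
        linarith
    have hzO : ∀ i, z i ∈ Ω := by
      intro i
      rcases hsub ⟨T i, hTI i, rfl⟩ with h | h
      · exact h
      · exfalso
        have h2 := hzD i
        rw [mem_singleton_iff] at h
        change 0 < D (γ (T i)) at h2
        rw [h] at h2
        have := infDist_zero_of_mem hyF
        exact h2.ne' this
    have hB' : ∀ i j, i < j → D (z i) / 4 ≤ dist (z j) (z i) := fun i j hij =>
      hB i j hij (by linarith [hzD i, hDy (z i)])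
    have hcount := hM univ z (fun j => D (z j)) (fun i _ j _ hij => hA i j hij)
      (fun i _ j hj hij => hB' i j hij)
    simp only [mem_univ, true_and] at hcount
    have hlim : Tendsto (fun j => D (z j)) atTop (𝓝 0) := by
      rw [Metric.tendsto_atTop]
      intro ε hε
      obtain ⟨M', hM'⟩ := aux_packing d (D (z 0) / lam / (ε / 4))
      have hfin := (hM' {j | ε ≤ D (z j)} z (z 0) (ε / 4) (by linarith) (by
        intro j _
        rw [div_mul_cancel₀ _ (by linarith)]
        exact hA 0 j (Nat.zero_le _)) (by
        intro i hi j _ hij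
        have h2 := hB' i j hij
        have h3 : ε ≤ D (z i) := hi
        linarith)).1
      obtain ⟨b, hb⟩ := hfin.bddAbove
      refine ⟨b + 1, fun j hj => ?_⟩
      rw [Real.dist_eq, sub_zero, abs_of_nonneg (hDnn _)]
      by_contra! hle
      have := hb (show j ∈ {j | ε ≤ D (z j)} from hle)
      omega
    refine ⟨z, fun j => D (z j) / 2, ?_, ?_, fun j => hball j (hzO j),
      fun j => hint j (hzO j) (hzO _), fun j => hset j (hzO j),
      fun i j hij => hmono i j hij, fun t ht => ⟨(hcount t ht).1, ?_⟩⟩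
    · rw [← hz0]; exact mem_ball_self (hball 0 (hzO 0)).1
    · refine squeeze_zero (fun j => infDist_nonneg) (g := fun j => D (z j) / lam) (fun j => ?_) ?_
      · exact (infDist_le_dist_of_mem (mem_ball_self (hball j (hzO j)).1)).trans (hAy j)
      · simpa using hlim.div_const lam
    · have : ((Nat.card {j | t < D (z j) / 2 ∧ D (z j) / 2 ≤ 2 * t} : ℕ) : ℝ) ≤ M :=
        Nat.cast_le.2 (hcount t ht).2
      linarith

lemma aux_sum (C R : ℝ) (hC : 0 ≤ C) (hR : 0 < R) (S : Set ℕ) (r : ℕ → ℝ) (hr : ∀ j ∈ S, 0 < r j)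
    (hrR : ∀ j ∈ S, r j ≤ R)
    (hc : ∀ t : ℝ, 0 < t → {j | j ∈ S ∧ t < r j ∧ r j ≤ 2 * t}.Finite ∧
      ({j | j ∈ S ∧ t < r j ∧ r j ≤ 2 * t}.ncard : ℝ) ≤ C)
    (s : Finset ℕ) (hs : ∀ j ∈ s, j ∈ S) : ∑ j ∈ s, r j ≤ 2 * C * R := by
  have hk : ∀ j, ∃ k : ℕ, j ∈ S → R * (1/2)^(k+1) < r j ∧ r j ≤ R * (1/2)^k := by
    intro j
    by_cases hj : j ∈ S
    · obtain ⟨k, h1, h2⟩ := exists_nat_pow_near_of_lt_one (x := r j / R) (y := (1/2:ℝ))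
        (div_pos (hr j hj) hR) ((div_le_one hR).2 (hrR j hj)) (by norm_num) (by norm_num)
      rw [lt_div_iff₀ hR] at h1
      rw [div_le_iff₀ hR] at h2
      exact ⟨k, fun _ => ⟨by linarith, by linarith⟩⟩
    · exact ⟨0, fun h => absurd h hj⟩
  choose k hk using hk
  rw [← Finset.sum_fiberwise_of_maps_to (t := s.image k) (g := k)
    (fun j hj => Finset.mem_image_of_mem k hj)]
  have h1 : ∀ m ∈ s.image k, ∑ j ∈ s with k j = m, r j ≤ C * R * (1/2)^m := by
    intro m _
    have hp : (0:ℝ) < R * (1/2)^(m+1) := by positivity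
    obtain ⟨hf, hcard⟩ := hc _ hp
    have h2 : ∑ j ∈ s with k j = m, r j ≤ (s.filter (fun j => k j = m)).card • (R * (1/2)^m) := by
      refine Finset.sum_le_card_nsmul _ _ _ ?_
      intro j hj
      rw [Finset.mem_filter] at hj
      rw [← hj.2]
      exact (hk j (hs j hj.1)).2
    have h3 : (s.filter (fun j => k j = m)).card ≤
        {j | j ∈ S ∧ R * (1/2)^(m+1) < r j ∧ r j ≤ 2 * (R * (1/2)^(m+1))}.ncard := by
      rw [← Set.ncard_coe_finset]
      refine Set.ncard_le_ncard ?_ hf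
      intro j hj
      simp only [Finset.coe_filter, mem_ofPred_eq] at hj
      obtain ⟨hj1, rfl⟩ := hj
      have h4 := hk j (hs j hj1)
      refine ⟨hs j hj1, h4.1, h4.2.trans (le_of_eq ?_)⟩
      rw [pow_succ]; ring
    refine h2.trans ?_
    rw [nsmul_eq_mul, mul_assoc]
    gcongr
    exact (Nat.cast_le.2 h3).trans hcard
  refine (Finset.sum_le_sum h1).trans ?_
  rw [← Finset.mul_sum]
  have h5 : ∑ m ∈ s.image k, (1/2:ℝ)^m ≤ 2 := by
    exact (summable_geometric_two.sum_le_tsum _ (fun _ _ => by positivity)).trans_eq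
      tsum_geometric_two
  have : 0 ≤ C * R := by positivity
  nlinarith

lemma aux_polygon {d : ℕ} (Ω : Set (Euc d)) (lam : ℝ) (hl : 0 < lam) (v : ℕ → Euc d) (y : Euc d)
    (hv : Tendsto v atTop (𝓝 y)) (hsub : ∀ i, segment ℝ (v i) (v (i+1)) ⊆ Ω ∪ {y})
    (hcar : ∀ i, ∀ z ∈ segment ℝ (v i) (v (i+1)),
      ENNReal.ofReal lam * ∑' k, edist (v (i+k)) (v (i+k+1)) ≤
        ENNReal.ofReal (infDist z (frontier Ω))) :
    CarrotCurve Ω lam (v 0) y := by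
  have hfin : ∑' k, edist (v k) (v (k+1)) ≠ ⊤ := by
    intro h
    have h2 := hcar 0 (v 0) (left_mem_segment _ _ _)
    simp only [zero_add] at h2
    rw [h, ENNReal.mul_top (by simpa using hl)] at h2
    exact absurd h2 (by simp)
  have hsumm : Summable (fun k => ‖v (k+1) - v k‖) := by
    have := ENNReal.summable_toReal hfin
    refine this.congr fun k => ?_
    rw [← dist_edist, dist_comm, dist_eq_norm]
  set φ : ℕ → ℝ → ℝ := fun i t => max 0 (min 1 (2 - 2^(i+1) * (1 - t))) with hφ
  have hφ0 : ∀ i t, 0 ≤ φ i t := fun i t => le_max_left _ _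
  have hφ1 : ∀ i t, φ i t ≤ 1 := fun i t => max_le zero_le_one (min_le_left _ _)
  have hφc : ∀ i, Continuous (φ i) := fun i => by simp only [hφ]; fun_prop
  have hbd : ∀ i t, ‖φ i t • (v (i+1) - v i)‖ ≤ ‖v (i+1) - v i‖ := by
    intro i t
    rw [norm_smul, Real.norm_of_nonneg (hφ0 i t)]
    exact mul_le_of_le_one_left (norm_nonneg _) (hφ1 i t)
  set γ : ℝ → Euc d := fun t => v 0 + ∑' i, φ i t • (v (i+1) - v i) with hγ
  have hγc : Continuous γ := by
    have := continuous_tsum (f := fun i t => φ i t • (v (i+1) - v i))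
      (fun i => (hφc i).smul continuous_const) hsumm hbd
    exact continuous_const.add this
  have hγ1 : γ 1 = y := by
    have h2 : ∀ i, φ i 1 = 1 := fun i => by simp [hφ]
    simp only [hγ, h2, one_smul]
    have h3 : HasSum (fun i => v (i+1) - v i) (∑' i, (v (i+1) - v i)) := hsumm.of_norm.hasSum
    have h4 := h3.tendsto_sum_nat
    simp only [Finset.sum_range_sub] at h4
    have h5 := tendsto_nhds_unique h4 (hv.sub_const (v 0))
    rw [h5]; abel
  have hγ0 : γ 0 = v 0 := by
    have h2 : ∀ i, φ i 0 = 0 := fun i => by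
      have : (1:ℝ) ≤ 2^i := one_le_pow₀ (by norm_num)
      simp only [hφ]
      refine max_eq_left ((min_le_right _ _).trans ?_)
      rw [pow_succ]; linarith
    simp [hγ, h2]
  have hidx : ∀ t ∈ Ico (0:ℝ) 1, ∃ j : ℕ, (1/2:ℝ)^(j+1) < 1 - t ∧ 1 - t ≤ (1/2)^j := fun t ht =>
    exists_nat_pow_near_of_lt_one (by linarith [ht.2]) (by linarith [ht.1]) (by norm_num)
      (by norm_num)
  have hseg : ∀ t, ∀ j : ℕ, (1/2:ℝ)^(j+1) < 1 - t → 1 - t ≤ (1/2)^j →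
      γ t ∈ segment ℝ (v j) (v (j+1)) := by
    intro t j h2 h3
    have hlow : ∀ i, i < j → φ i t = 1 := by
      intro i hij
      have h4 : (1/2:ℝ)^j ≤ (1/2)^(i+1) := pow_le_pow_of_le_one (by norm_num) (by norm_num) hij
      have h5 : (2:ℝ)^(i+1) * (1 - t) ≤ 1 := by
        calc (2:ℝ)^(i+1) * (1 - t) ≤ 2^(i+1) * (1/2)^(i+1) := by
              gcongr; linarith
          _ = 1 := by rw [← mul_pow]; norm_num
      simp only [hφ]
      rw [min_eq_left (by linarith)]; simp
    have hhigh : ∀ i, j < i → φ i t = 0 := by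
      intro i hij
      have h4 : (1/2:ℝ)^i ≤ (1/2)^(j+1) := pow_le_pow_of_le_one (by norm_num) (by norm_num) hij
      have h5 : 2 ≤ (2:ℝ)^(i+1) * (1 - t) := by
        calc (2:ℝ) = 2^(i+1) * (1/2)^i := by rw [pow_succ, mul_right_comm, ← mul_pow]; norm_num
          _ ≤ (2:ℝ)^(i+1) * (1 - t) := by
              gcongr; linarith
      simp only [hφ]
      exact max_eq_left ((min_le_right _ _).trans (by linarith))
    have h6 : γ t = v j + φ j t • (v (j+1) - v j) := by
      simp only [hγ]
      rw [tsum_eq_sum (s := Finset.range (j+1)), Finset.sum_range_succ,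
        Finset.sum_congr rfl (g := fun i => v (i+1) - v i), Finset.sum_range_sub]
      · abel
      · intro i hi
        rw [hlow i (Finset.mem_range.1 hi), one_smul]
      · intro i hi
        rw [Finset.mem_range] at hi
        rw [hhigh i (by omega), zero_smul]
    rw [h6, segment_eq_image']
    exact ⟨φ j t, ⟨hφ0 _ _, hφ1 _ _⟩, rfl⟩
  have hy0 : μH[1] ({y} : Set (Euc d)) = 0 := by
    rw [← segment_same ℝ y, hausdorffMeasure_segment, edist_self]
  refine ⟨γ, hγc.continuousOn, hγ0, hγ1, ?_, ?_⟩
  · rintro _ ⟨t, ht, rfl⟩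
    rcases eq_or_lt_of_le ht.2 with h | h
    · right; rw [h]; exact hγ1
    · obtain ⟨j, hj1, hj2⟩ := hidx t ⟨ht.1, h⟩
      exact hsub j (hseg t j hj1 hj2)
  · intro t ht
    rcases eq_or_lt_of_le ht.2 with h | h
    · subst h
      rw [Icc_self, image_singleton, hγ1, hy0]; simp
    · obtain ⟨j, hj1, hj2⟩ := hidx t ⟨ht.1, h⟩
      refine le_trans ?_ (hcar j _ (hseg t j hj1 hj2))
      gcongr
      have hcov : γ '' Icc t 1 ⊆ {y} ∪ ⋃ k, segment ℝ (v (j+k)) (v (j+k+1)) := by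
        rintro _ ⟨s, hs, rfl⟩
        rcases eq_or_lt_of_le hs.2 with h' | h'
        · left; rw [h']; exact hγ1
        · right
          obtain ⟨m, hm1, hm2⟩ := hidx s ⟨ht.1.trans hs.1, h'⟩
          have hjm : j < m + 1 := by
            by_contra! hle
            have : (1/2:ℝ)^j ≤ (1/2)^(m+1) := pow_le_pow_of_le_one (by norm_num) (by norm_num) hle
            linarith [hs.1]
          obtain ⟨k, rfl⟩ := Nat.exists_eq_add_of_le (Nat.lt_succ_iff.1 hjm)
          exact mem_iUnion.2 ⟨k, hseg s _ hm1 hm2⟩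
      calc μH[1] (γ '' Icc t 1) ≤ μH[1] ({y} ∪ ⋃ k, segment ℝ (v (j+k)) (v (j+k+1))) :=
            measure_mono hcov
        _ ≤ μH[1] {y} + μH[1] (⋃ k, segment ℝ (v (j+k)) (v (j+k+1))) := measure_union_le _ _
        _ ≤ 0 + ∑' k, μH[1] (segment ℝ (v (j+k)) (v (j+k+1))) := by
            rw [hy0]; gcongr; exact measure_iUnion_le _
        _ = _ := by simp only [zero_add, hausdorffMeasure_segment]

lemma aux_part2core {d : ℕ} (C : ℝ) (hC : 1 ≤ C) (Ω : Set (Euc d)) (hF : (frontier Ω).Nonempty)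
    (S : Set ℕ) (c : ℕ → Euc d) (r : ℕ → ℝ) (v : ℕ → Euc d) (y : Euc d)
    (hv : Tendsto v atTop (𝓝 y))
    (hS : ∀ i ∈ S, v i ∈ ball (c i) (r i) ∧ v (i+1) ∈ ball (c i) (r i))
    (hnS : ∀ i, i ∉ S → v i = y ∧ v (i+1) = y)
    (hdown : ∀ i, i ∉ S → ∀ k, i + k ∉ S)
    (hb : ∀ j ∈ S, 0 < r j ∧ ball (c j) (r j) ⊆ Ω)
    (hd : ∀ j ∈ S, r j ≤ C * setD (ball (c j) (r j)) (frontier Ω))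
    (hm : ∀ i ∈ S, ∀ j ∈ S, i < j → r j ≤ C * r i)
    (hc : ∀ t : ℝ, 0 < t → {j | j ∈ S ∧ t < r j ∧ r j ≤ 2 * t}.Finite ∧
      ({j | j ∈ S ∧ t < r j ∧ r j ≤ 2 * t}.ncard : ℝ) ≤ C) :
    CarrotCurve Ω (1 / (4 * C^3)) (v 0) y := by
  have hC0 : 0 < C := by linarith
  have hsegB : ∀ i ∈ S, segment ℝ (v i) (v (i+1)) ⊆ ball (c i) (r i) := fun i hi =>
    (convex_ball _ _).segment_subset (hS i hi).1 (hS i hi).2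
  refine aux_polygon Ω _ (by positivity) v y hv ?_ ?_
  · intro i
    by_cases hi : i ∈ S
    · exact ((hsegB i hi).trans (hb i hi).2).trans subset_union_left
    · rw [(hnS i hi).1, (hnS i hi).2, segment_same]
      exact subset_union_right
  · intro i z hz
    have htail : ∀ m, ∑ k ∈ Finset.range m, dist (v (i+k)) (v (i+k+1)) =
        ∑ j ∈ Finset.Ico i (i+m), dist (v j) (v (j+1)) := by
      intro m
      rw [Finset.sum_Ico_eq_sum_range]; simp
    by_cases hi : i ∈ S
    · have hbound : ∑' k, edist (v (i+k)) (v (i+k+1)) ≤ ENNReal.ofReal (4 * C^2 * r i) := by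
        refine ENNReal.tsum_le_of_sum_range_le fun m => ?_
        simp only [edist_dist]
        rw [← ENNReal.ofReal_sum_of_nonneg (fun _ _ => dist_nonneg), htail]
        apply ENNReal.ofReal_le_ofReal
        classical
        have h1 : ∑ j ∈ Finset.Ico i (i+m), dist (v j) (v (j+1)) =
            ∑ j ∈ (Finset.Ico i (i+m)).filter (· ∈ S), dist (v j) (v (j+1)) := by
          symm
          apply Finset.sum_filter_of_ne
          intro j _ hne
          by_contra hj
          rw [(hnS j hj).1, (hnS j hj).2, dist_self] at hne
          exact hne rfl
        have h2 : ∑ j ∈ (Finset.Ico i (i+m)).filter (· ∈ S), dist (v j) (v (j+1)) ≤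
            ∑ j ∈ (Finset.Ico i (i+m)).filter (· ∈ S), 2 * r j := by
          refine Finset.sum_le_sum fun j hj => ?_
          obtain ⟨ha, hb'⟩ := hS j (Finset.mem_filter.1 hj).2
          rw [mem_ball] at ha hb'
          linarith [dist_triangle_right (v j) (v (j+1)) (c j)]
        have h3 := aux_sum C (C * r i) hC0.le (mul_pos hC0 (hb i hi).1) {j | j ∈ S ∧ i ≤ j} r
          (fun j hj => (hb j hj.1).1)
          (fun j hj => by
            rcases eq_or_lt_of_le hj.2 with h | h
            · rw [← h]; nlinarith [(hb i hi).1]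
            · exact hm i hi j hj.1 h)
          (fun t ht => by
            have hss : {j | j ∈ {j | j ∈ S ∧ i ≤ j} ∧ t < r j ∧ r j ≤ 2 * t} ⊆
                {j | j ∈ S ∧ t < r j ∧ r j ≤ 2 * t} := fun j hj => ⟨hj.1.1, hj.2⟩
            exact ⟨(hc t ht).1.subset hss,
              (Nat.cast_le.2 (Set.ncard_le_ncard hss (hc t ht).1)).trans (hc t ht).2⟩)
          ((Finset.Ico i (i+m)).filter (· ∈ S))
          (fun j hj => by
            rw [Finset.mem_filter, Finset.mem_Ico] at hj
            exact ⟨hj.2, hj.1.1⟩)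
        rw [h1]
        refine h2.trans ?_
        rw [← Finset.mul_sum]
        linarith
      refine (mul_le_mul_right hbound _).trans ?_
      rw [← ENNReal.ofReal_mul (by positivity)]
      apply ENNReal.ofReal_le_ofReal
      have h5 := hd i hi
      have h6 := aux_setD_le (hsegB i hi hz) hF
      have h7 : 1 / (4 * C^3) * (4 * C^2 * r i) = r i / C := by field_simp
      rw [h7, div_le_iff₀ hC0]
      nlinarith
    · have h0 : ∀ k, edist (v (i+k)) (v (i+k+1)) = 0 := by
        intro k
        rw [(hnS _ (hdown i hi k)).1, (hnS _ (hdown i hi k)).2, edist_self]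
      simp [h0]

lemma aux_part2 {d : ℕ} (C : ℝ) (hC : 1 ≤ C) (Ω : Set (Euc d)) (hΩ : IsOpen Ω)
    (hF : (frontier Ω).Nonempty) (x y : Euc d)
    (h : GoodChain Ω C x y) : CarrotCurve Ω (1 / (4 * C^3)) x y := by
  rcases h with ⟨hy, N, c, r, hx0, hyN, hb, hi, hs, hm, hc⟩ | ⟨hy, c, r, hx0, hlim, hb, hi, hs, hm, hc⟩
  · have hw : ∀ j, ∃ w, j < N → w ∈ ball (c j) (r j) ∩ ball (c (j+1)) (r (j+1)) := by
      intro j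
      by_cases hj : j < N
      · obtain ⟨w, hw⟩ := hi j hj
        exact ⟨w, fun _ => hw⟩
      · exact ⟨0, fun h => absurd h hj⟩
    choose w hw using hw
    set v : ℕ → Euc d := fun j => if j = 0 then x else if j ≤ N then w (j-1) else y with hvdef
    have hv0 : v 0 = x := by simp [hvdef]
    have hvs : ∀ j, j < N → v (j+1) = w j := by
      intro j hj
      have : j + 1 ≤ N := hj
      simp [hvdef, this]
    have hvy : ∀ j, N < j → v j = y := by
      intro j hj
      have h1 : j ≠ 0 := by omega
      have h2 : ¬ j ≤ N := by omega
      simp [hvdef, h1, h2]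
    rw [← hv0]
    refine aux_part2core C hC Ω hF {j | j ≤ N} c r v y ?_ ?_ ?_ ?_ ?_ ?_ ?_ ?_
    · refine tendsto_const_nhds.congr' ?_
      filter_upwards [eventually_gt_atTop N] with j hj
      exact (hvy j hj).symm
    · intro i hiN
      constructor
      · rcases i with _ | i
        · rw [hv0]; exact hx0
        · have hlt : i < N := hiN
          rw [hvs i hlt]; exact (hw i hlt).2
      · rcases eq_or_lt_of_le (show i ≤ N from hiN) with h | h
        · rw [hvy (i+1) (by omega), h]; exact hyN
        · rw [hvs i h]; exact (hw i h).1
    · intro i hiN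
      have : N < i := not_le.1 hiN
      exact ⟨hvy i this, hvy _ (by omega)⟩
    · intro i hiN k hk
      have h1 : N < i := not_le.1 hiN
      have h2 : i + k ≤ N := hk
      omega
    · exact fun j hj => ⟨(hb j hj).1, fun q hq => ((hb j hj).2 hq).1⟩
    · exact fun j hj => (hs j hj).2
    · exact fun i hi' j hj hij => hm i j hi' hj hij
    · exact hc
  · choose w hw using hi
    set v : ℕ → Euc d := fun j => if j = 0 then x else w (j-1) with hvdef
    have hv0 : v 0 = x := by simp [hvdef]
    have hvs : ∀ j, v (j+1) = w j := by
      intro j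
      simp [hvdef]
    have hvB : ∀ i, v i ∈ ball (c i) (r i) := by
      intro i
      rcases i with _ | i
      · rw [hv0]; exact hx0
      · rw [hvs i]; exact (hw i).2
    have hc' : ∀ t : ℝ, 0 < t → {j | j ∈ (univ : Set ℕ) ∧ t < r j ∧ r j ≤ 2 * t}.Finite ∧
      ({j | j ∈ (univ : Set ℕ) ∧ t < r j ∧ r j ≤ 2 * t}.ncard : ℝ) ≤ C := by
      simp only [mem_univ, true_and]
      exact hc
    rw [← hv0]
    refine aux_part2core C hC Ω hF univ c r v y ?_ ?_ ?_ ?_ ?_ ?_ ?_ ?_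
    · have hr0 : 0 < r 0 := (hb 0).1
      have hsum : Summable r := summable_of_sum_le (fun j => (hb j).1.le) (c := 2 * C * (C * r 0))
        (fun u => aux_sum C (C * r 0) (by linarith) (by positivity) univ r (fun j _ => (hb j).1)
          (fun j _ => by
            rcases Nat.eq_zero_or_pos j with h | h
            · rw [h]; nlinarith
            · exact hm 0 j h) hc' u (fun _ _ => trivial))
      have hr := hsum.tendsto_atTop_zero
      rw [tendsto_iff_dist_tendsto_zero]
      refine squeeze_zero (fun j => dist_nonneg)
        (g := fun j => infDist y (ball (c j) (r j)) + 2 * r j) (fun j => ?_) ?_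
      · rw [dist_comm]
        refine (dist_le_infDist_add_diam isBounded_ball (hvB j)).trans ?_
        gcongr
        exact diam_ball (hb j).1.le
      · simpa using hlim.add (hr.const_mul 2)
    · exact fun i _ => ⟨hvB i, by rw [hvs]; exact (hw i).1⟩
    · exact fun i h => absurd trivial h
    · exact fun i h => absurd trivial h
    · exact fun j _ => ⟨(hb j).1, fun q hq => ((hb j).2 hq).1⟩
    · exact fun j _ => (hs j).2
    · exact fun i _ j _ hij => hm i j hij
    · exact hc'

/-- For an open set `Ω ⊊ ℝ^{n+1}`, `x ∈ Ω` and `y ∈ cl Ω` with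
`δ_Ω(y) ≤ δ_Ω(x)`: (i) for every `λ ∈ (0,1)` there is `C ≥ 1` (depending only on `λ`
and `n`) such that the existence of a `λ`-carrot curve from `x` to `y` implies the
existence of a `C`-good Harnack chain from `x` to `y`; and (ii) for every `C ≥ 1` there
is `λ ∈ (0,1)` (depending only on `C` and `n`) such that the existence of a `C`-good
Harnack chain from `x` to `y` implies the existence of a `λ`-carrot curve from `x`
to `y`. -/
theorem carrotCurve_iff_goodChain (n : ℕ) :
    (∀ lam ∈ Set.Ioo (0:ℝ) 1, ∃ C : ℝ, 1 ≤ C ∧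
      ∀ (Ω : Set (Euc (n+1))), IsOpen Ω → Ω ≠ Set.univ →
        ∀ x ∈ Ω, ∀ y ∈ closure Ω,
          infDist y (frontier Ω) ≤ infDist x (frontier Ω) →
          CarrotCurve Ω lam x y → GoodChain Ω C x y) ∧
    (∀ C : ℝ, 1 ≤ C → ∃ lam ∈ Set.Ioo (0:ℝ) 1,
      ∀ (Ω : Set (Euc (n+1))), IsOpen Ω → Ω ≠ Set.univ →
        ∀ x ∈ Ω, ∀ y ∈ closure Ω,
          infDist y (frontier Ω) ≤ infDist x (frontier Ω) →
          GoodChain Ω C x y → CarrotCurve Ω lam x y) := by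
  constructor
  · intro lam hlam
    obtain ⟨C, hC, h⟩ := aux_part1 (n+1) lam hlam.1
    exact ⟨C, hC, fun Ω hΩ hu x hx y hy _ => h Ω hΩ (nonempty_frontier_iff.2 ⟨⟨x, hx⟩, hu⟩) x hx y hy⟩
  · intro C hC
    have hC3 : 1 ≤ C^3 := one_le_pow₀ hC
    refine ⟨1 / (4 * C^3), ⟨by positivity, ?_⟩, fun Ω hΩ hu x hx y hy _ hch =>
      aux_part2 C hC Ω hΩ (nonempty_frontier_iff.2 ⟨⟨x, hx⟩, hu⟩) x y hch⟩
    rw [div_lt_one (by positivity)]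
    linarith


end HarmMeas
end
end

section
/- Under the standing assumptions, μ(B_H) ≤ C A⁻¹ μ(R₀), where C depends only on n, the AD-regularity constant C₀ and c', and ω^p(B_L) ≤ A⁻¹ ω^p(R₀). -/
open Metric MeasureTheory Set Filter Topology

noncomputable section

namespace HarmMeas

/-- The harmonic measure of the open set `Ω` satisfies the weak-`A∞` condition: for every
`ε₀ ∈ (0,1)` there is `δ₀ ∈ (0,1)` such that for every ball `B` centered on `∂Ω`, every
pole `p ∈ Ω \ 4B` and every Borel `E ⊆ B ∩ ∂Ω`, `ℋⁿ(E) ≤ δ₀ ℋⁿ(B ∩ ∂Ω)` implies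
`ω^p(E) ≤ ε₀ ω^p(2B)`. -/
def WeakAInfty (n : ℕ) (Ω : Set (Euc (n+1))) : Prop :=
  ∀ ε₀ ∈ Set.Ioo (0:ℝ) 1, ∃ δ₀ ∈ Set.Ioo (0:ℝ) 1,
    ∀ x₀ ∈ frontier Ω, ∀ r₀ : ℝ, 0 < r₀ →
      ∀ p ∈ Ω \ closedBall x₀ (4 * r₀),
        ∀ A : Set (Euc (n+1)), MeasurableSet A → A ⊆ ball x₀ r₀ ∩ frontier Ω →
          μH[n] A ≤ ENNReal.ofReal δ₀ * μH[n] (ball x₀ r₀ ∩ frontier Ω) →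
          hMeasure Ω p A ≤ ε₀ * hMeasure Ω p (ball x₀ (2 * r₀))

/-- `ω^p` satisfies the weak-`A∞` condition in the ball `B(x₀,r₀)`, with gauge `D`
(i.e. `δ₀ = D ε₀` is a witness for each `ε₀ ∈ (0,1)`). -/
def WeakAInftyBallWith (n : ℕ) (Ω : Set (Euc (n+1))) (p x₀ : Euc (n+1)) (r₀ : ℝ)
    (D : ℝ → ℝ) : Prop :=
  ∀ ε₀ ∈ Set.Ioo (0:ℝ) 1, D ε₀ ∈ Set.Ioo (0:ℝ) 1 ∧
    ∀ A : Set (Euc (n+1)), MeasurableSet A → A ⊆ ball x₀ r₀ ∩ frontier Ω →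
      μH[n] A ≤ ENNReal.ofReal (D ε₀) * μH[n] (ball x₀ r₀ ∩ frontier Ω) →
      hMeasure Ω p A ≤ ε₀ * hMeasure Ω p (ball x₀ (2 * r₀))

/-- The weak local John condition for `Ω ⊆ ℝ^{n+1}`: there are `λ, θ ∈ (0,1)` and `Λ ≥ 2`
such that every `x ∈ Ω` sees (through `λ`-carrot curves) a Borel subset `F` of
`B(x, Λ δ_Ω(x)) ∩ ∂Ω` of surface measure at least `θ ℋⁿ(B(x, Λ δ_Ω(x)) ∩ ∂Ω)`. -/
def WeakLocalJohn (n : ℕ) (Ω : Set (Euc (n+1))) : Prop :=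
  ∃ lam ∈ Set.Ioo (0:ℝ) 1, ∃ θ ∈ Set.Ioo (0:ℝ) 1, ∃ Λ : ℝ, 2 ≤ Λ ∧
    ∀ x ∈ Ω, ∃ F : Set (Euc (n+1)), MeasurableSet F ∧
      F ⊆ ball x (Λ * infDist x (frontier Ω)) ∩ frontier Ω ∧
      ENNReal.ofReal θ * μH[n] (ball x (Λ * infDist x (frontier Ω)) ∩ frontier Ω) ≤
        μH[n] F ∧
      ∀ y ∈ F, CarrotCurve Ω lam x y

/-- The corkscrew condition for `Ω`. -/
def CorkscrewCond {d : ℕ} (Ω : Set (Euc d)) : Prop :=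
  ∃ c > (0:ℝ), ∀ x ∈ frontier Ω, ∀ ρ : ℝ, 0 < ρ → ENNReal.ofReal ρ ≤ EMetric.diam Ω →
    ∃ (y : Euc d) (r : ℝ), c * ρ ≤ r ∧ ball y r ⊆ ball x ρ ∩ Ω

/-- `F ⊆ ℝ^{n+1}` is uniformly `n`-rectifiable, with AD-regularity constant `C₀` and
big-pieces-of-Lipschitz-images constants `θ`, `M`. -/
def UnifRectifiable (n : ℕ) (C₀ θ M : ℝ) (F : Set (Euc (n+1))) : Prop :=
  ADRegular n C₀ F ∧ 0 < θ ∧ 0 < M ∧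
    ∀ x ∈ F, ∀ r : ℝ, 0 < r → ENNReal.ofReal r ≤ EMetric.diam F →
      ∃ g : Euc n → Euc (n+1), LipschitzOnWith (Real.toNNReal M) g (ball 0 r) ∧
        ENNReal.ofReal (θ * r ^ n) ≤ μH[n] (F ∩ ball x r ∩ g '' ball 0 r)

/-- The set `WA(p,Λ)` of boundary points `x ∈ B(p, 10 δ_Ω(p)) ∩ ∂Ω` at which the harmonic
measure `ω^p` is comparable (with constant `Λ`) to the normalized surface measure
`μ(B(x,r))/μ(B(x,δ_Ω(p)))` at every scale `0 < r ≤ δ_Ω(p)`. -/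
def WAset (n : ℕ) (Ω : Set (Euc (n+1))) (p : Euc (n+1)) (Λ : ℝ) : Set (Euc (n+1)) :=
  {x | x ∈ ball p (10 * infDist p (frontier Ω)) ∩ frontier Ω ∧
    ∀ r : ℝ, 0 < r → r ≤ infDist p (frontier Ω) →
      Λ⁻¹ * ((μH[n] (frontier Ω ∩ ball x r)).toReal /
          (μH[n] (frontier Ω ∩ ball x (infDist p (frontier Ω)))).toReal) ≤
        hMeasure Ω p (ball x r) ∧
      hMeasure Ω p (ball x r) ≤
        Λ * ((μH[n] (frontier Ω ∩ ball x r)).toReal /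
          (μH[n] (frontier Ω ∩ ball x (infDist p (frontier Ω)))).toReal)}


/-- A David–Semmes dyadic lattice associated to a measure `μ` supported on the set `F`,
with comparability constant `Cl`: for each generation `j ∈ ℤ` a partition of `F` into
Borel "cubes" of side length `2^{-j}`, nested across generations, with
`diam Q ≤ ℓ(Q)`, `μ(Q) ≈ ℓ(Q)ⁿ`, centers deep inside the cubes, and small boundaries. -/
structure DSLattice (n : ℕ) (F : Set (Euc (n+1))) (μ : Measure (Euc (n+1))) (Cl : ℝ) where
  cube : ℤ → Set (Set (Euc (n+1)))
  center : Set (Euc (n+1)) → Euc (n+1)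
  one_le_Cl : 1 ≤ Cl
  subset_F : ∀ j, ∀ Q ∈ cube j, Q ⊆ F
  nonempty : ∀ j, ∀ Q ∈ cube j, Q.Nonempty
  measurableSet : ∀ j, ∀ Q ∈ cube j, MeasurableSet Q
  cover : ∀ j : ℤ, ENNReal.ofReal ((2:ℝ) ^ (-j)) ≤ EMetric.diam F →
    ∀ x ∈ F, ∃ Q ∈ cube j, x ∈ Q
  disj : ∀ j, ∀ Q ∈ cube j, ∀ Q' ∈ cube j, Q ≠ Q' → Disjoint Q Q'
  nested : ∀ j k : ℤ, k ≤ j → ∀ Q ∈ cube j, ∀ Q' ∈ cube k, (Q ∩ Q').Nonempty → Q ⊆ Q'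
  diam_le : ∀ j, ∀ Q ∈ cube j, EMetric.diam Q ≤ ENNReal.ofReal ((2:ℝ) ^ (-j))
  measure_lb : ∀ j, ∀ Q ∈ cube j, ENNReal.ofReal (Cl⁻¹ * ((2:ℝ) ^ (-j)) ^ n) ≤ μ Q
  measure_ub : ∀ j, ∀ Q ∈ cube j, μ Q ≤ ENNReal.ofReal (Cl * ((2:ℝ) ^ (-j)) ^ n)
  center_mem : ∀ j, ∀ Q ∈ cube j, center Q ∈ Q
  center_far : ∀ j, ∀ Q ∈ cube j, ∀ y ∈ F \ Q, Cl⁻¹ * (2:ℝ) ^ (-j) ≤ dist (center Q) y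
  small_boundary : ∀ j, ∀ Q ∈ cube j, ∀ τ : ℝ, 0 < τ → τ < 1 →
    μ {x ∈ Q | infDist x (F \ Q) ≤ τ * (2:ℝ) ^ (-j)} +
        μ {x ∈ F \ Q | infDist x Q ≤ τ * (2:ℝ) ^ (-j)} ≤
      ENNReal.ofReal (Cl * τ ^ (1 / Cl) * ((2:ℝ) ^ (-j)) ^ n)

/-- A cube of the lattice, recorded together with its generation. -/
abbrev Cube (n : ℕ) : Type := ℤ × Set (Euc (n+1))

/-- Membership of a (generation, cube) pair in the lattice. -/
def DSLattice.mem {n : ℕ} {F : Set (Euc (n+1))} {μ : Measure (Euc (n+1))} {Cl : ℝ}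
    (L : DSLattice n F μ Cl) (q : Cube n) : Prop := q.2 ∈ L.cube q.1

/-- Side length `ℓ(Q) = 2^{-j}` of a cube of generation `j`. -/
def sideLen {n : ℕ} (q : Cube n) : ℝ := (2:ℝ) ^ (-q.1)

/-- The ball `t·B_Q = B(z_Q, t · 4 ℓ(Q))` associated to the cube `q`. -/
def cubeBall {n : ℕ} {F : Set (Euc (n+1))} {μ : Measure (Euc (n+1))} {Cl : ℝ}
    (L : DSLattice n F μ Cl) (t : ℝ) (q : Cube n) : Set (Euc (n+1)) :=
  ball (L.center q.2) (t * (4 * sideLen q))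

/-- The dilated cube `λQ = {x ∈ F : dist(x,Q) ≤ (λ-1) ℓ(Q)}`. -/
def dilCube {n : ℕ} (F : Set (Euc (n+1))) (lam : ℝ) (q : Cube n) : Set (Euc (n+1)) :=
  {x ∈ F | infDist x q.2 ≤ (lam - 1) * sideLen q}

/-- The bilateral beta coefficient `bβ_F(B(x,r))`: infimum over affine `n`-planes `L`
meeting `B(x,r)` of `r⁻¹ (sup_{y ∈ F ∩ B} dist(y,L) + sup_{y ∈ L ∩ B} dist(y,F))`. -/
def bbeta (n : ℕ) (F : Set (Euc (n+1))) (x : Euc (n+1)) (r : ℝ) : ℝ :=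
  sInf {t | ∃ L : AffineSubspace ℝ (Euc (n+1)),
    Module.finrank ℝ L.direction = n ∧ ((L : Set (Euc (n+1))) ∩ ball x r).Nonempty ∧
    t = r⁻¹ * ((⨆ y ∈ F ∩ ball x r, infDist y (L : Set (Euc (n+1)))) +
      ⨆ y ∈ (L : Set (Euc (n+1))) ∩ ball x r, infDist y F)}

/-- `q` belongs to `D_μ(R)`: a lattice cube contained in `R` of generation at least that
of `R`. -/
def InD {n : ℕ} {F : Set (Euc (n+1))} {μ : Measure (Euc (n+1))} {Cl : ℝ}
    (L : DSLattice n F μ Cl) (R q : Cube n) : Prop :=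
  L.mem q ∧ q.2 ⊆ R.2 ∧ R.1 ≤ q.1

section Corona
variable {n : ℕ} {F : Set (Euc (n+1))} {μ : Measure (Euc (n+1))} {Cl : ℝ}

/-- The harmonic-measure density `ω^p(λQ)/μ(λQ)` of the dilated cube `λQ`. -/
def dens (Ω : Set (Euc (n+1))) (μ : Measure (Euc (n+1))) (p : Euc (n+1)) (lam : ℝ)
    (q : Cube n) : ℝ :=
  hMeasure Ω p (dilCube (frontier Ω) lam q) / (μ (dilCube (frontier Ω) lam q)).toReal

/-- Being a high density cube (before maximality): `ω^p(2Q)/μ(2Q) ≥ A ω^p(2R₀)/μ(2R₀)`. -/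
def HDcond (Ω : Set (Euc (n+1))) (μ : Measure (Euc (n+1))) (L : DSLattice n F μ Cl)
    (p : Euc (n+1)) (R₀ : Cube n) (A : ℝ) (q : Cube n) : Prop :=
  L.mem q ∧ q.2 ⊆ R₀.2 ∧ A * dens Ω μ p 2 R₀ ≤ dens Ω μ p 2 q

/-- Being a low density cube (before maximality): `ω^p(Q)/μ(Q) ≤ A⁻¹ ω^p(R₀)/μ(R₀)`. -/
def LDcond (Ω : Set (Euc (n+1))) (μ : Measure (Euc (n+1))) (L : DSLattice n F μ Cl)
    (p : Euc (n+1)) (R₀ : Cube n) (A : ℝ) (q : Cube n) : Prop :=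
  L.mem q ∧ q.2 ⊆ R₀.2 ∧
    hMeasure Ω p q.2 / (μ q.2).toReal ≤ A⁻¹ * (hMeasure Ω p R₀.2 / (μ R₀.2).toReal)

/-- Maximal cubes of the lattice satisfying a given property. -/
def MaximalWith (L : DSLattice n F μ Cl) (P : Cube n → Prop) (q : Cube n) : Prop :=
  P q ∧ ∀ q' : Cube n, L.mem q' → q'.1 < q.1 → q.2 ⊆ q'.2 → ¬ P q'

/-- The family `HD` of maximal high density cubes contained in `R₀`. -/
def HDfam (Ω : Set (Euc (n+1))) (μ : Measure (Euc (n+1))) (L : DSLattice n F μ Cl)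
    (p : Euc (n+1)) (R₀ : Cube n) (A : ℝ) : Set (Cube n) :=
  {q | MaximalWith L (HDcond Ω μ L p R₀ A) q}

/-- The family `LD` of maximal low density cubes contained in `R₀`. -/
def LDfam (Ω : Set (Euc (n+1))) (μ : Measure (Euc (n+1))) (L : DSLattice n F μ Cl)
    (p : Euc (n+1)) (R₀ : Cube n) (A : ℝ) : Set (Cube n) :=
  {q | MaximalWith L (LDcond Ω μ L p R₀ A) q}

/-- `B_H`, the union of the high density cubes. -/
def BHset (Ω : Set (Euc (n+1))) (μ : Measure (Euc (n+1))) (L : DSLattice n F μ Cl)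
    (p : Euc (n+1)) (R₀ : Cube n) (A : ℝ) : Set (Euc (n+1)) :=
  ⋃ q ∈ HDfam Ω μ L p R₀ A, q.2

/-- `B_L`, the union of the low density cubes. -/
def BLset (Ω : Set (Euc (n+1))) (μ : Measure (Euc (n+1))) (L : DSLattice n F μ Cl)
    (p : Euc (n+1)) (R₀ : Cube n) (A : ℝ) : Set (Euc (n+1)) :=
  ⋃ q ∈ LDfam Ω μ L p R₀ A, q.2

/-- The family `G` of cubes of `D_μ(R₀)` not contained in any high or low density cube. -/
def Gfam (Ω : Set (Euc (n+1))) (μ : Measure (Euc (n+1))) (L : DSLattice n F μ Cl)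
    (p : Euc (n+1)) (R₀ : Cube n) (A : ℝ) : Set (Cube n) :=
  {q | InD L R₀ q ∧
    ∀ q' ∈ HDfam Ω μ L p R₀ A ∪ LDfam Ω μ L p R₀ A, ¬ q.2 ⊆ q'.2}

/-- `bβ(Q) := bβ_{∂Ω}(100 B_Q)`. -/
def bbetaQ (n : ℕ) {F : Set (Euc (n+1))} {μ : Measure (Euc (n+1))} {Cl : ℝ}
    (L : DSLattice n F μ Cl) (G : Set (Euc (n+1))) (q : Cube n) : ℝ :=
  bbeta n G (L.center q.2) (100 * (4 * sideLen q))

/-- `q'` is the dyadic parent of `q`. -/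
def IsParent (L : DSLattice n F μ Cl) (q' q : Cube n) : Prop :=
  L.mem q' ∧ q'.1 = q.1 - 1 ∧ q.2 ⊆ q'.2

/-- The stopping condition for the corona decomposition: `Q ∉ G` or `bβ(Q̂) > ε`. -/
def StopBad (Ω : Set (Euc (n+1))) (μ : Measure (Euc (n+1))) (L : DSLattice n F μ Cl)
    (p : Euc (n+1)) (R₀ : Cube n) (A ε : ℝ) (q : Cube n) : Prop :=
  q ∉ Gfam Ω μ L p R₀ A ∨ ∃ q', IsParent L q' q ∧ ε < bbetaQ n L (frontier Ω) q'

/-- `Stop(R)`: the maximal cubes of `D_μ(R) \ {R}` satisfying the stopping condition. -/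
def StopFam (Ω : Set (Euc (n+1))) (μ : Measure (Euc (n+1))) (L : DSLattice n F μ Cl)
    (p : Euc (n+1)) (R₀ : Cube n) (A ε : ℝ) (R : Cube n) : Set (Cube n) :=
  {q | L.mem q ∧ q.2 ⊆ R.2 ∧ R.1 < q.1 ∧ StopBad Ω μ L p R₀ A ε q ∧
    ∀ q' : Cube n, L.mem q' → q'.2 ⊆ R.2 → R.1 < q'.1 → q'.1 < q.1 → q.2 ⊆ q'.2 →
      ¬ StopBad Ω μ L p R₀ A ε q'}

/-- `Tree(R)`: the cubes of `D_μ(R)` not contained in any cube from `Stop(R)`. -/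
def TreeFam (Ω : Set (Euc (n+1))) (μ : Measure (Euc (n+1))) (L : DSLattice n F μ Cl)
    (p : Euc (n+1)) (R₀ : Cube n) (A ε : ℝ) (R : Cube n) : Set (Cube n) :=
  {q | InD L R q ∧ ∀ s ∈ StopFam Ω μ L p R₀ A ε R, ¬ q.2 ⊆ s.2}

/-- The generations `Top_k` of the corona decomposition. -/
def TopFam (Ω : Set (Euc (n+1))) (μ : Measure (Euc (n+1))) (L : DSLattice n F μ Cl)
    (p : Euc (n+1)) (R₀ : Cube n) (A ε : ℝ) : ℕ → Set (Cube n)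
  | 0 => {q | q ∈ Gfam Ω μ L p R₀ A ∧ q.1 = R₀.1 + 10}
  | (k+1) => {q | ∃ R ∈ TopFam Ω μ L p R₀ A ε k,
      q ∈ StopFam Ω μ L p R₀ A ε R ∧ q ∈ Gfam Ω μ L p R₀ A}

/-- `Top := ⋃_k Top_k`. -/
def TopAll (Ω : Set (Euc (n+1))) (μ : Measure (Euc (n+1))) (L : DSLattice n F μ Cl)
    (p : Euc (n+1)) (R₀ : Cube n) (A ε : ℝ) : Set (Cube n) :=
  {q | ∃ k : ℕ, q ∈ TopFam Ω μ L p R₀ A ε k}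

/-- `Tree^{(N)}(R)`: cubes of `Tree(R)` of side length larger than `2^{-N} ℓ(R₀)`. -/
def TreeN (Ω : Set (Euc (n+1))) (μ : Measure (Euc (n+1))) (L : DSLattice n F μ Cl)
    (p : Euc (n+1)) (R₀ : Cube n) (A ε : ℝ) (N : ℕ) (R : Cube n) : Set (Cube n) :=
  {q | q ∈ TreeFam Ω μ L p R₀ A ε R ∧ q.1 < R₀.1 + N}

/-- `Top_b^{(N)}`: the cubes `R` of `Top` of side length larger than `2^{-N} ℓ(R₀)` with
`Tree(R) ≠ {R}`. -/
def TopbN (Ω : Set (Euc (n+1))) (μ : Measure (Euc (n+1))) (L : DSLattice n F μ Cl)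
    (p : Euc (n+1)) (R₀ : Cube n) (A ε : ℝ) (N : ℕ) : Set (Cube n) :=
  {R | R ∈ TopAll Ω μ L p R₀ A ε ∧ R.1 < R₀.1 + N ∧
    ∃ q ∈ TreeFam Ω μ L p R₀ A ε R, q ≠ R}

end Corona


lemma eta_lip {d : ℕ} : LipschitzWith 2 (fun y : Euc d => 1 - (min ‖y‖ 1) ^ 2) := by
  apply LipschitzWith.of_dist_le_mul
  intro y z
  rw [Real.dist_eq]
  have h1 : |min ‖y‖ 1 - min ‖z‖ 1| ≤ dist y z := by
    calc |min ‖y‖ 1 - min ‖z‖ 1| ≤ |‖y‖ - ‖z‖| := (by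
        have := abs_min_sub_min_le_max ‖y‖ 1 ‖z‖ 1
        simpa using this)
    _ ≤ ‖y - z‖ := abs_norm_sub_norm_le _ _
    _ = dist y z := (dist_eq_norm _ _).symm
  have e : (1 - (min ‖y‖ 1) ^ 2 - (1 - (min ‖z‖ 1) ^ 2)) =
      -((min ‖y‖ 1 - min ‖z‖ 1) * (min ‖y‖ 1 + min ‖z‖ 1)) := by ring
  rw [e, abs_neg, abs_mul]
  have h2 : |min ‖y‖ 1 + min ‖z‖ 1| ≤ 2 := by
    rw [abs_of_nonneg (by positivity)]
    linarith [min_le_right ‖y‖ 1, min_le_right ‖z‖ 1]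
  calc _ ≤ dist y z * 2 := by gcongr
  _ = _ := by simp [mul_comm]

lemma eta_supp {d : ℕ} : HasCompactSupport (fun y : Euc d => 1 - (min ‖y‖ 1) ^ 2) := by
  apply HasCompactSupport.intro (isCompact_closedBall (0 : Euc d) 1)
  intro x hx
  simp only [mem_closedBall, dist_zero_right, not_le] at hx
  simp [min_eq_right hx.le]

lemma parts_ball {d : ℕ} (hd : 0 < d) (G : Euc d → ℝ) (hG : ContDiff ℝ 1 G) (K : Euc d → ℝ)
    (i : Fin d)
    (hK : ∀ y ∈ ball (0 : Euc d) 1, HasLineDerivAt ℝ G (K y) y (EuclideanSpace.single i 1)) :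
    ∫ y in ball (0 : Euc d) 1, 2 * (y i * G y) =
      ∫ y in ball (0 : Euc d) 1, (1 - ‖y‖ ^ 2) * K y := by
  have : Nonempty (Fin d) := ⟨⟨0, hd⟩⟩
  set e : Euc d := EuclideanSpace.single i 1 with he
  let χ : ContDiffBump (0 : Euc d) := ⟨2, 3, by norm_num, by norm_num⟩
  have hχ1 : ∀ y ∈ ball (0 : Euc d) 2, χ y = 1 := fun y hy =>
    χ.one_of_mem_closedBall (ball_subset_closedBall hy)
  set f : Euc d → ℝ := fun y => χ y * G y with hf
  have hfC : ContDiff ℝ 1 f := χ.contDiff.mul hG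
  have hfs : HasCompactSupport f := χ.hasCompactSupport.mul_right
  obtain ⟨C, hC⟩ := hfC.lipschitzWith_of_hasCompactSupport hfs (by simp)
  have key := LipschitzWith.integral_lineDeriv_mul_eq (μ := volume) hC (eta_lip (d := d))
    eta_supp e
  have hfG : ∀ y ∈ ball (0 : Euc d) 2, f =ᶠ[𝓝 y] G := by
    intro y hy
    filter_upwards [isOpen_ball.mem_nhds hy] with z hz
    simp [hf, hχ1 z hz]
  have hsub : ball (0 : Euc d) 1 ⊆ ball (0 : Euc d) 2 := ball_subset_ball (by norm_num)
  have lhs : ∫ y, lineDeriv ℝ f y e * (1 - (min ‖y‖ 1) ^ 2) =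
      ∫ y in ball (0 : Euc d) 1, (1 - ‖y‖ ^ 2) * K y := by
    rw [← integral_indicator measurableSet_ball]
    congr 1; ext y
    by_cases hy : y ∈ ball (0 : Euc d) 1
    · rw [indicator_of_mem hy, Filter.EventuallyEq.lineDeriv_eq (hfG y (hsub hy)),
        (hK y hy).lineDeriv]
      have : ‖y‖ < 1 := by simpa using hy
      rw [min_eq_left this.le]; ring
    · rw [indicator_of_notMem hy]
      have : 1 ≤ ‖y‖ := by simpa using hy
      rw [min_eq_right this]; ring
  have rhs : ∫ y, lineDeriv ℝ (fun y : Euc d => 1 - (min ‖y‖ 1) ^ 2) y (-e) * f y =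
      ∫ y in ball (0 : Euc d) 1, 2 * (y i * G y) := by
    rw [← integral_indicator measurableSet_ball]
    apply integral_congr_ae
    have hs : volume (sphere (0 : Euc d) 1) = 0 := Measure.addHaar_sphere _ _ _
    have : ∀ᵐ y : Euc d, y ∉ sphere (0 : Euc d) 1 := by
      rw [ae_iff]; simpa only [not_not, ofPred_mem_eq] using hs
    filter_upwards [this] with y hy
    by_cases hy1 : y ∈ ball (0 : Euc d) 1
    · rw [indicator_of_mem hy1]
      have h1 : (fun y : Euc d => 1 - (min ‖y‖ 1) ^ 2) =ᶠ[𝓝 y] fun y => 1 - ‖y‖ ^ 2 := by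
        filter_upwards [isOpen_ball.mem_nhds hy1] with z hz
        have : ‖z‖ < 1 := by simpa using hz
        rw [min_eq_left this.le]
      have h2 : HasLineDerivAt ℝ (fun y : Euc d => 1 - ‖y‖ ^ 2) (2 * y i) y (-e) := by
        have := ((hasStrictFDerivAt_norm_sq y).hasFDerivAt.const_sub 1).hasLineDerivAt (-e)
        convert! this using 1
        simp only [he, neg_apply, smul_apply, map_neg, innerSL_apply_apply, FunLike.coe_neg, FunLike.coe_smul, Pi.neg_apply, Pi.smul_apply]
        rw [EuclideanSpace.inner_single_right]
        simp
      rw [h1.lineDeriv_eq, h2.lineDeriv]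
      simp [hf, hχ1 y (hsub hy1)]; ring
    · rw [indicator_of_notMem hy1]
      have hy2 : 1 < ‖y‖ := by
        simp at hy hy1
        exact lt_of_le_of_ne hy1 (Ne.symm hy)
      have h1 : (fun y : Euc d => 1 - (min ‖y‖ 1) ^ 2) =ᶠ[𝓝 y] fun y => 0 := by
        have : {z : Euc d | 1 < ‖z‖} ∈ 𝓝 y := (isOpen_lt continuous_const continuous_norm).mem_nhds hy2
        filter_upwards [this] with z hz
        rw [min_eq_right (le_of_lt hz)]; norm_num
      rw [h1.lineDeriv_eq]
      simp [lineDeriv]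
  rw [← rhs, ← lhs, key]

theorem mvp_C2 {d : ℕ} (hd : 0 < d) (u : Euc d → ℝ) (g k : Fin d → Euc d → ℝ)
    (hg : ∀ i, ContDiff ℝ 1 (g i))
    (hu : ∀ y, HasFDerivAt u (∑ i, g i y • (EuclideanSpace.proj i : Euc d →L[ℝ] ℝ)) y)
    (hk : ∀ i y, HasLineDerivAt ℝ (g i) (k i y) y (EuclideanSpace.single i 1))
    (hkc : ∀ i, Continuous (k i))
    (x : Euc d) (r : ℝ) (hr : 0 < r) (hpos : ∀ y, 0 ≤ ∑ i, k i y) :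
    u x ≤ ⨍ y in ball x r, u y := by
  have : Nonempty (Fin d) := ⟨⟨0, hd⟩⟩
  have huc : Continuous u := continuous_iff_continuousAt.2 fun y => (hu y).continuousAt
  have hgc : ∀ i, Continuous (g i) := fun i => (hg i).continuous
  set B := ball (0 : Euc d) 1 with hB
  have hintg : ∀ f : Euc d → ℝ, Continuous f → IntegrableOn f B := fun f hf =>
    (hf.continuousOn.integrableOn_compact (isCompact_closedBall 0 1)).mono_set
      ball_subset_closedBall
  set J : ℝ → ℝ := fun t => ∫ y in B, ∑ i, g i (x + t • y) * y i with hJ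
  have hJpos : ∀ t, 0 < t → 0 ≤ J t := by
    intro t ht
    have h1 : J t = ∑ i, ∫ y in B, g i (x + t • y) * y i := by
      rw [hJ]; simp only
      rw [integral_finsetSum]
      intro i _
      exact hintg _ (by have := hgc i; fun_prop)
    have h2 : ∀ i, ∫ y in B, 2 * (y i * g i (x + t • y)) =
        ∫ y in B, (1 - ‖y‖ ^ 2) * (t * k i (x + t • y)) := by
      intro i
      apply parts_ball hd
      · have := hg i; fun_prop
      · intro y _
        have h3 := hk i (x + t • y)
        have h4 : HasDerivAt (fun s : ℝ => t * s) t 0 := by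
          simpa using (hasDerivAt_id (0:ℝ)).const_mul t
        unfold HasLineDerivAt at h3 ⊢
        have h5 : HasDerivAt (fun s : ℝ => g i (x + t • y + s • EuclideanSpace.single i 1))
          (k i (x + t • y)) (t * 0) := by simpa using h3
        have h6 := h5.comp (0:ℝ) h4
        convert! h6 using 1
        · ext s; simp [smul_add, mul_smul, add_assoc]
        · ring
    have h3 : 2 * J t = ∫ y in B, (1 - ‖y‖ ^ 2) * (t * ∑ i, k i (x + t • y)) := by
      rw [h1, Finset.mul_sum]
      have : ∀ i, 2 * ∫ y in B, g i (x + t • y) * y i =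
          ∫ y in B, (1 - ‖y‖ ^ 2) * (t * k i (x + t • y)) := by
        intro i
        rw [← h2 i, ← integral_const_mul]
        congr 1; ext y; ring
      simp_rw [this]
      rw [← integral_finsetSum]
      · congr 1; ext y
        rw [Finset.mul_sum, Finset.mul_sum]
      · intro i _
        exact hintg _ (by have := hkc i; fun_prop)
    have h4 : 0 ≤ ∫ y in B, (1 - ‖y‖ ^ 2) * (t * ∑ i, k i (x + t • y)) := by
      apply setIntegral_nonneg measurableSet_ball
      intro y hy
      have : ‖y‖ < 1 := by simpa [hB] using hy
      have h5 := hpos (x + t • y)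
      have : 0 ≤ 1 - ‖y‖ ^ 2 := by nlinarith [norm_nonneg y]
      positivity
    linarith
  set m : ℝ → ℝ := fun t => ∫ y in B, u (x + t • y) with hm
  have hderiv : ∀ t, HasDerivAt m (J t) t := by
    intro t
    have hcont : Continuous fun q : ℝ × Euc d => ∑ i, g i (x + q.1 • q.2) * q.2 i := by
      apply continuous_finsetSum
      intro i _
      have := hgc i
      fun_prop
    obtain ⟨C, hC⟩ := ((isCompact_closedBall t 1).prod
      (isCompact_closedBall (0 : Euc d) 1)).exists_bound_of_continuousOn hcont.continuousOn
    refine (hasDerivAt_integral_of_dominated_loc_of_deriv_le (s := ball t 1)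
      (μ := volume.restrict B) (bound := fun _ => C)
      (F := fun t y => u (x + t • y)) (F' := fun t y => ∑ i, g i (x + t • y) * y i)
      (ball_mem_nhds t one_pos) ?_ ?_ ?_ ?_ ?_ ?_).2
    · exact Eventually.of_forall fun s => (by fun_prop : Continuous _).aestronglyMeasurable
    · exact hintg _ (by fun_prop)
    · exact (hcont.comp (by fun_prop : Continuous fun y : Euc d => (t, y))).aestronglyMeasurable
    · refine (ae_restrict_iff' measurableSet_ball).2 (Eventually.of_forall fun y hy s hs => ?_)
      exact hC (s, y) ⟨ball_subset_closedBall hs, ball_subset_closedBall hy⟩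
    · exact hintg _ continuous_const
    · refine Eventually.of_forall fun y s _ => ?_
      have h1 : HasDerivAt (fun s : ℝ => x + s • y) y s := by
        simpa using ((hasDerivAt_id s).smul_const y).const_add x
      have := (hu (x + s • y)).comp_hasDerivAt s h1
      convert! this using 1
      simp
  have hmono : MonotoneOn m (Icc 0 r) := by
    apply monotoneOn_of_deriv_nonneg (convex_Icc 0 r)
    · exact fun t _ => (hderiv t).continuousAt.continuousWithinAt
    · exact fun t _ => (hderiv t).differentiableAt.differentiableWithinAt
    · intro t ht
      rw [interior_Icc] at ht
      rw [(hderiv t).deriv]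
      exact hJpos t ht.1
  have hle := hmono (left_mem_Icc.2 hr.le) (right_mem_Icc.2 hr.le) hr.le
  have h0 : m 0 = volume.real B * u x := by simp [hm]
  have hBpos : 0 < volume.real B := by
    rw [measureReal_def]
    exact ENNReal.toReal_pos (measure_ball_pos _ _ one_pos).ne' measure_ball_lt_top.ne
  have hr1 : m r = (r ^ d)⁻¹ * ∫ y in ball x r, u y := by
    have : ∫ y in ball (0 : Euc d) r, u (x + y) = ∫ y in ball x r, u y := by
      rw [← integral_indicator measurableSet_ball, ← integral_indicator measurableSet_ball,
        ← integral_add_left_eq_self ((ball x r).indicator u) x]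
      congr 1; ext y
      simp [indicator]
    rw [← this]
    have h7 := Measure.setIntegral_comp_smul_of_pos volume (fun y : Euc d => u (x + y)) B hr
    rw [hm]; simp only
    rw [h7]
    rw [smul_unitBall hr.ne', Real.norm_of_nonneg hr.le]
    simp
  have hvol : volume.real (ball x r) = r ^ d * volume.real B := by
    rw [measureReal_def, Measure.addHaar_ball _ _ hr.le, ENNReal.toReal_mul, measureReal_def, hB]
    simp [hr.le]
  rw [setAverage_eq, hvol, smul_eq_mul, mul_inv]
  rw [h0, hr1] at hle
  rw [mul_comm ((r ^ d)⁻¹), mul_assoc]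
  rwa [← div_eq_inv_mul, le_div_iff₀ hBpos, mul_comm]

lemma vball_pos {d : ℕ} (x : Euc d) {r : ℝ} (hr : 0 < r) : 0 < volume.real (ball x r) := by
  rw [measureReal_def]
  exact ENNReal.toReal_pos (measure_ball_pos _ _ hr).ne' measure_ball_lt_top.ne

lemma vball_eq {d : ℕ} (x : Euc d) {r : ℝ} (hr : 0 < r) :
    volume.real (ball x r) = r ^ d * volume.real (ball (0 : Euc d) 1) := by
  rw [measureReal_def, Measure.addHaar_ball_of_pos _ _ hr, ENNReal.toReal_mul, measureReal_def]
  simp [hr.le]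

lemma int_ball {d : ℕ} {v : Euc d → ℝ} {x : Euc d} {r : ℝ}
    (hv : ContinuousOn v (closedBall x r)) : IntegrableOn v (ball x r) :=
  (hv.integrableOn_compact (isCompact_closedBall x r)).mono_set ball_subset_closedBall

lemma avg_eq {d : ℕ} (v : Euc d → ℝ) (x : Euc d) (r : ℝ) :
    ⨍ y in ball x r, v y = (volume.real (ball x r))⁻¹ * ∫ y in ball x r, v y := by
  rw [setAverage_eq, smul_eq_mul]

lemma le_avg_iff {d : ℕ} (v : Euc d → ℝ) (x : Euc d) {r : ℝ} (hr : 0 < r) (a : ℝ) :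
    a ≤ ⨍ y in ball x r, v y ↔ a * volume.real (ball x r) ≤ ∫ y in ball x r, v y := by
  rw [avg_eq, ← div_eq_inv_mul, le_div_iff₀ (vball_pos x hr)]

lemma eq_avg_iff {d : ℕ} (v : Euc d → ℝ) (x : Euc d) {r : ℝ} (hr : 0 < r) (a : ℝ) :
    a = ⨍ y in ball x r, v y ↔ a * volume.real (ball x r) = ∫ y in ball x r, v y := by
  rw [avg_eq, ← div_eq_inv_mul, eq_div_iff (vball_pos x hr).ne']

lemma avg_mono {d : ℕ} {v w : Euc d → ℝ} {x : Euc d} {r : ℝ}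
    (hv : ContinuousOn v (closedBall x r)) (hw : ContinuousOn w (closedBall x r))
    (h : ∀ y ∈ ball x r, v y ≤ w y) : ⨍ y in ball x r, v y ≤ ⨍ y in ball x r, w y := by
  rw [avg_eq, avg_eq]
  exact mul_le_mul_of_nonneg_left
    (setIntegral_mono_on (int_ball hv) (int_ball hw) measurableSet_ball h)
    (inv_nonneg.2 measureReal_nonneg)

lemma avg_add {d : ℕ} {v w : Euc d → ℝ} {x : Euc d} {r : ℝ}
    (hv : ContinuousOn v (closedBall x r)) (hw : ContinuousOn w (closedBall x r)) :
    ⨍ y in ball x r, (v y + w y) = (⨍ y in ball x r, v y) + ⨍ y in ball x r, w y := by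
  rw [avg_eq, avg_eq, avg_eq, integral_add (int_ball hv) (int_ball hw), mul_add]

lemma avg_neg {d : ℕ} (v : Euc d → ℝ) (x : Euc d) (r : ℝ) :
    ⨍ y in ball x r, (- v y) = - ⨍ y in ball x r, v y := by
  rw [avg_eq, avg_eq, integral_neg, mul_neg]

lemma avg_cmul {d : ℕ} (c : ℝ) (v : Euc d → ℝ) (x : Euc d) (r : ℝ) :
    ⨍ y in ball x r, (c * v y) = c * ⨍ y in ball x r, v y := by
  rw [avg_eq, avg_eq, integral_const_mul]; ring

lemma avg_const {d : ℕ} (c : ℝ) (x : Euc d) {r : ℝ} (hr : 0 < r) :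
    ⨍ _ in ball x r, c = c := by
  symm
  rw [eq_avg_iff _ x hr]
  simp [mul_comm]

lemma eq_of_avg_max {d : ℕ} {v : Euc d → ℝ} {x : Euc d} {r m : ℝ} (hr : 0 < r)
    (hv : ContinuousOn v (closedBall x r)) (hle : ∀ y ∈ ball x r, v y ≤ m)
    (hm : m ≤ ⨍ y in ball x r, v y) : ∀ y ∈ ball x r, v y = m := by
  rw [le_avg_iff _ _ hr] at hm
  have hc : ContinuousOn (fun y => m - v y) (closedBall x r) := continuousOn_const.sub hv
  have h0 : ∫ y in ball x r, (m - v y) = 0 := by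
    apply le_antisymm
    · rw [integral_sub (int_ball continuousOn_const) (int_ball hv)]
      simp only [setIntegral_const, smul_eq_mul]
      linarith
    · exact setIntegral_nonneg measurableSet_ball fun y hy => by linarith [hle y hy]
  rw [setIntegral_eq_zero_iff_of_nonneg_ae
    ((ae_restrict_iff' measurableSet_ball).2 (Eventually.of_forall fun y hy => by
      simpa using hle y hy)) (int_ball hc)] at h0
  have := Measure.eqOn_open_of_ae_eq (g := fun _ => (0:ℝ)) h0 isOpen_ball
    (hc.mono ball_subset_closedBall) continuousOn_const
  intro y hy
  have := this hy
  simp only at this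
  linarith

/-- Local sub-mean value property. -/
def LMV {d : ℕ} (v : Euc d → ℝ) (x : Euc d) : Prop :=
  ∃ δ > 0, ∀ ρ, 0 < ρ → ρ < δ → v x ≤ ⨍ y in ball x ρ, v y

theorem max_princ {d : ℕ} (hd : 0 < d) {v : Euc d → ℝ} {a : Euc d} {R m : ℝ} 
    (hc : ContinuousOn v (closedBall a R)) (hl : ∀ x ∈ ball a R, LMV v x)
    (hs : ∀ x ∈ sphere a R, v x ≤ m) : ∀ x ∈ closedBall a R, v x ≤ m := by
  have : Nonempty (Fin d) := ⟨⟨0, hd⟩⟩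
  intro x hx
  obtain ⟨x0, hx0, hmax⟩ := (isCompact_closedBall a R).exists_isMaxOn ⟨x, hx⟩ hc
  rw [isMaxOn_iff] at hmax
  refine (hmax x hx).trans ?_
  by_contra! hlt
  set M := v x0 with hM
  set K := closedBall a R ∩ v ⁻¹' {M} with hK
  have hKc : IsCompact K :=
    (isCompact_closedBall a R).of_isClosed_subset
      (hc.preimage_isClosed_of_isClosed isClosed_closedBall isClosed_singleton) inter_subset_left
  obtain ⟨z, hz, hzmax⟩ := hKc.exists_isMaxOn ⟨x0, hx0, rfl⟩
    (f := fun y => dist y a) (by fun_prop)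
  rw [isMaxOn_iff] at hzmax
  have hzM : v z = M := hz.2
  have hzb : z ∈ ball a R := by
    rcases (mem_closedBall.1 hz.1).lt_or_eq with h | h
    · exact h
    · exact absurd (hs z h) (by rw [hzM]; linarith)
  obtain ⟨δ, hδ, hmv⟩ := hl z hzb
  have hzd : dist z a < R := hzb
  set ρ := min (δ / 2) ((R - dist z a) / 2) with hρ
  have hρ0 : 0 < ρ := by
    apply lt_min <;> linarith
  have hsub : closedBall z ρ ⊆ closedBall a R := by
    apply closedBall_subset_closedBall'
    have := min_le_right (δ / 2) ((R - dist z a) / 2)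
    linarith
  have heq := eq_of_avg_max (m := M) hρ0 (hc.mono hsub)
    (fun y hy => hmax y (hsub (ball_subset_closedBall hy)))
    (by
      rw [← hzM]
      exact hmv ρ hρ0 (by have := min_le_left (δ / 2) ((R - dist z a) / 2); linarith))
  -- find a farther point
  obtain ⟨e, he, hed⟩ : ∃ e : Euc d, ‖e‖ = 1 ∧ ∀ t : ℝ, 0 < t → dist z a < dist (z + t • e) a := by
    by_cases hza : z = a
    · obtain ⟨e, he⟩ := exists_norm_eq (Euc d) (zero_le_one (α := ℝ))
      refine ⟨e, he, fun t ht => ?_⟩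
      simp [hza, dist_eq_norm, norm_smul, he, ht.ne']
    · have hn : 0 < ‖z - a‖ := norm_pos_iff.2 (sub_ne_zero.2 hza)
      refine ⟨‖z - a‖⁻¹ • (z - a), ?_, fun t ht => ?_⟩
      · simp [norm_smul, hn.ne']
      · rw [dist_eq_norm, dist_eq_norm]
        have : z + t • ‖z - a‖⁻¹ • (z - a) - a = (1 + t * ‖z - a‖⁻¹) • (z - a) := by
          rw [add_smul, one_smul, mul_smul]; abel
        rw [this, norm_smul, Real.norm_of_nonneg (by positivity)]
        have : 0 < t * ‖z - a‖⁻¹ := by positivity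
        nlinarith
  have hw : z + (ρ / 2) • e ∈ ball z ρ := by
    simp [norm_smul, he, abs_of_pos hρ0]; linarith
  have h1 := hzmax _ ⟨hsub (ball_subset_closedBall hw), heq _ hw⟩
  have h2 := hed (ρ / 2) (by linarith)
  linarith

/-- evaluation of a polynomial on Euclidean space -/
def pev {d : ℕ} (q : MvPolynomial (Fin d) ℝ) (x : Euc d) : ℝ := MvPolynomial.eval (fun i => x i) q

lemma pev_contDiff {d : ℕ} (q : MvPolynomial (Fin d) ℝ) : ContDiff ℝ 1 (pev q) := by
  induction q using MvPolynomial.induction_on with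
  | C a =>
    have : pev (MvPolynomial.C a : MvPolynomial (Fin d) ℝ) = fun _ => a := by ext x; simp [pev]
    rw [this]; fun_prop
  | add p q hp hq => 
    have : pev (p + q) = fun x => pev p x + pev q x := by ext x; simp [pev]
    rw [this]; exact hp.add hq
  | mul_X p i hp =>
    have : pev (p * MvPolynomial.X i) = fun x => pev p x * x i := by ext x; simp [pev]
    rw [this]; exact hp.mul (by fun_prop)

lemma pev_cont {d : ℕ} (q : MvPolynomial (Fin d) ℝ) : Continuous (pev q) := (pev_contDiff q).continuous

lemma pev_hasFDeriv {d : ℕ} (q : MvPolynomial (Fin d) ℝ) (y : Euc d) :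
    HasFDerivAt (pev q) (∑ i, pev (MvPolynomial.pderiv i q) y • (EuclideanSpace.proj i : Euc d →L[ℝ] ℝ)) y := by
  induction q using MvPolynomial.induction_on with
  | C a => 
    have : pev (MvPolynomial.C a : MvPolynomial (Fin d) ℝ) = fun _ => a := by ext x; simp [pev]
    rw [this]
    convert hasFDerivAt_const a y using 1
    ext v; simp [pev]
  | add p q hp hq => 
    have : pev (p + q) = fun x => pev p x + pev q x := by ext x; simp [pev]
    rw [this]
    convert! hp.add hq using 1
    rw [← Finset.sum_add_distrib]
    refine Finset.sum_congr rfl fun i _ => ?_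
    rw [← add_smul]; simp [pev]
  | mul_X p i hp =>
    have : pev (p * MvPolynomial.X i) = fun x => pev p x * x i := by ext x; simp [pev]
    rw [this]
    have h2 : HasFDerivAt (fun x : Euc d => x i) (EuclideanSpace.proj i : Euc d →L[ℝ] ℝ) y :=
      (EuclideanSpace.proj i : Euc d →L[ℝ] ℝ).hasFDerivAt
    convert! hp.mul h2 using 1
    ext v
    have h3 : ∀ j, pev (MvPolynomial.pderiv j (p * MvPolynomial.X i)) y
      = pev p y * (if j = i then 1 else 0) + y i * pev (MvPolynomial.pderiv j p) y := by
      intro j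
      simp only [pev, Derivation.leibniz, MvPolynomial.pderiv_X, smul_eq_mul, map_add, map_mul, MvPolynomial.eval_X]
      by_cases hj : j = i
      · subst hj; simp
      · simp [hj, Pi.single_apply]
    simp only [h3, add_smul, Finset.sum_add_distrib, mul_smul]
    simp [ContinuousLinearMap.sum_apply, Finset.mul_sum, Finset.smul_sum]

lemma pev_lineDeriv {d : ℕ} (q : MvPolynomial (Fin d) ℝ) (i : Fin d) (y : Euc d) :
    HasLineDerivAt ℝ (pev q) (pev (MvPolynomial.pderiv i q) y) y (EuclideanSpace.single i 1) := by
  have := (pev_hasFDeriv q y).hasLineDerivAt (EuclideanSpace.single i 1)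
  convert! this using 1
  simp [ContinuousLinearMap.sum_apply, Pi.single_apply]

/-- the polynomial Laplacian -/
def plap {d : ℕ} : MvPolynomial (Fin d) ℝ →ₗ[ℝ] MvPolynomial (Fin d) ℝ :=
  ∑ i, (MvPolynomial.pderiv i).toLinearMap ∘ₗ (MvPolynomial.pderiv i).toLinearMap

lemma plap_apply {d : ℕ} (q : MvPolynomial (Fin d) ℝ) :
    plap q = ∑ i, MvPolynomial.pderiv i (MvPolynomial.pderiv i q) := by
  simp [plap]

lemma poly_sub {d : ℕ} (hd : 0 < d) (q : MvPolynomial (Fin d) ℝ) (hq : plap q = 0) (x : Euc d) {r : ℝ}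
    (hr : 0 < r) : pev q x ≤ ⨍ y in ball x r, pev q y := by
  apply mvp_C2 hd (pev q) (fun i => pev (MvPolynomial.pderiv i q))
    (fun i => pev (MvPolynomial.pderiv i (MvPolynomial.pderiv i q)))
  · intro i; exact pev_contDiff _
  · exact pev_hasFDeriv q
  · intro i y; exact pev_lineDeriv _ i y
  · intro i; exact pev_cont _
  · exact hr
  · intro y
    rw [plap_apply] at hq
    have := congrArg (fun s => pev s y) hq
    simp only [pev, map_sum, map_zero] at this
    simp only [pev]; rw [this]

lemma poly_mvp {d : ℕ} (hd : 0 < d) (q : MvPolynomial (Fin d) ℝ) (hq : plap q = 0) (x : Euc d) {r : ℝ}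
    (hr : 0 < r) : pev q x = ⨍ y in ball x r, pev q y := by
  apply le_antisymm (poly_sub hd q hq x hr)
  have h := poly_sub hd (-q) (by rw [map_neg, hq, neg_zero]) x hr
  have e : pev (-q) = fun y => - pev q y := by ext y; simp [pev]
  rw [e, avg_neg] at h
  linarith

lemma poly_zero_of_ball {d : ℕ} (q : MvPolynomial (Fin d) ℝ) (a : Euc d) {R : ℝ} (hR : 0 < R)
    (h : ∀ x ∈ ball a R, pev q x = 0) : q = 0 := by
  set o : Set (Fin d → ℝ) := (WithLp.toLp 2) ⁻¹' (ball a R) with ho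
  have hoo : IsOpen o := isOpen_ball.preimage (PiLp.continuous_toLp 2 _)
  have hao : (fun i => a i) ∈ o := by
    simp [ho, hR]
  obtain ⟨ε, hε, hb⟩ := Metric.isOpen_iff.1 hoo _ hao
  apply MvPolynomial.funext_set (fun i => ball (a i) ε)
  · intro i; rw [Real.ball_eq_Ioo]; exact Set.Ioo_infinite (by linarith)
  · intro x hx
    have hx' : x ∈ o := by
      apply hb
      rw [← ball_pi _ hε] at *
      exact hx
    have := h (WithLp.toLp 2 x) hx'
    simpa [pev] using this

lemma totalDegree_pderiv_le {d : ℕ} (q : MvPolynomial (Fin d) ℝ) (i : Fin d) :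
    (MvPolynomial.pderiv i q).totalDegree ≤ q.totalDegree - 1 := by
  apply Finset.sup_le
  intro m hm
  rw [MvPolynomial.mem_support_iff, MvPolynomial.coeff_pderiv] at hm
  have h1 : MvPolynomial.coeff (m + Finsupp.single i 1) q ≠ 0 := left_ne_zero_of_mul hm
  have h2 := MvPolynomial.le_totalDegree (MvPolynomial.mem_support_iff.2 h1)
  rw [Finsupp.sum_add_index' (by simp) (by simp)] at h2
  simp at h2
  omega

lemma totalDegree_plap_le {d : ℕ} (q : MvPolynomial (Fin d) ℝ) :
    (plap q).totalDegree ≤ q.totalDegree - 2 := by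
  rw [plap_apply]
  apply MvPolynomial.totalDegree_finsetSum_le
  intro i _
  have h1 := totalDegree_pderiv_le (MvPolynomial.pderiv i q) i
  have h2 := totalDegree_pderiv_le q i
  omega

/-- defining polynomial of a ball -/
def prho {d : ℕ} (a : Euc d) (R : ℝ) : MvPolynomial (Fin d) ℝ :=
  MvPolynomial.C (R ^ 2) - ∑ i, (MvPolynomial.X i - MvPolynomial.C (a i)) ^ 2

lemma pev_prho {d : ℕ} (a : Euc d) (R : ℝ) (x : Euc d) :
    pev (prho a R) x = R ^ 2 - dist x a ^ 2 := by
  simp [pev, prho, EuclideanSpace.dist_eq, Real.sq_sqrt (Finset.sum_nonneg (fun i _ => sq_nonneg _)),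
    Real.dist_eq, sq_abs]

lemma totalDegree_prho {d : ℕ} (a : Euc d) (R : ℝ) : (prho a R).totalDegree ≤ 2 := by
  unfold prho
  refine (MvPolynomial.totalDegree_sub _ _).trans (max_le (by rw [MvPolynomial.totalDegree_C]; omega) ?_)
  apply MvPolynomial.totalDegree_finsetSum_le
  intro i _
  refine (MvPolynomial.totalDegree_pow _ _).trans ?_
  have := (MvPolynomial.totalDegree_sub (MvPolynomial.X i) (MvPolynomial.C (a i)))
  simp at this
  omega

lemma pev_mul {d : ℕ} (p q : MvPolynomial (Fin d) ℝ) (x : Euc d) :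
    pev (p * q) x = pev p x * pev q x := by simp [pev]
lemma pev_sub {d : ℕ} (p q : MvPolynomial (Fin d) ℝ) (x : Euc d) :
    pev (p - q) x = pev p x - pev q x := by simp [pev]

lemma poly_unique {d : ℕ} (hd : 0 < d) (q : MvPolynomial (Fin d) ℝ) (hq : plap q = 0) (a : Euc d) {R m : ℝ}
    (hs : ∀ x ∈ sphere a R, pev q x ≤ m) : ∀ x ∈ closedBall a R, pev q x ≤ m := 
  max_princ hd (pev_cont q).continuousOn
    (fun x _ => ⟨1, one_pos, fun ρ hρ _ => (poly_mvp hd q hq x hρ).le⟩) hs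

lemma poly_unique' {d : ℕ} (hd : 0 < d) (q : MvPolynomial (Fin d) ℝ) (hq : plap q = 0) (a : Euc d) {R m : ℝ}
    (hs : ∀ x ∈ sphere a R, |pev q x| ≤ m) : ∀ x ∈ closedBall a R, |pev q x| ≤ m := by
  intro x hx
  have h1 := poly_unique hd q hq a (fun x hx => (abs_le.1 (hs x hx)).2) x hx
  have e : ∀ y, pev (-q) y = - pev q y := by intro y; simp [pev]
  have h2 := poly_unique hd (-q) (by rw [map_neg, hq, neg_zero]) a (m := m) 
    (fun x hx => by rw [e]; linarith [(abs_le.1 (hs x hx)).1]) x hx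
  rw [e] at h2
  exact abs_le.2 ⟨by linarith, h1⟩

lemma poly_inj {d : ℕ} (hd : 0 < d) (a : Euc d) {R : ℝ} (hR : 0 < R) (r : MvPolynomial (Fin d) ℝ)
    (h : plap (prho a R * r) = 0) : r = 0 := by
  have hz : ∀ x ∈ closedBall a R, |pev (prho a R * r) x| ≤ 0 := by
    apply poly_unique' hd _ h
    intro x hx
    rw [pev_mul, pev_prho, mem_sphere.1 hx]; simp
  apply poly_zero_of_ball r a hR
  intro x hx
  have := hz x (ball_subset_closedBall hx)
  rw [pev_mul, pev_prho] at this
  have h2 := abs_nonpos_iff.1 this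
  rcases mul_eq_zero.1 h2 with h3 | h3
  · have h4 : dist x a < R := hx
    have h5 : 0 ≤ dist x a := dist_nonneg
    nlinarith
  · exact h3

lemma poly_dir {d : ℕ} (hd : 0 < d) (a : Euc d) {R : ℝ} (hR : 0 < R) (q : MvPolynomial (Fin d) ℝ) :
    ∃ H : MvPolynomial (Fin d) ℝ, plap H = 0 ∧ ∀ x ∈ sphere a R, pev H x = pev q x := by
  set m := q.totalDegree with hm
  let W := MvPolynomial.restrictTotalDegree (Fin d) ℝ m
  let T0 : MvPolynomial (Fin d) ℝ →ₗ[ℝ] MvPolynomial (Fin d) ℝ := 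
    plap ∘ₗ (LinearMap.mulLeft ℝ (prho a R))
  have hT : ∀ r ∈ W, T0 r ∈ W := by
    intro r hr
    rw [MvPolynomial.mem_restrictTotalDegree] at hr ⊢
    simp only [T0, LinearMap.comp_apply, LinearMap.mulLeft_apply]
    have h1 := totalDegree_plap_le (prho a R * r)
    have h2 := MvPolynomial.totalDegree_mul (prho a R) r
    have h3 := totalDegree_prho a R
    omega
  let T : W →ₗ[ℝ] W := T0.restrict hT
  have hinj : Function.Injective T := by
    rw [← LinearMap.ker_eq_bot, LinearMap.ker_eq_bot']
    intro r hr
    have := congrArg Subtype.val hr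
    simp only [T, LinearMap.restrict_coe_apply, T0, LinearMap.comp_apply, LinearMap.mulLeft_apply] at this
    exact Subtype.ext (poly_inj hd a hR _ this)
  have hsurj := LinearMap.injective_iff_surjective.1 hinj
  have hqW : plap q ∈ W := by
    rw [MvPolynomial.mem_restrictTotalDegree]
    have := totalDegree_plap_le q
    omega
  obtain ⟨r, hr⟩ := hsurj ⟨plap q, hqW⟩
  have hr' := congrArg Subtype.val hr
  simp only [T, LinearMap.restrict_coe_apply, T0, LinearMap.comp_apply, LinearMap.mulLeft_apply] at hr'
  refine ⟨q - prho a R * r, by rw [map_sub, hr', sub_self], fun x hx => ?_⟩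
  rw [pev_sub, pev_mul, pev_prho, mem_sphere.1 hx]; simp

lemma poly_approx {d : ℕ} (a : Euc d) (R : ℝ) (v : Euc d → ℝ) (hv : ContinuousOn v (sphere a R))
    {ε : ℝ} (hε : 0 < ε) : ∃ q : MvPolynomial (Fin d) ℝ, ∀ x ∈ sphere a R, |pev q x - v x| < ε := by
  let S := sphere a R
  have : CompactSpace S := isCompact_iff_compactSpace.1 (isCompact_sphere a R)
  let φ : MvPolynomial (Fin d) ℝ →ₐ[ℝ] C(S, ℝ) := 
    MvPolynomial.aeval (fun i => (⟨fun x => x.1 i, by fun_prop⟩ : C(S, ℝ)))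
  have hφ : ∀ q (x : S), φ q x = pev q x.1 := by
    intro q x
    induction q using MvPolynomial.induction_on with
    | C a => simp [φ, pev]
    | add p q hp hq => rw [map_add]; simp [hp, hq, pev]
    | mul_X p i hp => rw [map_mul]; simp [hp, pev, φ]
  have hsep : (φ.range : Subalgebra ℝ C(S, ℝ)).SeparatesPoints := by
    intro x y hxy
    have : ∃ i, x.1 i ≠ y.1 i := by
      by_contra hcon
      push Not at hcon
      exact hxy (Subtype.ext (PiLp.ext hcon))
    obtain ⟨i, hi⟩ := this
    refine ⟨φ (MvPolynomial.X i), ⟨φ (MvPolynomial.X i), ⟨MvPolynomial.X i, rfl⟩, rfl⟩, ?_⟩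
    rw [hφ, hφ]; simpa [pev] using hi
  obtain ⟨g, hg⟩ := ContinuousMap.exists_mem_subalgebra_near_continuous_of_separatesPoints φ.range hsep
    (fun x : S => v x.1) (continuousOn_iff_continuous_restrict.1 hv) ε hε
  obtain ⟨q, hq⟩ := g.2
  refine ⟨q, fun x hx => ?_⟩
  have := hg ⟨x, hx⟩
  rw [← hq] at this
  have h2 := hφ q ⟨x, hx⟩
  rw [Real.norm_eq_abs] at this
  rw [← h2]; exact this

theorem dirichlet {d : ℕ} (hd : 0 < d) (a : Euc d) {R : ℝ} (hR : 0 < R) (v : Euc d → ℝ)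
    (hv : ContinuousOn v (sphere a R)) :
    ∃ H : Euc d → ℝ, ContinuousOn H (closedBall a R) ∧ (∀ x ∈ sphere a R, H x = v x) ∧
      ∀ x r, 0 < r → closedBall x r ⊆ closedBall a R → H x = ⨍ y in ball x r, H y := by
  have hq : ∀ n : ℕ, ∃ H : MvPolynomial (Fin d) ℝ, plap H = 0 ∧ ∀ x ∈ sphere a R, |pev H x - v x| < 1 / ((n:ℝ) + 1) := by
    intro n
    obtain ⟨q, hq⟩ := poly_approx a R v hv (ε := 1 / ((n:ℝ)+1)) (by positivity)
    obtain ⟨H, hH, hH2⟩ := poly_dir hd a hR q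
    exact ⟨H, hH, fun x hx => by rw [hH2 x hx]; exact hq x hx⟩
  choose P hP hPs using hq
  have hc : ∀ m n : ℕ, ∀ x ∈ closedBall a R, |pev (P m) x - pev (P n) x| ≤ 1 / ((m:ℝ)+1) + 1 / ((n:ℝ)+1) := by
    intro m n x hx
    rw [← pev_sub]
    refine poly_unique' hd _ (by rw [map_sub, hP, hP, sub_zero]) a ?_ x hx
    intro y hy
    rw [pev_sub]
    have h1 := abs_lt.1 (hPs m y hy)
    have h2 := abs_lt.1 (hPs n y hy)
    exact abs_le.2 ⟨by linarith, by linarith⟩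
  have h0 : Tendsto (fun n : ℕ => 1 / ((n:ℝ) + 1)) atTop (𝓝 0) := tendsto_one_div_add_atTop_nhds_zero_nat
  have hlim : ∀ x, ∃ l, x ∈ closedBall a R → Tendsto (fun n => pev (P n) x) atTop (𝓝 l) := by
    intro x
    by_cases hx : x ∈ closedBall a R
    · have : CauchySeq (fun n => pev (P n) x) := by
        apply cauchySeq_of_le_tendsto_0 (fun N : ℕ => 1 / ((N:ℝ)+1) + 1 / ((N:ℝ)+1))
        · intro n m N hn hm
          rw [Real.dist_eq]
          refine (hc n m x hx).trans ?_
          have : (N:ℝ) ≤ n := by exact_mod_cast hn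
          have : (N:ℝ) ≤ m := by exact_mod_cast hm
          gcongr
        · simpa using h0.add h0
      obtain ⟨l, hl⟩ := cauchySeq_tendsto_of_complete this
      exact ⟨l, fun _ => hl⟩
    · exact ⟨0, fun h => absurd h hx⟩
  choose H hH using hlim
  have hbd : ∀ n, ∀ x ∈ closedBall a R, |pev (P n) x - H x| ≤ 1 / ((n:ℝ)+1) := by
    intro n x hx
    have h1 : Tendsto (fun m => |pev (P n) x - pev (P m) x|) atTop (𝓝 |pev (P n) x - H x|) :=
      (tendsto_const_nhds.sub (hH x hx)).abs
    have h2 : Tendsto (fun m : ℕ => 1 / ((n:ℝ)+1) + 1 / ((m:ℝ)+1)) atTop (𝓝 (1 / ((n:ℝ)+1) + 0)) :=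
      tendsto_const_nhds.add h0
    rw [add_zero] at h2
    exact le_of_tendsto_of_tendsto' h1 h2 (fun m => hc n m x hx)
  have hHc : ContinuousOn H (closedBall a R) := by
    have : TendstoUniformlyOn (fun n => pev (P n)) H atTop (closedBall a R) := by
      rw [Metric.tendstoUniformlyOn_iff]
      intro ε hε
      filter_upwards [h0.eventually (gt_mem_nhds hε)] with n hn x hx
      rw [dist_comm, Real.dist_eq]
      exact (hbd n x hx).trans_lt hn
    exact this.continuousOn (Frequently.of_forall fun n => (pev_cont _).continuousOn)
  refine ⟨H, hHc, ?_, ?_⟩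
  · intro x hx
    have h1 := (hH x (sphere_subset_closedBall hx))
    have h2 : Tendsto (fun n => pev (P n) x) atTop (𝓝 (v x)) := by
      rw [tendsto_iff_dist_tendsto_zero]
      refine squeeze_zero (fun _ => dist_nonneg) (fun n => ?_) h0
      rw [Real.dist_eq]; exact (hPs n x hx).le
    exact tendsto_nhds_unique h1 h2
  · intro x r hr hsub
    have hx : x ∈ closedBall a R := hsub (mem_closedBall_self hr.le)
    have key : ∀ n : ℕ, |H x - ⨍ y in ball x r, H y| ≤ 1 / ((n:ℝ)+1) + 1 / ((n:ℝ)+1) := by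
      intro n
      have hpc : ContinuousOn (pev (P n)) (closedBall x r) := (pev_cont _).continuousOn
      have hHc' : ContinuousOn H (closedBall x r) := hHc.mono hsub
      have e := poly_mvp hd (P n) (hP n) x hr
      have hcc : ContinuousOn (fun _ : Euc d => 1 / ((n:ℝ)+1)) (closedBall x r) := continuousOn_const
      have h1 : ⨍ y in ball x r, H y ≤ ⨍ y in ball x r, (pev (P n) y + 1 / ((n:ℝ)+1)) := by
        apply avg_mono hHc' (hpc.add hcc)
        intro y hy
        have := abs_le.1 (hbd n y (hsub (ball_subset_closedBall hy)))
        simp only [Pi.add_apply] at *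
        linarith
      have h2 : ⨍ y in ball x r, pev (P n) y ≤ ⨍ y in ball x r, (H y + 1 / ((n:ℝ)+1)) := by
        apply avg_mono hpc (hHc'.add hcc)
        intro y hy
        have := abs_le.1 (hbd n y (hsub (ball_subset_closedBall hy)))
        simp only [Pi.add_apply] at *
        linarith
      rw [avg_add hpc hcc, avg_const _ _ hr] at h1
      rw [avg_add hHc' hcc, avg_const _ _ hr] at h2
      have := abs_le.1 (hbd n x hx)
      exact abs_le.2 ⟨by linarith, by linarith⟩
    have : |H x - ⨍ y in ball x r, H y| ≤ 0 := by
      refine ge_of_tendsto' (x := atTop) ?_ key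
      simpa using h0.add h0
    linarith [abs_nonpos_iff.1 this]

lemma vball_eq' {d : ℕ} (hd : 0 < d) (x : Euc d) {r : ℝ} (hr : 0 ≤ r) :
    volume.real (ball x r) = r ^ d * volume.real (ball (0 : Euc d) 1) := by
  rcases hr.eq_or_lt with h | h
  · rw [← h]; simp [hd.ne']
  · exact vball_eq x h

lemma int_diff {d : ℕ} {f : Euc d → ℝ} {y : Euc d} {s t : ℝ} (hst : s ≤ t)
    (hf : ContinuousOn f (closedBall y t)) :
    ∫ x in ball y t, f x = (∫ x in ball y s, f x) + ∫ x in ball y t \ ball y s, f x := by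
  rw [← setIntegral_union disjoint_sdiff_right (measurableSet_ball.diff measurableSet_ball)
    ((int_ball hf).mono_set (ball_subset_ball hst)) ((int_ball hf).mono_set diff_subset),
    union_diff_cancel (ball_subset_ball hst)]

lemma vol_diff {d : ℕ} (hd : 0 < d) (y : Euc d) {s t : ℝ} (hs : 0 ≤ s) (hst : s ≤ t) :
    volume.real (ball y t \ ball y s) = (t ^ d - s ^ d) * volume.real (ball (0 : Euc d) 1) := by
  rw [measureReal_diff (ball_subset_ball hst) measurableSet_ball measure_ball_lt_top.ne, vball_eq' hd y hs, vball_eq' hd y (hs.trans hst)]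
  ring

lemma int_cont {d : ℕ} (hd : 0 < d) {f : Euc d → ℝ} {y : Euc d} {ρ : ℝ} 
    (hf : ContinuousOn f (closedBall y ρ)) :
    ContinuousOn (fun s => ∫ x in ball y s, f x) (Icc 0 ρ) := by
  obtain ⟨K, hK⟩ := (isCompact_closedBall y ρ).exists_bound_of_continuousOn hf
  set c := K * volume.real (ball (0 : Euc d) 1)
  have key : ∀ s t, 0 ≤ s → s ≤ t → t ≤ ρ → |(∫ x in ball y t, f x) - ∫ x in ball y s, f x| ≤ |c * t ^ d - c * s ^ d| := by
    intro s t hs hst ht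
    rw [int_diff hst (hf.mono (closedBall_subset_closedBall ht)), add_sub_cancel_left, ← Real.norm_eq_abs]
    have := norm_setIntegral_le_of_norm_le_const (μ := volume) (s := ball y t \ ball y s) (f := f) (C := K)
      ((measure_mono diff_subset).trans_lt measure_ball_lt_top) 
      (fun x hx => hK x (ball_subset_closedBall (ball_subset_ball ht hx.1)))
    refine this.trans (le_trans (le_of_eq ?_) (le_abs_self _))
    rw [vol_diff hd y hs hst]; ring
  have key2 : ∀ s t, s ∈ Icc 0 ρ → t ∈ Icc 0 ρ → |(∫ x in ball y t, f x) - ∫ x in ball y s, f x| ≤ |c * t ^ d - c * s ^ d| := by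
    intro s t hs ht
    rcases le_total s t with h | h
    · exact key s t hs.1 h ht.2
    · rw [abs_sub_comm, abs_sub_comm (c * t ^ d)]; exact key t s ht.1 h hs.2
  have hg : Continuous (fun t : ℝ => c * t ^ d) := by fun_prop
  rw [Metric.continuousOn_iff]
  intro s hs ε hε
  obtain ⟨δ, hδ, h⟩ := Metric.continuous_iff.1 hg s ε hε
  refine ⟨δ, hδ, fun t ht hts => ?_⟩
  have := h t hts
  rw [Real.dist_eq] at this ⊢
  exact (key2 s t hs ht).trans_lt this

lemma LMV.sub_harm {d : ℕ} {v H : Euc d → ℝ} {x : Euc d} {U : Set (Euc d)} (hU : U ∈ 𝓝 x)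
    (hv : LMV v x) (hvc : ContinuousOn v U) (hHc : ContinuousOn H U) 
    (hH : ∃ δ > 0, ∀ ρ, 0 < ρ → ρ < δ → H x = ⨍ y in ball x ρ, H y) :
    LMV (fun y => v y - H y) x := by
  obtain ⟨δ1, h1, h1'⟩ := hv
  obtain ⟨δ2, h2, h2'⟩ := hH
  obtain ⟨δ3, h3, h3'⟩ := Metric.nhds_basis_closedBall.mem_iff.1 hU
  refine ⟨min δ1 (min δ2 δ3), by positivity, fun ρ hρ hlt => ?_⟩
  simp only [lt_min_iff] at hlt
  have hs : closedBall x ρ ⊆ U := (closedBall_subset_closedBall hlt.2.2.le).trans h3'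
  simp only [sub_eq_add_neg]
  rw [avg_add (w := fun y => - H y) (hvc.mono hs) (hHc.mono hs).neg, avg_neg]
  have := h1' ρ hρ hlt.1
  have := h2' ρ hρ hlt.2.1
  linarith

lemma le_dirichlet {d : ℕ} (hd : 0 < d) {v H : Euc d → ℝ} {a : Euc d} {R : ℝ} 
    (hv : ContinuousOn v (closedBall a R)) (hl : ∀ x ∈ ball a R, LMV v x)
    (hHc : ContinuousOn H (closedBall a R)) (hs : ∀ x ∈ sphere a R, v x ≤ H x)
    (hH : ∀ x r, 0 < r → closedBall x r ⊆ closedBall a R → H x = ⨍ y in ball x r, H y) :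
    ∀ x ∈ closedBall a R, v x ≤ H x := by
  intro x hx
  have := max_princ hd (hv.sub hHc) (m := 0) (fun x hx => ?_) (fun x hx => ?_) x hx
  · have h2 : v x - H x ≤ 0 := this
    linarith
  · have hU : closedBall a R ∈ 𝓝 x := mem_of_superset (isOpen_ball.mem_nhds hx) ball_subset_closedBall
    refine LMV.sub_harm hU (hl x hx) hv hHc ?_
    obtain ⟨δ, h3, h3'⟩ := Metric.nhds_basis_closedBall.mem_iff.1 hU
    exact ⟨δ, h3, fun ρ hρ hlt => hH x ρ hρ ((closedBall_subset_closedBall hlt.le).trans h3')⟩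
  · have : v x - H x ≤ 0 := by linarith [hs x hx]
    exact this

/-- closeness to boundary values in a thin annulus -/
lemma annulus {d : ℕ} {g : Euc d → ℝ} {y : Euc d} {t : ℝ} (ht : 0 < t)
    (hg : ContinuousOn g (closedBall y t)) (h0 : ∀ x ∈ sphere y t, g x = 0) {ε : ℝ} (hε : 0 < ε) :
    ∃ δ > 0, ∀ x ∈ closedBall y t, t - δ ≤ dist x y → g x ≤ ε := by
  have huc := (isCompact_closedBall y t).uniformContinuousOn_of_continuous hg
  rw [Metric.uniformContinuousOn_iff] at huc
  obtain ⟨δ, hδ, h⟩ := huc ε hε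
  refine ⟨min (δ / 2) (t / 2), by positivity, fun x hx hxd => ?_⟩
  have hd1 : 0 < dist x y := by linarith [min_le_right (δ/2) (t/2)]
  have hd2 : dist x y ≤ t := hx
  set z := y + (t / dist x y) • (x - y) with hz
  have hzs : z ∈ sphere y t := by
    rw [mem_sphere, dist_eq_norm, hz, add_sub_cancel_left, norm_smul, ← dist_eq_norm, Real.norm_eq_abs, abs_of_pos (by positivity)]
    field_simp
  have hzx : dist x z < δ := by
    have : z - x = (t / dist x y - 1) • (x - y) := by rw [hz, sub_smul, one_smul]; abel
    rw [dist_comm, dist_eq_norm, this, norm_smul, ← dist_eq_norm x y, Real.norm_eq_abs, abs_of_nonneg]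
    · have : (t / dist x y - 1) * dist x y = t - dist x y := by field_simp
      rw [this]; linarith [min_le_left (δ/2) (t/2)]
    · rw [sub_nonneg, le_div_iff₀ hd1]; linarith
  have := h x hx z (sphere_subset_closedBall hzs) hzx
  rw [h0 z hzs, Real.dist_eq, sub_zero] at this
  exact (le_abs_self _).trans this.le

theorem local_to_ball {d : ℕ} (hd : 0 < d) {v : Euc d → ℝ} {y : Euc d} {ρ : ℝ} (hρ : 0 < ρ)
    (hv : ContinuousOn v (closedBall y ρ)) (hl : ∀ x ∈ closedBall y ρ, LMV v x) :
    v y ≤ ⨍ x in ball y ρ, v x := by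
  refine le_of_forall_pos_le_add fun ε hε => ?_
  set f : Euc d → ℝ := fun x => v x - (v y - ε) with hf
  have hfc : ContinuousOn f (closedBall y ρ) := hv.sub continuousOn_const
  set J : ℝ → ℝ := fun s => ∫ x in ball y s, f x with hJ
  have hJc : ContinuousOn J (Icc 0 ρ) := int_cont hd hfc
  have step : ∀ t, 0 < t → t ≤ ρ → ∃ δ > 0, ∀ s, 0 < s → s ≤ t → t - δ ≤ s → J s ≤ J t := by
    intro t ht htρ
    have hsub : closedBall y t ⊆ closedBall y ρ := closedBall_subset_closedBall htρ
    have hvt := hv.mono hsub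
    obtain ⟨H, hHc, hHs, hHm⟩ := dirichlet hd y ht v (hvt.mono sphere_subset_closedBall)
    have hle := le_dirichlet hd hvt (fun x hx => hl x (hsub (ball_subset_closedBall hx))) hHc (fun x hx => (hHs x hx).ge) hHm
    obtain ⟨δ, hδ, hδ'⟩ := annulus ht (g := fun x => H x - v x) (hHc.sub hvt) (fun x hx => by simp [hHs x hx]) hε
    refine ⟨δ, hδ, fun s hs hst hsd => ?_⟩
    have e1 := int_diff hst (hfc.mono hsub)
    have e2 := int_diff hst hHc
    have m1 := hHm y t ht subset_rfl
    have m2 := hHm y s hs (closedBall_subset_closedBall hst)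
    rw [eq_avg_iff _ _ ht] at m1
    rw [eq_avg_iff _ _ hs] at m2
    have hvd := measureReal_diff (μ := volume) (ball_subset_ball (x := y) hst) measurableSet_ball measure_ball_lt_top.ne
    have hD : ∫ x in ball y t \ ball y s, (H x - v y) ≤ ∫ x in ball y t \ ball y s, f x := by
      have hfin : volume (ball y t \ ball y s) ≠ ⊤ := ((measure_mono diff_subset).trans_lt measure_ball_lt_top).ne
      apply setIntegral_mono_on
      · exact ((int_ball (v := fun x => H x - v y) (hHc.sub continuousOn_const)).mono_set diff_subset)
      · exact ((int_ball (hfc.mono hsub)).mono_set diff_subset)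
      · exact measurableSet_ball.diff measurableSet_ball
      · intro x hx
        have h1 := hδ' x (ball_subset_closedBall hx.1) (by
          have : s ≤ dist x y := not_lt.1 hx.2
          linarith)
        simp only [hf]; linarith
    have hI : ∫ x in ball y t \ ball y s, (H x - v y) = (∫ x in ball y t \ ball y s, H x) - v y * volume.real (ball y t \ ball y s) := by
      rw [integral_sub ((int_ball hHc).mono_set diff_subset) ((int_ball (continuousOn_const)).mono_set (diff_subset (s := ball y t)))]
      simp [mul_comm]
    have hvy : v y ≤ H y := hle y (mem_closedBall_self ht.le)
    have hpos : 0 ≤ volume.real (ball y t \ ball y s) := measureReal_nonneg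
    have : 0 ≤ ∫ x in ball y t \ ball y s, f x := by
      refine le_trans ?_ hD
      rw [hI]
      have : ∫ x in ball y t \ ball y s, H x = H y * volume.real (ball y t \ ball y s) := by
        rw [hvd]; linarith
      rw [this]; nlinarith
    simp only [hJ]; linarith
  set T := Icc 0 ρ ∩ J ⁻¹' Iic (J ρ) with hT
  have hTc : IsClosed T := hJc.preimage_isClosed_of_isClosed isClosed_Icc isClosed_Iic
  have hTn : T.Nonempty := ⟨ρ, ⟨hρ.le, le_rfl⟩, le_refl (J ρ)⟩
  have hTb : BddBelow T := ⟨0, fun s hs => hs.1.1⟩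
  have hmem := hTc.csInf_mem hTn hTb
  set s0 := sInf T
  have hs0 : s0 = 0 := by
    by_contra hne
    have hpos : 0 < s0 := lt_of_le_of_ne hmem.1.1 (Ne.symm hne)
    obtain ⟨δ, hδ, h⟩ := step s0 hpos hmem.1.2
    set s := max (s0 - δ) (s0 / 2)
    have h1 : s < s0 := max_lt (by linarith) (by linarith)
    have h2 : s0 / 2 ≤ s := le_max_right _ _
    have h3 := h s (by linarith) h1.le (le_max_left _ _)
    have : s ∈ T := ⟨⟨by linarith, by linarith [hmem.1.2]⟩, h3.trans hmem.2⟩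
    linarith [csInf_le hTb this]
  have h0 : J 0 ≤ J ρ := by rw [← hs0]; exact hmem.2
  have hJ0 : J 0 = 0 := by simp [hJ]
  rw [hJ0] at h0
  have : (∫ x in ball y ρ, v x) = J ρ + (v y - ε) * volume.real (ball y ρ) := by
    simp only [hJ, hf]
    rw [integral_sub (int_ball hv) (int_ball continuousOn_const)]
    simp [mul_comm]
  have h3 : v y - ε ≤ ⨍ x in ball y ρ, v x := by
    rw [le_avg_iff _ _ hρ, this]; linarith
  linarith

lemma subh_of_LMV {d : ℕ} (hd : 0 < d) {v : Euc d → ℝ} {Ω : Set (Euc d)}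
    (hv : ContinuousOn v Ω) (hl : ∀ x ∈ Ω, LMV v x) : SubharmonicOn v Ω :=
  ⟨hv, fun _ _ _ hr hs => local_to_ball hd hr (hv.mono hs) (fun y hy => hl y (hs hy))⟩

lemma SubharmonicOn.lmv {d : ℕ} {v : Euc d → ℝ} {Ω : Set (Euc d)} (hΩ : IsOpen Ω)
    (hv : SubharmonicOn v Ω) {x : Euc d} (hx : x ∈ Ω) : LMV v x := by
  obtain ⟨δ, h3, h3'⟩ := Metric.nhds_basis_closedBall.mem_iff.1 (hΩ.mem_nhds hx)
  exact ⟨δ, h3, fun ρ hρ hlt => hv.2 x hx ρ hρ ((closedBall_subset_closedBall hlt.le).trans h3')⟩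

lemma SubharmonicOn.max {d : ℕ} {v w : Euc d → ℝ} {Ω : Set (Euc d)}
    (hv : SubharmonicOn v Ω) (hw : SubharmonicOn w Ω) : SubharmonicOn (fun x => max (v x) (w x)) Ω := by
  have hc : ContinuousOn (fun x => Max.max (v x) (w x)) Ω := hv.1.sup hw.1
  refine ⟨hc, fun x hx r hr hs => max_le ?_ ?_⟩
  · exact (hv.2 x hx r hr hs).trans (avg_mono (hv.1.mono hs) (hc.mono hs) fun y _ => le_max_left _ _)
  · exact (hw.2 x hx r hr hs).trans (avg_mono (hw.1.mono hs) (hc.mono hs) fun y _ => le_max_right _ _)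

lemma modif {d : ℕ} (hd : 0 < d) {v : Euc d → ℝ} {Ω : Set (Euc d)} (hΩ : IsOpen Ω) (hv : SubharmonicOn v Ω)
    {a : Euc d} {R : ℝ} (hR : 0 < R) (hB : closedBall a R ⊆ Ω) :
    ∃ v' : Euc d → ℝ, SubharmonicOn v' Ω ∧ (∀ x, v x ≤ v' x) ∧ (∀ x, x ∉ closedBall a R → v' x = v x) ∧
      (∀ x r, 0 < r → closedBall x r ⊆ closedBall a R → v' x = ⨍ y in ball x r, v' y) ∧
      ∀ M, (∀ x ∈ Ω, v x ≤ M) → ∀ x ∈ Ω, v' x ≤ M := by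
  classical
  have : Nonempty (Fin d) := ⟨⟨0, hd⟩⟩
  have hvB := hv.1.mono hB
  obtain ⟨H, hHc, hHs, hHm⟩ := dirichlet hd a hR v (hvB.mono sphere_subset_closedBall)
  have hle := le_dirichlet hd hvB (fun x hx => hv.lmv hΩ (hB (ball_subset_closedBall hx))) hHc (fun x hx => (hHs x hx).ge) hHm
  set v' := (ball a R).piecewise H v with hv'
  have e1 : ∀ x ∈ closedBall a R, v' x = H x := by
    intro x hx
    by_cases h : x ∈ ball a R
    · simp [hv', h]
    · have : x ∈ sphere a R := le_antisymm hx (not_lt.1 h)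
      rw [hv', piecewise_eq_of_notMem _ _ _ h, hHs x this]
  have e2 : ∀ x, x ∉ ball a R → v' x = v x := fun x h => by rw [hv', piecewise_eq_of_notMem _ _ _ h]
  have hge : ∀ x, v x ≤ v' x := by
    intro x
    by_cases h : x ∈ ball a R
    · rw [e1 x (ball_subset_closedBall h)]; exact hle x (ball_subset_closedBall h)
    · rw [e2 x h]
  have hm : ∀ x r, 0 < r → closedBall x r ⊆ closedBall a R → v' x = ⨍ y in ball x r, v' y := by
    intro x r hr hs
    rw [e1 x (hs (mem_closedBall_self hr.le)), hHm x r hr hs, avg_eq, avg_eq]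
    congr 1
    exact setIntegral_congr_fun measurableSet_ball (fun y hy => (e1 y (hs (ball_subset_closedBall hy))).symm)
  have hc : ContinuousOn v' Ω := by
    apply ContinuousOn.piecewise
    · intro x hx
      rw [frontier_ball _ hR.ne'] at hx
      exact hHs x hx.2
    · rw [closure_ball _ hR.ne']; exact hHc.mono inter_subset_right
    · exact hv.1.mono inter_subset_left
  refine ⟨v', subh_of_LMV hd hc ?_, hge, fun x hx => e2 x (fun h => hx (ball_subset_closedBall h)), hm, ?_⟩
  · intro x hx
    by_cases h : x ∈ ball a R
    · obtain ⟨δ, h3, h3'⟩ := Metric.nhds_basis_closedBall.mem_iff.1 (isOpen_ball.mem_nhds h)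
      exact ⟨δ, h3, fun ρ hρ hlt => (hm x ρ hρ (((closedBall_subset_closedBall hlt.le).trans h3').trans ball_subset_closedBall)).le⟩
    · rw [LMV, e2 x h]
      obtain ⟨δ, h3, h3'⟩ := Metric.nhds_basis_closedBall.mem_iff.1 (hΩ.mem_nhds hx)
      refine ⟨δ, h3, fun ρ hρ hlt => ?_⟩
      have hs := (closedBall_subset_closedBall hlt.le).trans h3'
      exact (hv.2 x hx ρ hρ hs).trans (avg_mono (hv.1.mono hs) (hc.mono hs) fun y _ => hge y)
  · intro M hM x hx
    by_cases h : x ∈ ball a R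
    · refine max_princ hd (hc.mono hB) (fun y hy => ?_) (fun y hy => ?_) x (ball_subset_closedBall h)
      · obtain ⟨δ, h3, h3'⟩ := Metric.nhds_basis_closedBall.mem_iff.1 (isOpen_ball.mem_nhds hy)
        exact ⟨δ, h3, fun ρ hρ hlt => (hm y ρ hρ (((closedBall_subset_closedBall hlt.le).trans h3').trans ball_subset_closedBall)).le⟩
      · rw [e1 y (sphere_subset_closedBall hy), hHs y hy]; exact hM y (hB (sphere_subset_closedBall hy))
    · rw [e2 x h]; exact hM x hx

/-- Subharmonic lower class used in the Wiener construction. -/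
structure PV {d : ℕ} (Ω : Set (Euc d)) (s : Euc d → ℝ) (M : ℝ) (v : Euc d → ℝ) : Prop where
  sub : SubharmonicOn v Ω
  ge : ∀ x ∈ Ω, s x ≤ v x
  le : ∀ x ∈ Ω, v x ≤ M
  bd : ∀ ξ ∈ frontier Ω, ∀ ε > 0, ∀ᶠ x in 𝓝[Ω] ξ, v x < s ξ + ε

lemma PV.max {d : ℕ} {Ω : Set (Euc d)} {s : Euc d → ℝ} {M : ℝ} {v w : Euc d → ℝ}
    (hv : PV Ω s M v) (hw : PV Ω s M w) : PV Ω s M (fun x => max (v x) (w x)) where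
  sub := hv.sub.max hw.sub
  ge x hx := (hv.ge x hx).trans (le_max_left _ _)
  le x hx := max_le (hv.le x hx) (hw.le x hx)
  bd ξ hξ ε hε := by
    filter_upwards [hv.bd ξ hξ ε hε, hw.bd ξ hξ ε hε] with x h1 h2 using max_lt h1 h2

lemma PV.modif {d : ℕ} (hd : 0 < d) {Ω : Set (Euc d)} (hΩ : IsOpen Ω) {s : Euc d → ℝ} {M : ℝ} {v : Euc d → ℝ}
    (hv : PV Ω s M v) {a : Euc d} {R : ℝ} (hR : 0 < R) (hB : closedBall a R ⊆ Ω) :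
    ∃ v', PV Ω s M v' ∧ (∀ x, v x ≤ v' x) ∧
      (∀ x r, 0 < r → closedBall x r ⊆ closedBall a R → v' x = ⨍ y in ball x r, v' y) := by
  obtain ⟨v', h1, h2, h3, h4, h5⟩ := HarmMeas.modif hd hΩ hv.sub hR hB
  refine ⟨v', ⟨h1, fun x hx => (hv.ge x hx).trans (h2 x), h5 M hv.le, ?_⟩, h2, h4⟩
  intro ξ hξ ε hε
  have hn : ξ ∉ closedBall a R := fun h => by
    rw [hΩ.frontier_eq] at hξ; exact hξ.2 (hB h)
  filter_upwards [hv.bd ξ hξ ε hε, mem_nhdsWithin_of_mem_nhds (isClosed_closedBall.isOpen_compl.mem_nhds hn)] with x hx hx2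
  rw [h3 x hx2]; exact hx

lemma harnack {d : ℕ} {k : Euc d → ℝ} {a x y : Euc d} {R t δ : ℝ} (hk : ContinuousOn k (closedBall a R))
    (hk0 : ∀ z ∈ closedBall a R, 0 ≤ k z)
    (hm : ∀ x r, 0 < r → closedBall x r ⊆ closedBall a R → k x = ⨍ y in ball x r, k y)
    (ht : 0 < t) (hδ : dist x y ≤ δ) (hs : closedBall y (t + δ) ⊆ closedBall a R) :
    t ^ d * k x ≤ (t + δ) ^ d * k y := by
  have hδ0 : 0 ≤ δ := dist_nonneg.trans hδ
  have hsub : ball x t ⊆ ball y (t + δ) := ball_subset_ball' (by linarith)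
  have hsub' : closedBall x t ⊆ closedBall y (t + δ) := closedBall_subset_closedBall' (by linarith)
  have e1 := hm x t ht (hsub'.trans hs)
  have e2 := hm y (t + δ) (by linarith) hs
  rw [eq_avg_iff _ _ ht, vball_eq _ ht] at e1
  rw [eq_avg_iff _ _ (by linarith), vball_eq _ (by linarith)] at e2
  have hi : ∫ z in ball x t, k z ≤ ∫ z in ball y (t + δ), k z := by
    apply setIntegral_mono_set (int_ball (hk.mono hs))
    · filter_upwards [self_mem_ae_restrict measurableSet_ball] with z hz
      exact hk0 z (hs (ball_subset_closedBall hz))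
    · exact hsub.eventuallyLE
  have hp := vball_pos (0 : Euc d) one_pos
  have : t ^ d * k x * volume.real (ball (0 : Euc d) 1) ≤ (t + δ) ^ d * k y * volume.real (ball (0 : Euc d) 1) := by
    linarith
  exact le_of_mul_le_mul_right this hp

theorem perron_sup {d : ℕ} (hd : 0 < d) {Ω : Set (Euc d)} (hΩ : IsOpen Ω) {s : Euc d → ℝ} {M : ℝ}
    (hsc : Continuous s) (hs : SubharmonicOn s Ω) (hsM : ∀ x, |s x| ≤ M) {p : Euc d} (hp : p ∈ Ω) {ε : ℝ} (hε : 0 < ε) :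
    ∃ h v : Euc d → ℝ, SubharmonicOn (fun y => - h y) Ω ∧ (∀ x ∈ Ω, s x ≤ h x) ∧ (∀ x ∈ Ω, h x ≤ M) ∧
      PV Ω s M v ∧ h p - v p ≤ ε := by
  have hsV : PV Ω s M s := by
    refine ⟨hs, fun _ _ => le_rfl, fun x _ => (abs_le.1 (hsM x)).2, fun ξ _ ε hε => ?_⟩
    exact mem_nhdsWithin_of_mem_nhds (hsc.continuousAt.eventually (gt_mem_nhds (by linarith)))
  set h : Euc d → ℝ := fun x => sSup {t | ∃ v, PV Ω s M v ∧ v x = t} with hh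
  have hbdd : ∀ x ∈ Ω, BddAbove {t | ∃ v, PV Ω s M v ∧ v x = t} := fun x hx =>
    ⟨M, by rintro t ⟨v, hv, rfl⟩; exact hv.le x hx⟩
  have hle : ∀ v, PV Ω s M v → ∀ x ∈ Ω, v x ≤ h x := fun v hv x hx => le_csSup (hbdd x hx) ⟨v, hv, rfl⟩
  have hub : ∀ x c, (∀ v, PV Ω s M v → v x ≤ c) → h x ≤ c := by
    intro x c hc
    refine csSup_le ⟨s x, s, hsV, rfl⟩ ?_
    rintro t ⟨v, hv, rfl⟩; exact hc v hv
  have hex : ∀ x, ∀ η > 0, ∃ v, PV Ω s M v ∧ h x - η < v x := by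
    intro x η hη
    by_contra hcon
    push Not at hcon
    have := hub x (h x - η) hcon
    linarith
  have hcont : ∀ a ∈ Ω, ContinuousAt h a := by
    intro a ha
    obtain ⟨R, hR, hB⟩ := Metric.nhds_basis_closedBall.mem_iff.1 (hΩ.mem_nhds ha)
    have hM0 : ∀ v, PV Ω s M v → ∀ z ∈ Ω, 0 ≤ v z + M := fun v hv z hz => by
      linarith [hv.ge z hz, (abs_le.1 (hsM z)).1]
    have key : ∀ x y t δ, 0 < t → dist x y ≤ δ → x ∈ Ω → y ∈ Ω → closedBall y (t + δ) ⊆ closedBall a R →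
        t ^ d * (h x + M) ≤ (t + δ) ^ d * (h y + M) := by
      intro x y t δ ht hδ hx hy hsub
      have hδ0 : 0 ≤ δ := dist_nonneg.trans hδ
      have hpos : 0 < t ^ d := by positivity
      have : h x ≤ (t + δ) ^ d * (h y + M) / t ^ d - M := by
        apply hub
        intro v hv
        obtain ⟨v', h1, h2, h3⟩ := hv.modif hd hΩ hR hB
        have hv'c := h1.sub.1.mono hB
        have := harnack (k := fun z => v' z + M) (a := a) (R := R) (hv'c.add continuousOn_const)
          (fun z hz => hM0 v' h1 z (hB hz)) (fun x r hr hs => by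
            rw [avg_add (hv'c.mono hs) continuousOn_const, avg_const _ _ hr, ← h3 x r hr hs]) ht hδ hsub
        rw [le_sub_iff_add_le, le_div_iff₀ hpos]
        have h5 := hle v' h1 y hy
        have h6 : (t + δ) ^ d * (v' y + M) ≤ (t + δ) ^ d * (h y + M) := by gcongr
        have h7 : (v x + M) * t ^ d ≤ (v' x + M) * t ^ d := by gcongr; exact h2 x
        linarith
      rw [le_sub_iff_add_le, le_div_iff₀ hpos] at this
      linarith
    have hnear : ∀ᶠ y in 𝓝 a, dist y a < R / 3 := Metric.eventually_nhds_iff.2 ⟨R / 3, by positivity, fun y hy => hy⟩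
    have hck : ContinuousAt (fun y => h y + M) a := by
      have c1 : ContinuousAt (fun y => ((R - 2 * dist y a) ^ d / (R - dist y a) ^ d) * (h a + M)) a := by
        refine ContinuousAt.mul (ContinuousAt.div (by fun_prop) (by fun_prop) ?_) continuousAt_const
        simp [hR.ne']
      have c2 : ContinuousAt (fun y => ((R - dist y a) ^ d / (R - 2 * dist y a) ^ d) * (h a + M)) a := by
        refine ContinuousAt.mul (ContinuousAt.div (by fun_prop) (by fun_prop) ?_) continuousAt_const
        simp [hR.ne']
      have c1' := c1.tendsto
      have c2' := c2.tendsto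
      simp only [dist_self, mul_zero, sub_zero, div_self (pow_ne_zero d hR.ne'), one_mul] at c1' c2'
      refine tendsto_of_tendsto_of_tendsto_of_le_of_le' c1' c2' ?_ ?_
      · filter_upwards [hnear, hΩ.mem_nhds ha] with y hy hyΩ
        have := key a y (R - 2 * dist y a) (dist y a) (by linarith) (by rw [dist_comm]) ha hyΩ
          (closedBall_subset_closedBall' (by linarith))
        have hpos : 0 < R - dist y a := by linarith [dist_nonneg (x := y) (y := a)]
        rw [div_mul_eq_mul_div, div_le_iff₀ (by positivity)]
        have e : R - 2 * dist y a + dist y a = R - dist y a := by ring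
        rw [e] at this
        linarith
      · filter_upwards [hnear, hΩ.mem_nhds ha] with y hy hyΩ
        have hpos : 0 < R - 2 * dist y a := by linarith
        have hn := dist_nonneg (x := y) (y := a)
        have := key y a (R - 2 * dist y a) (dist y a) hpos le_rfl hyΩ ha
          (closedBall_subset_closedBall (by linarith))
        rw [div_mul_eq_mul_div, le_div_iff₀ (by positivity)]
        have e : R - 2 * dist y a + dist y a = R - dist y a := by ring
        rw [e] at this
        linarith
    have := hck.sub (continuousAt_const (y := M))
    have e : ((fun y => h y + M) - fun _ => M) = h := by ext y; simp
    rwa [e] at this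
  have hcon : ContinuousOn h Ω := fun a ha => (hcont a ha).continuousWithinAt
  obtain ⟨v, hv, hvp⟩ := hex p ε hε
  refine ⟨h, v, ⟨hcon.neg, ?_⟩, fun x hx => hle s hsV x hx, fun x hx => hub x M fun v hv => hv.le x hx, hv, by linarith⟩
  intro x hx r hr hB
  rw [avg_neg, neg_le_neg_iff]
  refine le_of_forall_pos_le_add fun η hη => ?_
  have hcov : ∃ v, PV Ω s M v ∧ ∀ z ∈ closedBall x r, h z - η < v z := by
    refine (isCompact_closedBall x r).induction_on (p := fun S => ∃ v, PV Ω s M v ∧ ∀ z ∈ S, h z - η < v z) ?_ ?_ ?_ ?_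
    · exact ⟨s, hsV, by simp⟩
    · rintro S T hST ⟨v, hv, h1⟩; exact ⟨v, hv, fun z hz => h1 z (hST hz)⟩
    · rintro S T ⟨v, hv, h1⟩ ⟨w, hw, h2⟩
      refine ⟨_, hv.max hw, fun z hz => ?_⟩
      rcases hz with hz | hz
      · exact (h1 z hz).trans_le (le_max_left _ _)
      · exact (h2 z hz).trans_le (le_max_right _ _)
    · intro y hy
      obtain ⟨v, hv, hvy⟩ := hex y η hη
      have hyΩ := hB hy
      have hvc : ContinuousAt v y := hv.sub.1.continuousAt (hΩ.mem_nhds hyΩ)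
      have : ∀ᶠ z in 𝓝 y, h z - η < v z := 
        (((hcont y hyΩ).sub continuousAt_const).eventually_lt hvc hvy)
      exact ⟨_, mem_nhdsWithin_of_mem_nhds this, v, hv, fun z hz => hz⟩
  obtain ⟨w, hw, hwz⟩ := hcov
  obtain ⟨v', h1, h2, h3⟩ := hw.modif hd hΩ hr hB
  have h4 : ⨍ y in ball x r, h y ≤ ⨍ y in ball x r, (v' y + η) := by
    apply avg_mono (hcon.mono hB) ((h1.sub.1.mono hB).add continuousOn_const)
    intro y hy
    show h y ≤ v' y + η
    linarith [hwz y (ball_subset_closedBall hy), h2 y]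
  rw [avg_add (h1.sub.1.mono hB) continuousOn_const, avg_const _ _ hr, ← h3 x r hr subset_rfl] at h4
  linarith [hle v' h1 x hx]

/-- Bounded upper functions with the boundary condition in epsilon form. -/
def Up {d : ℕ} (Ω : Set (Euc d)) (f : Euc d → ℝ) : Set (Euc d → ℝ) :=
  {u | SubharmonicOn (fun y => - u y) Ω ∧ (∃ M, ∀ x ∈ Ω, |u x| ≤ M) ∧
    ∀ ξ ∈ frontier Ω, ∀ ε > 0, ∀ᶠ x in 𝓝[Ω] ξ, f ξ - ε < u x}

lemma up_sub {d : ℕ} {Ω : Set (Euc d)} {f : Euc d → ℝ} : Up Ω f ⊆ upperFamily Ω f := by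
  rintro u ⟨h1, ⟨M, hM⟩, h3⟩
  refine ⟨h1, ⟨-M, ?_⟩, fun ξ hξ => ?_⟩
  · rintro _ ⟨x, hx, rfl⟩; exact (abs_le.1 (hM x hx)).1
  · have hne : (𝓝[Ω] ξ).NeBot := mem_closure_iff_nhdsWithin_neBot.1 (frontier_subset_closure hξ)
    have hb : IsBoundedUnder (· ≤ ·) (𝓝[Ω] ξ) u := by
      refine ⟨M, ?_⟩
      rw [eventually_map]
      filter_upwards [self_mem_nhdsWithin] with x hx using (abs_le.1 (hM x hx)).2
    refine le_of_forall_pos_sub_le fun ε hε => ?_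
    exact le_liminf_of_le hb.isCoboundedUnder_ge ((h3 ξ hξ ε hε).mono fun x hx => hx.le)

lemma up_of_upper {d : ℕ} {Ω : Set (Euc d)} {E : Set (Euc d)} {u : Euc d → ℝ}
    (hu : u ∈ upperFamily Ω (E.indicator fun _ => 1)) :
    (fun x => min (u x) 1) ∈ Up Ω (E.indicator fun _ => 1) := by
  obtain ⟨h1, ⟨m, hm⟩, h3⟩ := hu
  have hmm : ∀ x ∈ Ω, m ≤ u x := fun x hx => hm ⟨x, hx, rfl⟩
  refine ⟨?_, ⟨max |m| 1, fun x hx => ?_⟩, fun ξ hξ ε hε => ?_⟩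
  · have hc : SubharmonicOn (fun _ => (-1 : ℝ)) Ω := 
      ⟨continuousOn_const, fun x _ r hr _ => by rw [avg_const _ _ hr]⟩
    have := h1.max hc
    have e : (fun y => - min (u y) 1) = fun y => max (- u y) (-1) := by
      ext y; rw [max_neg_neg]
    rw [e]; exact this
  · rw [abs_le]
    constructor
    · apply le_min
      · linarith [hmm x hx, neg_abs_le m, le_max_left |m| 1]
      · linarith [le_max_right |m| 1]
    · exact (min_le_right _ _).trans (le_max_right _ _)
  · have hi : E.indicator (fun _ => (1:ℝ)) ξ ≤ 1 := indicator_le_self' (by simp) ξ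
    have h4 := h3 ξ hξ
    rw [liminf_eq] at h4
    have hex : ∃ a, (∀ᶠ x in 𝓝[Ω] ξ, a ≤ u x) ∧ E.indicator (fun _ => (1:ℝ)) ξ - ε < a := by
      by_contra hcon
      push Not at hcon
      have : sSup {a | ∀ᶠ x in 𝓝[Ω] ξ, a ≤ u x} ≤ E.indicator (fun _ => (1:ℝ)) ξ - ε := by
        refine csSup_le ⟨m, ?_⟩ (fun a ha => hcon a ha)
        show ∀ᶠ x in 𝓝[Ω] ξ, m ≤ u x
        filter_upwards [self_mem_nhdsWithin] with x hx using hmm x hx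
      linarith
    obtain ⟨a, ha, ha2⟩ := hex
    filter_upwards [ha] with x hx
    exact lt_min (ha2.trans_le hx) (by linarith)

lemma SubharmonicOn.add {d : ℕ} {v w : Euc d → ℝ} {Ω : Set (Euc d)}
    (hv : SubharmonicOn v Ω) (hw : SubharmonicOn w Ω) : SubharmonicOn (fun x => v x + w x) Ω := by
  refine ⟨hv.1.add hw.1, fun x hx r hr hs => ?_⟩
  rw [avg_add (hv.1.mono hs) (hw.1.mono hs)]
  exact add_le_add (hv.2 x hx r hr hs) (hw.2 x hx r hr hs)

lemma SubharmonicOn.cmul {d : ℕ} {v : Euc d → ℝ} {Ω : Set (Euc d)} {c : ℝ} (hc : 0 ≤ c)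
    (hv : SubharmonicOn v Ω) : SubharmonicOn (fun x => c * v x) Ω := by
  refine ⟨continuousOn_const.mul hv.1, fun x hx r hr hs => ?_⟩
  rw [avg_cmul]
  exact mul_le_mul_of_nonneg_left (hv.2 x hx r hr hs) hc

lemma up_add {d : ℕ} {Ω : Set (Euc d)} {f g u w : Euc d → ℝ} (hu : u ∈ Up Ω f) (hw : w ∈ Up Ω g) :
    (fun x => u x + w x) ∈ Up Ω (fun x => f x + g x) := by
  obtain ⟨h1, ⟨M, hM⟩, h3⟩ := hu
  obtain ⟨k1, ⟨N, hN⟩, k3⟩ := hw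
  refine ⟨?_, ⟨M + N, fun x hx => (abs_add_le _ _).trans (add_le_add (hM x hx) (hN x hx))⟩, fun ξ hξ ε hε => ?_⟩
  · have := h1.add k1
    simpa only [neg_add] using this
  · filter_upwards [h3 ξ hξ (ε / 2) (by linarith), k3 ξ hξ (ε / 2) (by linarith)] with x h4 h5
    linarith

lemma up_cmul {d : ℕ} {Ω : Set (Euc d)} {f u : Euc d → ℝ} {c : ℝ} (hc : 0 < c) (hu : u ∈ Up Ω f) :
    (fun x => c * u x) ∈ Up Ω (fun x => c * f x) := by
  obtain ⟨h1, ⟨M, hM⟩, h3⟩ := hu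
  refine ⟨?_, ⟨c * M, fun x hx => ?_⟩, fun ξ hξ ε hε => ?_⟩
  · have := h1.cmul hc.le
    simpa only [mul_neg] using this
  · rw [abs_mul, abs_of_pos hc]; exact mul_le_mul_of_nonneg_left (hM x hx) hc.le
  · filter_upwards [h3 ξ hξ (ε / c) (by positivity)] with x h4
    have := mul_lt_mul_of_pos_left h4 hc
    rw [mul_sub, mul_div_cancel₀ _ hc.ne'] at this
    exact this

lemma up_mono {d : ℕ} {Ω : Set (Euc d)} {f g : Euc d → ℝ} (h : ∀ x, f x ≤ g x) : Up Ω g ⊆ Up Ω f := by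
  rintro u ⟨h1, h2, h3⟩
  refine ⟨h1, h2, fun ξ hξ ε hε => (h3 ξ hξ ε hε).mono fun x hx => ?_⟩
  linarith [h ξ]

lemma up_const {d : ℕ} {Ω : Set (Euc d)} (c : ℝ) : (fun _ => c) ∈ Up Ω (fun _ => c) := by
  refine ⟨⟨continuousOn_const, fun x _ r hr _ => by rw [avg_const _ _ hr]⟩, ⟨|c|, fun _ _ => le_rfl⟩,
    fun ξ hξ ε hε => Eventually.of_forall fun x => by linarith⟩

lemma up_sum {d : ℕ} {Ω : Set (Euc d)} {ι : Type*} (S : Finset ι) {f u : ι → Euc d → ℝ}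
    (h : ∀ i ∈ S, u i ∈ Up Ω (f i)) : (fun x => ∑ i ∈ S, u i x) ∈ Up Ω (fun x => ∑ i ∈ S, f i x) := by
  classical
  induction S using Finset.induction_on with
  | empty => simpa using up_const 0
  | insert i S hi ih =>
    simp only [Finset.sum_insert hi]
    exact up_add (h i (by simp)) (ih fun j hj => h j (by simp [hj]))

/-- minimum principle at the pole -/
def MinP {d : ℕ} (Ω : Set (Euc d)) (p : Euc d) : Prop := ∀ u ∈ Up Ω (fun _ => 0), 0 ≤ u p

lemma ind_nonneg {d : ℕ} (E : Set (Euc d)) (x : Euc d) : 0 ≤ E.indicator (fun _ => (1:ℝ)) x :=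
  indicator_nonneg (by simp) x
lemma ind_le {d : ℕ} (E : Set (Euc d)) (x : Euc d) : E.indicator (fun _ => (1:ℝ)) x ≤ 1 :=
  indicator_le_self' (by simp) x

lemma minP_of_pos {d : ℕ} {Ω : Set (Euc d)} {p : Euc d} {E : Set (Euc d)} (h : 0 < hMeasure Ω p E) : MinP Ω p := by
  intro u hu
  by_contra hneg
  push Not at hneg
  have : ¬ BddBelow ((fun u => u p) '' upperFamily Ω (E.indicator fun _ => 1)) := by
    rintro ⟨m, hm⟩
    have hk : ∀ k : ℝ, 0 < k → m ≤ 1 + k * u p := by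
      intro k hk
      have h1 := up_add (up_const (Ω := Ω) 1) (up_cmul hk hu)
      have h2 := up_sub (up_mono (f := E.indicator fun _ => 1) (fun x => by simpa using ind_le E x) h1)
      exact hm ⟨_, h2, rfl⟩
    have h1 := hk ((|m| + 2) / (- u p)) (by have := abs_nonneg m; have : 0 < - u p := by linarith
                                            positivity)
    have : (|m| + 2) / (- u p) * u p = - (|m| + 2) := by
      have := hneg.ne
      field_simp
    rw [this] at h1
    linarith [neg_abs_le m]
  have h0 : hMeasure Ω p E = 0 := Real.sInf_of_not_bddBelow this
  linarith

lemma hm_bdd {d : ℕ} {Ω : Set (Euc d)} {p : Euc d} (hp : MinP Ω p) (E : Set (Euc d)) :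
    ∀ t ∈ ((fun u => u p) '' upperFamily Ω (E.indicator fun _ => 1)), 0 ≤ t := by
  rintro _ ⟨u, hu, rfl⟩
  exact (hp _ (up_mono (fun x => ind_nonneg E x) (up_of_upper hu))).trans (min_le_left _ _)

lemma hm_le {d : ℕ} {Ω : Set (Euc d)} {p : Euc d} (hp : MinP Ω p) {E : Set (Euc d)} {u : Euc d → ℝ}
    (hu : u ∈ Up Ω (E.indicator fun _ => 1)) : hMeasure Ω p E ≤ u p :=
  csInf_le ⟨0, hm_bdd hp E⟩ ⟨u, up_sub hu, rfl⟩

lemma one_mem_up {d : ℕ} {Ω : Set (Euc d)} (E : Set (Euc d)) : (fun _ => (1:ℝ)) ∈ Up Ω (E.indicator fun _ => 1) :=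
  up_mono (fun x => ind_le E x) (up_const 1)

lemma hm_nonneg {d : ℕ} {Ω : Set (Euc d)} {p : Euc d} (hp : MinP Ω p) (E : Set (Euc d)) : 0 ≤ hMeasure Ω p E :=
  le_csInf ⟨_, _, up_sub (one_mem_up E), rfl⟩ (hm_bdd hp E)

lemma hm_le_one {d : ℕ} {Ω : Set (Euc d)} {p : Euc d} (hp : MinP Ω p) (E : Set (Euc d)) : hMeasure Ω p E ≤ 1 :=
  hm_le hp (one_mem_up E)

lemma hm_ex {d : ℕ} {Ω : Set (Euc d)} {p : Euc d} (E : Set (Euc d)) {ε : ℝ} (hε : 0 < ε) :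
    ∃ u ∈ Up Ω (E.indicator fun _ => 1), u p < hMeasure Ω p E + ε := by
  obtain ⟨_, ⟨u, hu, rfl⟩, h⟩ := exists_lt_of_csInf_lt (s := (fun u => u p) '' upperFamily Ω (E.indicator fun _ => 1))
    ⟨_, _, up_sub (one_mem_up E), rfl⟩ (show sInf _ < hMeasure Ω p E + ε by
      have : sInf ((fun u => u p) '' upperFamily Ω (E.indicator fun _ => 1)) = hMeasure Ω p E := rfl
      linarith)
  exact ⟨_, up_of_upper hu, (min_le_left _ _).trans_lt h⟩

lemma hm_mono {d : ℕ} {Ω : Set (Euc d)} {p : Euc d} (hp : MinP Ω p) {E F : Set (Euc d)} (h : E ⊆ F) :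
    hMeasure Ω p E ≤ hMeasure Ω p F := by
  refine le_of_forall_pos_le_add fun ε hε => ?_
  obtain ⟨u, hu, h2⟩ := hm_ex (Ω := Ω) (p := p) F hε
  exact (hm_le hp (up_mono (fun x => indicator_le_indicator_of_subset h (fun _ => zero_le_one) x) hu)).trans h2.le

lemma hm_union {d : ℕ} {Ω : Set (Euc d)} {p : Euc d} (hp : MinP Ω p) (E F : Set (Euc d)) :
    hMeasure Ω p (E ∪ F) ≤ hMeasure Ω p E + hMeasure Ω p F := by
  refine le_of_forall_pos_le_add fun ε hε => ?_
  obtain ⟨u, hu, h2⟩ := hm_ex (Ω := Ω) (p := p) E (half_pos hε)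
  obtain ⟨w, hw, h3⟩ := hm_ex (Ω := Ω) (p := p) F (half_pos hε)
  have := hm_le hp (up_mono (f := (E ∪ F).indicator fun _ => 1) (fun x => ?_) (up_add hu hw))
  · linarith
  · by_cases h1 : x ∈ E <;> by_cases h2 : x ∈ F <;> simp [h1, h2]

lemma hm_biUnion {d : ℕ} {Ω : Set (Euc d)} {p : Euc d} (hp : MinP Ω p) {ι : Type*} (S : Finset ι) (hS : S.Nonempty) 
    (E : ι → Set (Euc d)) : hMeasure Ω p (⋃ i ∈ S, E i) ≤ ∑ i ∈ S, hMeasure Ω p (E i) := by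
  classical
  induction hS using Finset.Nonempty.cons_induction with
  | singleton i => simp
  | cons i S hi hS ih =>
    rw [Finset.sum_cons]
    simp only [Finset.mem_cons, iUnion_iUnion_eq_or_left]
    exact (hm_union hp _ _).trans (by linarith)

/-- resolutive-type data at the pole -/
def Wr {d : ℕ} (Ω : Set (Euc d)) (p : Euc d) (f : Euc d → ℝ) : Prop :=
  ∀ ε > 0, ∃ u ∈ Up Ω f, ∃ w ∈ Up Ω (fun x => - f x), u p + w p ≤ ε

lemma wr_add {d : ℕ} {Ω : Set (Euc d)} {p : Euc d} {f g : Euc d → ℝ} (hf : Wr Ω p f) (hg : Wr Ω p g) :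
    Wr Ω p (fun x => f x + g x) := by
  intro ε hε
  obtain ⟨u, hu, w, hw, h⟩ := hf (ε / 2) (by linarith)
  obtain ⟨u', hu', w', hw', h'⟩ := hg (ε / 2) (by linarith)
  refine ⟨_, up_add hu hu', _, up_mono (fun x => ?_) (up_add hw hw'), by linarith⟩
  linarith

lemma wr_neg {d : ℕ} {Ω : Set (Euc d)} {p : Euc d} {f : Euc d → ℝ} (hf : Wr Ω p f) :
    Wr Ω p (fun x => - f x) := by
  intro ε hε
  obtain ⟨u, hu, w, hw, h⟩ := hf ε hε
  refine ⟨w, hw, u, by simpa using hu, by linarith⟩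

lemma wr_cmul {d : ℕ} {Ω : Set (Euc d)} {p : Euc d} {f : Euc d → ℝ} {c : ℝ} (hc : 0 < c) (hf : Wr Ω p f) :
    Wr Ω p (fun x => c * f x) := by
  intro ε hε
  obtain ⟨u, hu, w, hw, h⟩ := hf (ε / c) (by positivity)
  refine ⟨_, up_cmul hc hu, _, up_mono (fun x => ?_) (up_cmul hc hw), ?_⟩
  · linarith
  · rw [le_div_iff₀ hc] at h; linarith

theorem wr_sub {d : ℕ} (hd : 0 < d) {Ω : Set (Euc d)} (hΩ : IsOpen Ω) {s : Euc d → ℝ} {M : ℝ}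
    (hsc : Continuous s) (hs : SubharmonicOn s Ω) (hsM : ∀ x, |s x| ≤ M) {p : Euc d} (hp : p ∈ Ω) : Wr Ω p s := by
  intro ε hε
  obtain ⟨h, v, h1, h2, h3, hv, h4⟩ := perron_sup hd hΩ hsc hs hsM hp hε
  refine ⟨h, ⟨h1, ⟨M, fun x hx => abs_le.2 ⟨?_, h3 x hx⟩⟩, fun ξ hξ ε hε => ?_⟩, fun x => - v x, 
    ⟨?_, ⟨M, fun x hx => ?_⟩, fun ξ hξ ε hε => ?_⟩, by linarith⟩
  · linarith [(abs_le.1 (hsM x)).1, h2 x hx]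
  · have : ∀ᶠ x in 𝓝[Ω] ξ, s ξ - ε < s x := mem_nhdsWithin_of_mem_nhds (hsc.continuousAt.eventually (lt_mem_nhds (show s ξ - ε < s ξ by linarith)))
    filter_upwards [this, self_mem_nhdsWithin] with x hx hx2
    exact lt_of_lt_of_le hx (h2 x hx2)
  · simpa using hv.sub
  · rw [abs_neg, abs_le]
    exact ⟨by linarith [(abs_le.1 (hsM x)).1, hv.ge x hx], hv.le x hx⟩
  · filter_upwards [hv.bd ξ hξ ε hε] with x hx
    linarith

theorem superadd_aux {d : ℕ} {Ω : Set (Euc d)} {p : Euc d} (hp : MinP Ω p) {ι : Type*} (S : Finset ι)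
    (E : ι → Set (Euc d)) (φ : ι → Euc d → ℝ) (hφ : ∀ i ∈ S, Wr Ω p (φ i))
    (hE : ∀ i ∈ S, ∀ x, (E i).indicator (fun _ => (1:ℝ)) x ≤ φ i x) (hs : ∀ x, ∑ i ∈ S, φ i x ≤ 1) :
    ∑ i ∈ S, hMeasure Ω p (E i) ≤ 1 := by
  refine le_of_forall_pos_le_add fun ε hε => ?_
  set η := ε / (S.card + 1) with hη
  have hη0 : 0 < η := by positivity
  have : ∀ i, ∃ u w, i ∈ S → u ∈ Up Ω (φ i) ∧ w ∈ Up Ω (fun x => - φ i x) ∧ u p + w p ≤ η := by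
    intro i
    by_cases hi : i ∈ S
    · obtain ⟨u, hu, w, hw, h⟩ := hφ i hi η hη0
      exact ⟨u, w, fun _ => ⟨hu, hw, h⟩⟩
    · exact ⟨0, 0, fun h => absurd h hi⟩
  choose u w huw using this
  have h1 := up_add (up_const (Ω := Ω) 1) (up_sum S (fun i hi => (huw i hi).2.1))
  have h2 := hp _ (up_mono (f := fun _ => 0) (fun x => by
    rw [Finset.sum_neg_distrib]; linarith [hs x]) h1)
  have h3 : ∑ i ∈ S, hMeasure Ω p (E i) ≤ ∑ i ∈ S, (η - w i p) := by
    apply Finset.sum_le_sum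
    intro i hi
    have := hm_le hp (up_mono (hE i hi) (huw i hi).1)
    linarith [(huw i hi).2.2]
  rw [Finset.sum_sub_distrib, Finset.sum_const, nsmul_eq_mul] at h3
  have h4 : (S.card : ℝ) * η ≤ ε := by
    rw [hη, mul_div_assoc', div_le_iff₀ (by positivity)]; nlinarith
  linarith

/-- the function r^2 + |x-z|^2 -/
def qf {d : ℕ} (z : Euc d) (r : ℝ) (x : Euc d) : ℝ := pev (MvPolynomial.C (2 * r ^ 2) - prho z r) x

lemma qf_eq {d : ℕ} (z : Euc d) (r : ℝ) (x : Euc d) : qf z r x = r ^ 2 + dist x z ^ 2 := by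
  rw [qf, pev_sub, pev_prho]; simp [pev]; ring

lemma qf_pos {d : ℕ} (z : Euc d) {r : ℝ} (hr : 0 < r) (x : Euc d) : 0 < qf z r x := by
  rw [qf_eq]; positivity

lemma qf_pderiv {d : ℕ} (z : Euc d) (r : ℝ) (i : Fin d) (x : Euc d) :
    pev (MvPolynomial.pderiv i (MvPolynomial.C (2 * r ^ 2) - prho z r)) x = 2 * (x i - z i) := by
  simp only [prho, map_sub, map_sum, Derivation.leibniz_pow, MvPolynomial.pderiv_C, MvPolynomial.pderiv_X, pev]
  simp only [map_sub, map_neg, map_sum, Pi.single_apply]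
  rw [Finset.sum_eq_single i]
  · simp
  · intro b _ hb
    simp [hb]
  · simp

lemma qf_lineDeriv {d : ℕ} (z : Euc d) (r : ℝ) (i : Fin d) (x : Euc d) :
    HasLineDerivAt ℝ (qf z r) (2 * (x i - z i)) x (EuclideanSpace.single i 1) := by
  rw [← qf_pderiv z r i x]; exact pev_lineDeriv _ i x

lemma qf_fderiv {d : ℕ} (z : Euc d) (r : ℝ) (x : Euc d) :
    HasFDerivAt (qf z r) (∑ i, (2 * (x i - z i)) • (EuclideanSpace.proj i : Euc d →L[ℝ] ℝ)) x := by
  have := pev_hasFDeriv (MvPolynomial.C (2 * r ^ 2) - prho z r) x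
  simp only [qf_pderiv] at this
  exact this

lemma qf_contDiff {d : ℕ} (z : Euc d) (r : ℝ) : ContDiff ℝ 1 (qf z r) := pev_contDiff _
lemma qf_cont {d : ℕ} (z : Euc d) (r : ℝ) : Continuous (qf z r) := pev_cont _

/-- negative of the kernel is subharmonic -/
lemma kern_sub {d : ℕ} (hd : 3 ≤ d) (z : Euc d) {r : ℝ} (hr : 0 < r) :
    SubharmonicOn (fun x => - (qf z r x) ^ (-(1/2) : ℝ)) univ := by
  have hq := fun x => (qf_pos z hr x)
  have hqn := fun x => (hq x).ne'
  have hcp : ∀ e : ℝ, Continuous (fun x => (qf z r x) ^ e) := fun e =>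
    (qf_cont z r).rpow_const (fun x => Or.inl (hqn x))
  refine ⟨(hcp _).neg.continuousOn, fun x _ ρ hρ _ => ?_⟩
  refine mvp_C2 (by omega) (fun x => - (qf z r x) ^ (-(1/2) : ℝ)) (fun i y => (y i - z i) * (qf z r y) ^ (-(3/2) : ℝ))
    (fun i y => (qf z r y) ^ (-(3/2) : ℝ) - 3 * (y i - z i) ^ 2 * (qf z r y) ^ (-(5/2) : ℝ)) ?_ ?_ ?_ ?_ x ρ hρ ?_
  · intro i
    have h1 : ContDiff ℝ 1 (fun y : Euc d => y i - z i) := by fun_prop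
    exact h1.mul ((qf_contDiff z r).rpow_const_of_ne hqn)
  · intro y
    have h := ((qf_fderiv z r y).rpow_const (p := (-(1/2) : ℝ)) (Or.inl (hqn y))).neg
    convert! h using 1
    rw [Finset.smul_sum, ← Finset.sum_neg_distrib]
    refine Finset.sum_congr rfl fun i _ => ?_
    rw [smul_smul, ← neg_smul]
    congr 1
    have : (-(1/2) : ℝ) - 1 = -(3/2) := by norm_num
    rw [this]; ring
  · intro i y
    have h2 : HasLineDerivAt ℝ (fun y : Euc d => y i - z i) 1 y (EuclideanSpace.single i 1) := by
      have h3 : HasFDerivAt (fun x : Euc d => x i - z i) (EuclideanSpace.proj i : Euc d →L[ℝ] ℝ) y :=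
        ((EuclideanSpace.proj i : Euc d →L[ℝ] ℝ).hasFDerivAt).sub_const _
      convert! h3.hasLineDerivAt (EuclideanSpace.single i 1) using 1
      simp
    have h1 := qf_lineDeriv z r i y
    unfold HasLineDerivAt at h1 h2 ⊢
    have h4 := h2.mul (h1.rpow_const (p := (-(3/2) : ℝ)) (Or.inl (hqn _)))
    convert! h4 using 1
    simp only [zero_smul, add_zero]
    have : (-(3/2) : ℝ) - 1 = -(5/2) := by norm_num
    rw [this]; ring
  · intro i
    exact (hcp _).sub ((by fun_prop : Continuous fun y : Euc d => 3 * (y i - z i) ^ 2).mul (hcp _))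
  · intro y
    have e1 : (qf z r y) ^ (-(3/2) : ℝ) = qf z r y * (qf z r y) ^ (-(5/2) : ℝ) := by
      have : (-(3/2) : ℝ) = 1 + -(5/2) := by norm_num
      rw [this, Real.rpow_add (hq y), Real.rpow_one]
    have e2 : dist y z ^ 2 = ∑ i, (y i - z i) ^ 2 := by
      rw [EuclideanSpace.dist_eq, Real.sq_sqrt (Finset.sum_nonneg (fun i _ => sq_nonneg _))]
      simp [Real.dist_eq, sq_abs]
    rw [Finset.sum_sub_distrib, Finset.sum_const, ← Finset.sum_mul, ← Finset.mul_sum, ← e2, e1]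
    simp only [Finset.card_univ, Fintype.card_fin, nsmul_eq_mul]
    have h5 : 0 < (qf z r y) ^ (-(5/2) : ℝ) := Real.rpow_pos_of_pos (hq y) _
    have h6 : (3:ℝ) ≤ d := by exact_mod_cast hd
    have h7 : 0 ≤ (d:ℝ) * qf z r y - 3 * dist y z ^ 2 := by
      rw [qf_eq]; nlinarith [sq_nonneg r, sq_nonneg (dist y z)]
    nlinarith

lemma SubharmonicOn.mono {d : ℕ} {v : Euc d → ℝ} {U Ω : Set (Euc d)}
    (hv : SubharmonicOn v U) (h : Ω ⊆ U) : SubharmonicOn v Ω :=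
  ⟨hv.1.mono h, fun x hx r hr hs => hv.2 x (h hx) r hr (hs.trans h)⟩

lemma wr_min {d : ℕ} (hd : 3 ≤ d) {Ω : Set (Euc d)} (hΩ : IsOpen Ω) {p : Euc d} (hp : p ∈ Ω) (z : Euc d) {r : ℝ} (hr : 0 < r)
    {a : ℝ} (ha : 0 ≤ a) : Wr Ω p (fun x => min ((qf z r x) ^ (-(1/2) : ℝ)) a) := by
  have hs : SubharmonicOn (fun x => max (- (qf z r x) ^ (-(1/2) : ℝ)) (-a)) Ω :=
    ((kern_sub hd z hr).mono (subset_univ _)).max 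
      ⟨continuousOn_const, fun x _ r hr _ => by rw [avg_const _ _ hr]⟩
  have hc : Continuous (fun x => max (- (qf z r x) ^ (-(1/2) : ℝ)) (-a)) :=
    ((qf_cont z r).rpow_const (fun x => Or.inl (qf_pos z hr x).ne')).neg.max continuous_const
  have := wr_neg (wr_sub (by omega) hΩ (M := a) hc hs (fun x => ?_) hp)
  · simpa only [max_neg_neg, neg_neg] using this
  · rw [max_neg_neg, abs_neg, abs_of_nonneg]
    · exact min_le_right _ _
    · exact le_min (Real.rpow_nonneg (qf_pos z hr x).le _) ha

lemma bump {d : ℕ} (hd : 3 ≤ d) {Ω : Set (Euc d)} (hΩ : IsOpen Ω) {p : Euc d} (hp : p ∈ Ω) (z : Euc d) {r : ℝ} (hr : 0 < r) :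
    ∃ φ : Euc d → ℝ, Wr Ω p φ ∧ (∀ x, 0 ≤ φ x) ∧ (∀ x, φ x ≤ 1) ∧ (∀ x ∈ closedBall z r, φ x = 1) ∧
      (∀ x, x ∉ closedBall z (2 * r) → φ x = 0) := by
  set a := (2 * r ^ 2) ^ (-(1/2) : ℝ) with ha
  set b := (5 * r ^ 2) ^ (-(1/2) : ℝ) with hb
  have hb0 : 0 < b := Real.rpow_pos_of_pos (by positivity) _
  have hab : b < a := Real.rpow_lt_rpow_of_neg (by positivity) (by nlinarith [sq_pos_of_pos hr]) (by norm_num)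
  have hc : 0 < (a - b)⁻¹ := inv_pos.2 (by linarith)
  refine ⟨fun x => (a - b)⁻¹ * (min ((qf z r x) ^ (-(1/2) : ℝ)) a + - min ((qf z r x) ^ (-(1/2) : ℝ)) b), 
    wr_cmul hc (wr_add (wr_min hd hΩ hp z hr (hb0.trans hab).le) (wr_neg (wr_min hd hΩ hp z hr hb0.le))), ?_, ?_, ?_, ?_⟩
  · intro x
    refine mul_nonneg hc.le ?_
    have : min ((qf z r x) ^ (-(1/2) : ℝ)) b ≤ min ((qf z r x) ^ (-(1/2) : ℝ)) a := min_le_min_left _ hab.le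
    linarith
  · intro x
    rw [inv_mul_le_iff₀ (by linarith), mul_one]
    rcases le_total ((qf z r x) ^ (-(1/2) : ℝ)) b with h | h
    · rw [min_eq_left h, min_eq_left (h.trans hab.le)]; linarith
    · rw [min_eq_right h]; linarith [min_le_right ((qf z r x) ^ (-(1/2) : ℝ)) a]
  · intro x hx
    have h1 : dist x z ≤ r := hx
    have h2 : a ≤ (qf z r x) ^ (-(1/2) : ℝ) := by
      apply Real.rpow_le_rpow_of_nonpos (qf_pos z hr x) _ (by norm_num)
      rw [qf_eq]; nlinarith [dist_nonneg (x := x) (y := z)]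
    beta_reduce
    rw [min_eq_right h2, min_eq_right (hab.le.trans h2), ← sub_eq_add_neg]
    exact inv_mul_cancel₀ (by linarith)
  · intro x hx
    have h1 : 2 * r < dist x z := not_le.1 hx
    have h2 : (qf z r x) ^ (-(1/2) : ℝ) ≤ b := by
      apply Real.rpow_le_rpow_of_nonpos (by positivity) _ (by norm_num)
      rw [qf_eq]; nlinarith
    beta_reduce
    rw [min_eq_left h2, min_eq_left (h2.trans hab.le)]; simp

theorem superadd {d : ℕ} (hd : 3 ≤ d) {Ω : Set (Euc d)} (hΩ : IsOpen Ω) {p : Euc d} (hpΩ : p ∈ Ω) (hp : MinP Ω p) {ι : Type*} (S : Finset ι)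
    (E : ι → Set (Euc d)) (z : ι → Euc d) (r : ι → ℝ) (hr : ∀ i ∈ S, 0 < r i) (hE : ∀ i ∈ S, E i ⊆ closedBall (z i) (r i))
    (hdis : (S : Set ι).PairwiseDisjoint fun i => closedBall (z i) (2 * r i)) :
    ∑ i ∈ S, hMeasure Ω p (E i) ≤ 1 := by
  classical
  have : ∀ i, ∃ φ : Euc d → ℝ, i ∈ S → (Wr Ω p φ ∧ (∀ x, 0 ≤ φ x) ∧ (∀ x, φ x ≤ 1) ∧ (∀ x ∈ closedBall (z i) (r i), φ x = 1) ∧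
      (∀ x, x ∉ closedBall (z i) (2 * r i) → φ x = 0)) := by
    intro i
    by_cases hi : i ∈ S
    · obtain ⟨φ, h⟩ := bump hd hΩ hpΩ (z i) (hr i hi)
      exact ⟨φ, fun _ => h⟩
    · exact ⟨0, fun h => absurd h hi⟩
  choose φ hφ using this
  apply superadd_aux hp S E φ (fun i hi => (hφ i hi).1)
  · intro i hi x
    by_cases hx : x ∈ E i
    · rw [indicator_of_mem hx, (hφ i hi).2.2.2.1 x (hE i hi hx)]
    · rw [indicator_of_notMem hx]; exact (hφ i hi).2.1 x
  · intro x
    by_cases h : ∃ i ∈ S, x ∈ closedBall (z i) (2 * r i)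
    · obtain ⟨i, hi, hx⟩ := h
      rw [Finset.sum_eq_single_of_mem i hi]
      · exact (hφ i hi).2.2.1 x
      · intro j hj hji
        apply (hφ j hj).2.2.2.2 x
        intro hxj
        exact (Set.disjoint_left.1 (hdis hj hi hji) hxj) hx
    · push Not at h
      rw [Finset.sum_eq_zero fun i hi => (hφ i hi).2.2.2.2 x (h i hi)]
      exact zero_le_one

lemma max_disj {n : ℕ} {F : Set (Euc (n+1))} {μ : Measure (Euc (n+1))} {Cl : ℝ}
    (L : DSLattice n F μ Cl) (P : Cube n → Prop) (hP : ∀ q, P q → L.mem q) {q q' : Cube n}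
    (h : MaximalWith L P q) (h' : MaximalWith L P q') (hne : q ≠ q') : Disjoint q.2 q'.2 := by
  have key : ∀ q q' : Cube n, MaximalWith L P q → MaximalWith L P q' → q.1 < q'.1 →
      Disjoint q.2 q'.2 := by
    intro q q' h h' hlt
    by_contra hd
    rw [Set.not_disjoint_iff] at hd
    obtain ⟨x, hx, hx'⟩ := hd
    exact h'.2 q (hP q h.1) hlt (L.nested _ _ hlt.le _ (hP q' h'.1) _ (hP q h.1) ⟨x, hx', hx⟩) h.1
  rcases lt_trichotomy q.1 q'.1 with hl | he | hl
  · exact key q q' h h' hl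
  · have m' := hP q' h'.1
    unfold DSLattice.mem at m'
    rw [← he] at m'
    refine L.disj _ _ (hP q h.1) _ m' fun h2 => hne (Prod.ext he h2)
  · exact (key q' q h' h hl).symm

lemma disj_family {X : Type*} [MeasurableSpace X] {μ : Measure X} {ι : Type*} {As : ι → Set X} {R : Set X}
    (hm : ∀ i, MeasurableSet (As i)) (hd : Pairwise (Function.onFun Disjoint As)) (hpos : ∀ i, 0 < μ (As i))
    (hs : ∀ i, As i ⊆ R) (hR : μ R ≠ ⊤) :
    Countable ι ∧ ∑' i, μ (As i) ≤ μ R ∧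
    ∀ δ : ENNReal, 0 < δ → ∃ S : Finset ι, MeasurableSet (⋃ i : {i // i ∉ S}, As i) ∧ μ (⋃ i : {i // i ∉ S}, As i) ≤ δ := by
  have hc : Countable ι := by
    haveI : IsFiniteMeasure (μ.restrict R) := ⟨by simpa using hR.lt_top⟩
    have := Measure.countable_meas_pos_of_disjoint_iUnion (μ := μ.restrict R) hm hd
    have e : {i | 0 < (μ.restrict R) (As i)} = univ := by
      ext i
      simp only [mem_setOf_eq, mem_univ, iff_true]
      rw [Measure.restrict_eq_self _ (hs i)]; exact hpos i
    rw [e] at this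
    exact Set.countable_univ_iff.1 this
  have ht : ∑' i, μ (As i) ≤ μ R :=
    (tsum_meas_le_meas_iUnion_of_disjoint μ hm hd).trans (measure_mono (iUnion_subset hs))
  refine ⟨hc, ht, fun δ hδ => ?_⟩
  have h1 := ENNReal.tendsto_tsum_compl_atTop_zero (f := fun i => μ (As i)) (ne_top_of_le_ne_top hR ht)
  obtain ⟨S, hS⟩ := (h1.eventually (gt_mem_nhds hδ)).exists
  exact ⟨S, MeasurableSet.iUnion fun i => hm i, (measure_iUnion_le _).trans hS.le⟩

lemma sideLen_pos {n : ℕ} (q : Cube n) : 0 < sideLen q := by unfold sideLen; positivity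

lemma cube_sub_ball {n : ℕ} {F : Set (Euc (n+1))} {μ : Measure (Euc (n+1))} {Cl : ℝ}
    (L : DSLattice n F μ Cl) {q : Cube n} (hq : L.mem q) {x : Euc (n+1)} (hx : x ∈ q.2) :
    dist x (L.center q.2) ≤ sideLen q := by
  have h1 := Metric.edist_le_ediam_of_mem hx (L.center_mem _ _ hq)
  have h2 := h1.trans (L.diam_le _ _ hq)
  rw [edist_dist] at h2
  exact (ENNReal.ofReal_le_ofReal_iff (sideLen_pos q).le).1 h2

lemma cube_pos {n : ℕ} {F : Set (Euc (n+1))} {μ : Measure (Euc (n+1))} {Cl : ℝ}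
    (L : DSLattice n F μ Cl) {q : Cube n} (hq : L.mem q) : 0 < μ q.2 := by
  refine lt_of_lt_of_le ?_ (L.measure_lb _ _ hq)
  have := L.one_le_Cl
  rw [ENNReal.ofReal_pos]; positivity

lemma cube_fin {n : ℕ} {F : Set (Euc (n+1))} {μ : Measure (Euc (n+1))} {Cl : ℝ}
    (L : DSLattice n F μ Cl) {q : Cube n} (hq : L.mem q) : μ q.2 ≠ ⊤ :=
  ne_top_of_le_ne_top ENNReal.ofReal_ne_top (L.measure_ub _ _ hq)

lemma sum_toReal_le {X : Type*} [MeasurableSpace X] {μ : Measure X} {ι : Type*} {As : ι → Set X} {R : Set X}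
    (h : ∑' i, μ (As i) ≤ μ R) (hR : μ R ≠ ⊤) (S : Finset ι) : ∑ i ∈ S, (μ (As i)).toReal ≤ (μ R).toReal := by
  rw [← ENNReal.toReal_sum]
  · exact ENNReal.toReal_mono hR ((ENNReal.sum_le_tsum S).trans h)
  · intro i _
    exact ne_top_of_le_ne_top hR ((ENNReal.le_tsum i).trans h)

theorem ld_part {n : ℕ} {Ω : Set (Euc (n+1))} {μ : Measure (Euc (n+1))} {Cl : ℝ}
    (hμ : μ = (μH[n]).restrict (frontier Ω)) (L : DSLattice n (frontier Ω) μ Cl) (R₀ : Cube n) (p : Euc (n+1))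
    (hR : L.mem R₀) (hp : MinP Ω p) {D : ℝ → ℝ} (hD : WeakAInftyBallWith n Ω p (L.center R₀.2) (4 * sideLen R₀) D)
    {A : ℝ} (hA : 1 ≤ A) : hMeasure Ω p (BLset Ω μ L p R₀ A) ≤ A⁻¹ * hMeasure Ω p R₀.2 := by
  classical
  have hA0 : 0 < A := by linarith
  have hle : ∀ s, μ s ≤ μH[n] s := fun s => by rw [hμ]; exact Measure.restrict_apply_le _ _
  have heq : ∀ s, s ⊆ frontier Ω → μ s = μH[n] s := fun s hs => by rw [hμ, Measure.restrict_eq_self _ hs]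
  set T := LDfam Ω μ L p R₀ A with hT
  have hmem : ∀ q : T, L.mem q.1 := fun q => q.2.1.1
  have hsub : ∀ q : T, q.1.2 ⊆ R₀.2 := fun q => q.2.1.2.1
  have hdens : ∀ q : T, hMeasure Ω p q.1.2 / (μ q.1.2).toReal ≤ A⁻¹ * (hMeasure Ω p R₀.2 / (μ R₀.2).toReal) :=
    fun q => q.2.1.2.2
  obtain ⟨_, hts, htail⟩ := disj_family (μ := μ) (As := fun q : T => q.1.2) (R := R₀.2)
    (fun q => L.measurableSet _ _ (hmem q))
    (fun q q' hne => max_disj L _ (fun q h => h.1) q.2 q'.2 (fun h => hne (Subtype.ext h)))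
    (fun q => cube_pos L (hmem q)) hsub (cube_fin L hR)
  have hR0 : 0 < (μ R₀.2).toReal := ENNReal.toReal_pos (cube_pos L hR).ne' (cube_fin L hR)
  have hω0 := hm_nonneg hp R₀.2
  apply le_of_forall_pos_lt_add
  intro ε hε
  set ε' := min (ε / 2) (1/2) with hε'
  have hε0 : 0 < ε' := lt_min (by linarith) (by norm_num)
  have hε1 : ε' < 1 := (min_le_right _ _).trans_lt (by norm_num)
  have hε2 : ε' < ε := (min_le_left _ _).trans_lt (by linarith)
  obtain ⟨hDε, hw⟩ := hD ε' ⟨hε0, hε1⟩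
  have hR0b : R₀.2 ⊆ ball (L.center R₀.2) (4 * sideLen R₀) ∩ frontier Ω := by
    intro x hx
    refine ⟨?_, L.subset_F _ _ hR hx⟩
    have := cube_sub_ball L hR hx
    rw [mem_ball]; linarith [sideLen_pos R₀]
  have hbpos : 0 < μH[n] (ball (L.center R₀.2) (4 * sideLen R₀) ∩ frontier Ω) := by
    exact lt_of_lt_of_le (cube_pos L hR) ((hle _).trans (measure_mono hR0b))
  obtain ⟨S, hSm, hS⟩ := htail (ENNReal.ofReal (D ε') * μH[n] (ball (L.center R₀.2) (4 * sideLen R₀) ∩ frontier Ω))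
    (ENNReal.mul_pos (ENNReal.ofReal_pos.2 hDε.1).ne' hbpos.ne')
  set tail := ⋃ i : {i // i ∉ S}, (i.1.1.2 : Set (Euc (n+1))) with htl
  have htb : tail ⊆ ball (L.center R₀.2) (4 * sideLen R₀) ∩ frontier Ω :=
    iUnion_subset fun i => (hsub _).trans hR0b
  have hwt : hMeasure Ω p tail ≤ ε' := by
    have h1 := hw tail hSm htb (by
      refine le_trans (le_of_eq ?_) hS
      exact (heq _ (htb.trans inter_subset_right)).symm)
    refine h1.trans ?_
    have := hm_le_one hp (ball (L.center R₀.2) (2 * (4 * sideLen R₀)))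
    nlinarith
  have hBL : BLset Ω μ L p R₀ A ⊆ (⋃ i ∈ S, i.1.2) ∪ tail := by
    intro x hx
    simp only [BLset, mem_iUnion] at hx
    obtain ⟨q, hq, hx⟩ := hx
    by_cases hqS : (⟨q, hq⟩ : T) ∈ S
    · left; simp only [mem_iUnion]; exact ⟨_, hqS, hx⟩
    · right; exact mem_iUnion.2 ⟨⟨_, hqS⟩, hx⟩
  rcases S.eq_empty_or_nonempty with hSe | hSn
  · have : BLset Ω μ L p R₀ A ⊆ tail := by
      refine hBL.trans ?_
      rw [hSe]; simp
    have h3 : 0 ≤ A⁻¹ * hMeasure Ω p R₀.2 := by positivity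
    linarith [hm_mono hp this]
  · have h1 := (hm_mono hp hBL).trans (hm_union hp _ _)
    have h2 := hm_biUnion hp S hSn (fun i : T => i.1.2)
    have h3 : ∑ i ∈ S, hMeasure Ω p i.1.2 ≤ ∑ i ∈ S, A⁻¹ * (hMeasure Ω p R₀.2 / (μ R₀.2).toReal) * (μ i.1.2).toReal := by
      refine Finset.sum_le_sum fun i _ => ?_
      exact (div_le_iff₀ (ENNReal.toReal_pos (cube_pos L (hmem i)).ne' (cube_fin L (hmem i)))).1 (hdens i)
    rw [← Finset.mul_sum] at h3
    have h4 := sum_toReal_le (μ := μ) (As := fun q : T => q.1.2) hts (cube_fin L hR) S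
    have h5 : A⁻¹ * (hMeasure Ω p R₀.2 / (μ R₀.2).toReal) * ∑ i ∈ S, (μ i.1.2).toReal ≤
        A⁻¹ * (hMeasure Ω p R₀.2 / (μ R₀.2).toReal) * (μ R₀.2).toReal :=
      mul_le_mul_of_nonneg_left h4 (by positivity)
    have h6 : A⁻¹ * (hMeasure Ω p R₀.2 / (μ R₀.2).toReal) * (μ R₀.2).toReal = A⁻¹ * hMeasure Ω p R₀.2 := by
      rw [mul_assoc, div_mul_cancel₀ _ hR0.ne']
    linarith

lemma sep_card {d : ℕ} {x : Euc d} {D : ℝ} (hD : 0 < D) (s : Finset (Euc d)) (hx : ∀ a ∈ s, dist a x ≤ D)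
    (hs : ∀ a ∈ s, ∀ b ∈ s, a ≠ b → D ≤ dist a b) : s.card ≤ 5 ^ d := by
  classical
  have hinj : Function.Injective (fun c : Euc d => D⁻¹ • (c - x)) := by
    intro a b h
    have := smul_right_injective (Euc d) (inv_ne_zero hD.ne') h
    simpa using this
  have h := Besicovitch.card_le_of_separated (s.image (fun c : Euc d => D⁻¹ • (c - x))) ?_ ?_
  · rw [Finset.card_image_of_injective _ hinj] at h
    simpa using h
  · intro c hc
    obtain ⟨a, ha, rfl⟩ := Finset.mem_image.1 hc
    rw [norm_smul, ← dist_eq_norm, Real.norm_of_nonneg (by positivity), inv_mul_le_iff₀ hD]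
    linarith [hx a ha]
  · intro c hc c' hc' hne
    obtain ⟨a, ha, rfl⟩ := Finset.mem_image.1 hc
    obtain ⟨b, hb, rfl⟩ := Finset.mem_image.1 hc'
    rw [← smul_sub, sub_sub_sub_cancel_right, norm_smul, ← dist_eq_norm, Real.norm_of_nonneg (by positivity),
      le_inv_mul_iff₀ hD, mul_one]
    exact hs a ha b hb (fun h => hne (by rw [h]))

lemma ad_ub {n : ℕ} (hn : 1 ≤ n) {C₀ : ℝ} (hC₀ : 1 ≤ C₀) {F : Set (Euc (n+1))} (hF : ADRegular n C₀ F)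
    {x : Euc (n+1)} (hx : x ∈ F) {r : ℝ} (hr : 0 < r) :
    μH[n] (F ∩ ball x r) ≤ ENNReal.ofReal (5 ^ (n+1) * C₀ * r ^ n) := by
  classical
  by_cases h : ENNReal.ofReal r ≤ EMetric.diam F
  · refine (hF x hx r hr h).2.trans (ENNReal.ofReal_le_ofReal ?_)
    have h5 : (1:ℝ) ≤ 5 ^ (n+1) := one_le_pow₀ (by norm_num)
    have : 0 ≤ C₀ * r ^ n := by positivity
    nlinarith
  · have h1 : EMetric.diam F < ENNReal.ofReal r := not_le.1 h
    set D := (EMetric.diam F).toReal with hDdef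
    have hDe : EMetric.diam F = ENNReal.ofReal D := (ENNReal.ofReal_toReal h1.ne_top).symm
    have hD0 : 0 ≤ D := ENNReal.toReal_nonneg
    have hDr : D < r := by
      rw [hDe] at h1; exact (ENNReal.ofReal_lt_ofReal_iff hr).1 h1
    have hdist : ∀ a ∈ F, ∀ b ∈ F, dist a b ≤ D := by
      intro a ha b hb
      have h2 : edist a b ≤ EMetric.diam F := Metric.edist_le_ediam_of_mem ha hb
      rw [hDe, edist_dist] at h2
      exact (ENNReal.ofReal_le_ofReal_iff hD0).1 h2
    rcases hD0.eq_or_lt with hz | hpos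
    · have hsub : F.Subsingleton := by
        intro a ha b hb
        have := hdist a ha b hb
        rw [← hz] at this
        exact dist_le_zero.1 this
      have h3 : μH[n] (F ∩ ball x r) = 0 := by
        have := hausdorffMeasure_of_dimH_lt (d := (n : NNReal)) (s := F ∩ ball x r) (by
          rw [dimH_subsingleton (hsub.anti inter_subset_left)]
          simp; omega)
        simpa using this
      rw [h3]; exact zero_le
    · let K : Set ℕ := {k | ∃ s : Finset (Euc (n+1)), (∀ a ∈ s, a ∈ F) ∧
        (∀ a ∈ s, ∀ b ∈ s, a ≠ b → D ≤ dist a b) ∧ s.card = k}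
      have hKb : BddAbove K := by
        refine ⟨5 ^ (n+1), ?_⟩
        rintro k ⟨s, hs1, hs2, rfl⟩
        exact sep_card hpos s (fun a ha => hdist a (hs1 a ha) x hx) hs2
      have hKn : K.Nonempty := ⟨0, ∅, by simp, by simp, by simp⟩
      obtain ⟨s, hs1, hs2, hs3⟩ := Nat.sSup_mem hKn hKb
      have hcov : ∀ y ∈ F, ∃ c ∈ s, dist y c < D := by
        intro y hy
        by_contra hcon
        push Not at hcon
        have hys : y ∉ s := by
          intro hys
          have := hcon y hys
          rw [dist_self] at this
          linarith
        have : (insert y s).card ∈ K := by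
          refine ⟨insert y s, ?_, ?_, rfl⟩
          · intro a ha
            rcases Finset.mem_insert.1 ha with rfl | ha
            · exact hy
            · exact hs1 a ha
          · intro a ha b hb hab
            rcases Finset.mem_insert.1 ha with rfl | ha
            · rcases Finset.mem_insert.1 hb with rfl | hb
              · exact absurd rfl hab
              · exact hcon b hb
            · rcases Finset.mem_insert.1 hb with hby | hb
              · rw [hby, dist_comm]; exact hcon a ha
              · exact hs2 a ha b hb hab
        have h4 := le_csSup hKb this
        rw [Finset.card_insert_of_notMem hys, ← hs3] at h4
        omega
      have hcard : s.card ≤ 5 ^ (n+1) := sep_card hpos s (fun a ha => hdist a (hs1 a ha) x hx) hs2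
      have hc1 : F ∩ ball x r ⊆ ⋃ c ∈ s, F ∩ ball c D := by
        intro y hy
        obtain ⟨c, hc, hyc⟩ := hcov y hy.1
        simp only [mem_iUnion]
        exact ⟨c, hc, hy.1, hyc⟩
      calc μH[n] (F ∩ ball x r) ≤ μH[n] (⋃ c ∈ s, F ∩ ball c D) := measure_mono hc1
        _ ≤ ∑ c ∈ s, μH[n] (F ∩ ball c D) := measure_biUnion_finset_le _ _
        _ ≤ ∑ c ∈ s, ENNReal.ofReal (C₀ * D ^ n) :=
            Finset.sum_le_sum fun c hc => (hF c (hs1 c hc) D hpos hDe.ge).2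
        _ = ENNReal.ofReal (s.card * (C₀ * D ^ n)) := by
            rw [Finset.sum_const, nsmul_eq_mul, ENNReal.ofReal_mul (Nat.cast_nonneg s.card), ENNReal.ofReal_natCast]
        _ ≤ _ := by
            apply ENNReal.ofReal_le_ofReal
            rw [mul_assoc]
            have : (s.card : ℝ) ≤ 5 ^ (n+1) := by exact_mod_cast hcard
            gcongr

lemma dil_sub {n : ℕ} {F : Set (Euc (n+1))} {μ : Measure (Euc (n+1))} {Cl : ℝ}
    (L : DSLattice n F μ Cl) {q : Cube n} (hq : L.mem q) :
    dilCube F 2 q ⊆ F ∩ closedBall (L.center q.2) (2 * sideLen q) := by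
  intro x hx
  refine ⟨hx.1, ?_⟩
  have h1 : infDist x q.2 ≤ sideLen q := by
    have := hx.2
    linarith
  rw [mem_closedBall]
  apply le_of_forall_pos_le_add
  intro ε hε
  obtain ⟨y, hy, hxy⟩ := (Metric.infDist_lt_iff (L.nonempty _ _ hq)).1 (lt_of_le_of_lt h1 (lt_add_of_pos_right _ hε))
  have := cube_sub_ball L hq hy
  linarith [dist_triangle x y (L.center q.2)]

lemma sub_dil {n : ℕ} {F : Set (Euc (n+1))} {μ : Measure (Euc (n+1))} {Cl : ℝ}
    (L : DSLattice n F μ Cl) {q : Cube n} (hq : L.mem q) : q.2 ⊆ dilCube F 2 q := by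
  intro x hx
  refine ⟨L.subset_F _ _ hq hx, ?_⟩
  rw [infDist_zero_of_mem hx]
  have := sideLen_pos q
  linarith

theorem hd_part {n : ℕ} (hn : 2 ≤ n) {C₀ c' : ℝ} (hC₀ : 1 ≤ C₀) (hc' : 0 < c') {Ω : Set (Euc (n+1))} (hΩ : IsOpen Ω)
    (hAD : ADRegular n C₀ (frontier Ω)) {μ : Measure (Euc (n+1))} {Cl : ℝ}
    (hμ : μ = (μH[n]).restrict (frontier Ω)) (L : DSLattice n (frontier Ω) μ Cl) (R₀ : Cube n) (p : Euc (n+1))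
    (hR : L.mem R₀) (hpΩ : p ∈ Ω) (hω : c' ≤ hMeasure Ω p R₀.2) (hp : MinP Ω p)
    {A : ℝ} (hA : 1 ≤ A) :
    μ (BHset Ω μ L p R₀ A) ≤
      ENNReal.ofReal (((5 ^ (n+1) * C₀ * 21 ^ n * Cl) * (5 ^ (n+1) * C₀ * 3 ^ n * Cl) / c') / A) * μ R₀.2 := by
  classical
  have hA0 : 0 < A := by linarith
  have hCl := L.one_le_Cl
  have hle : ∀ s, μ s ≤ μH[n] s := fun s => by rw [hμ]; exact Measure.restrict_apply_le _ _
  set C1 : ℝ := 5 ^ (n+1) * C₀ with hC1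
  have hC1p : 0 < C1 := by positivity
  have hub : ∀ x ∈ (frontier Ω), ∀ r : ℝ, 0 < r → μ ((frontier Ω) ∩ ball x r) ≤ ENNReal.ofReal (C1 * r ^ n) :=
    fun x hx r hr => (hle _).trans (ad_ub (by omega) hC₀ hAD hx hr)
  have hcF : ∀ q, L.mem q → L.center q.2 ∈ (frontier Ω) := fun q hq => L.subset_F _ _ hq (L.center_mem _ _ hq)
  have hdub : ∀ q, L.mem q → μ (dilCube (frontier Ω) 2 q) ≤ ENNReal.ofReal (C1 * (3 * sideLen q) ^ n) := by
    intro q hq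
    refine (measure_mono ?_).trans (hub _ (hcF q hq) (3 * sideLen q) (by linarith [sideLen_pos q]))
    intro x hx
    have h := dil_sub L hq hx
    refine ⟨h.1, ?_⟩
    have h2 : dist x (L.center q.2) ≤ 2 * sideLen q := h.2
    rw [mem_ball]; linarith [sideLen_pos q]
  have hdfin : ∀ q, L.mem q → μ (dilCube (frontier Ω) 2 q) ≠ ⊤ := fun q hq =>
    ne_top_of_le_ne_top ENNReal.ofReal_ne_top (hdub q hq)
  have hdpos : ∀ q, L.mem q → 0 < (μ (dilCube (frontier Ω) 2 q)).toReal := fun q hq =>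
    ENNReal.toReal_pos ((cube_pos L hq).trans_le (measure_mono (sub_dil L hq))).ne' (hdfin q hq)
  have hlb : ∀ q, L.mem q → sideLen q ^ n ≤ Cl * (μ q.2).toReal := by
    intro q hq
    have h := ENNReal.toReal_mono (cube_fin L hq) (L.measure_lb _ _ hq)
    rw [ENNReal.toReal_ofReal (by positivity), inv_mul_le_iff₀ (by linarith)] at h
    exact h
  set m := (μ R₀.2).toReal with hm
  have hm0 : 0 < m := ENNReal.toReal_pos (cube_pos L hR).ne' (cube_fin L hR)
  have hRd : (μ (dilCube (frontier Ω) 2 R₀)).toReal ≤ C1 * 3 ^ n * Cl * m := by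
    have h := ENNReal.toReal_mono ENNReal.ofReal_ne_top (hdub R₀ hR)
    have hs := sideLen_pos R₀
    rw [ENNReal.toReal_ofReal (by positivity), mul_pow] at h
    calc _ ≤ _ := h
      _ = C1 * 3 ^ n * (sideLen R₀ ^ n) := by ring
      _ ≤ C1 * 3 ^ n * (Cl * m) := mul_le_mul_of_nonneg_left (hlb R₀ hR) (by positivity)
      _ = _ := by ring
  have hω2 : c' ≤ hMeasure Ω p (dilCube (frontier Ω) 2 R₀) := hω.trans (hm_mono hp (sub_dil L hR))
  set K := C1 * 3 ^ n * Cl * m / (A * c') with hK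
  have hK0 : 0 ≤ K := by positivity
  set T := HDfam Ω μ L p R₀ A with hT
  have hmem : ∀ q ∈ T, L.mem q := fun q hq => hq.1.1
  have hsub : ∀ q ∈ T, q.2 ⊆ R₀.2 := fun q hq => hq.1.2.1
  have hdens : ∀ q ∈ T, (μ (dilCube (frontier Ω) 2 q)).toReal ≤ hMeasure Ω p (dilCube (frontier Ω) 2 q) * K := by
    intro q hq
    have h : A * (hMeasure Ω p (dilCube (frontier Ω) 2 R₀) / (μ (dilCube (frontier Ω) 2 R₀)).toReal) ≤
      hMeasure Ω p (dilCube (frontier Ω) 2 q) / (μ (dilCube (frontier Ω) 2 q)).toReal := hq.1.2.2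
    have hq0 := hdpos q (hmem q hq)
    have hR0 := hdpos R₀ hR
    have hw := hm_nonneg hp (dilCube (frontier Ω) 2 q)
    rw [← mul_div_assoc, div_le_div_iff₀ hR0 hq0] at h
    rw [hK, ← mul_div_assoc, le_div_iff₀ (by positivity)]
    calc _ = (A * c') * (μ (dilCube (frontier Ω) 2 q)).toReal := by ring
      _ ≤ (A * hMeasure Ω p (dilCube (frontier Ω) 2 R₀)) * (μ (dilCube (frontier Ω) 2 q)).toReal := by gcongr
      _ ≤ _ := h
      _ ≤ _ := mul_le_mul_of_nonneg_left hRd hw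
  have hrad : ∀ q ∈ T, 2 * (2 * sideLen q) ≤ 4 * max 1 (Cl * m) := by
    intro q hq
    have h1 : sideLen q ≤ max 1 (Cl * m) := by
      rcases le_total (sideLen q) 1 with h | h
      · exact h.trans (le_max_left _ _)
      · have h2 : sideLen q ≤ sideLen q ^ n := le_self_pow₀ h (by omega)
        have h3 : (μ q.2).toReal ≤ m := ENNReal.toReal_mono (cube_fin L hR) (measure_mono (hsub q hq))
        have h4 : Cl * (μ q.2).toReal ≤ Cl * m := mul_le_mul_of_nonneg_left h3 (by linarith)
        exact (h2.trans ((hlb q (hmem q hq)).trans h4)).trans (le_max_right _ _)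
    linarith
  obtain ⟨u, huT, hud, huc⟩ := Vitali.exists_disjoint_subfamily_covering_enlargement_closedBall T
    (fun q => L.center q.2) (fun q => 2 * (2 * sideLen q)) _ hrad 5 (by norm_num)
  have hmu : ∀ q : u, L.mem q.1 := fun q => hmem _ (huT q.2)
  obtain ⟨hcount, -, -⟩ := disj_family (μ := μ) (As := fun q : u => q.1.2) (R := R₀.2)
    (fun q => L.measurableSet _ _ (hmu q))
    (fun q q' hne => max_disj L _ (fun q h => h.1) (huT q.2) (huT q'.2) (fun h => hne (Subtype.ext h)))
    (fun q => cube_pos L (hmu q)) (fun q => hsub _ (huT q.2)) (cube_fin L hR)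
  have hcov : BHset Ω μ L p R₀ A ⊆ ⋃ b : u, (frontier Ω) ∩ ball (L.center b.1.2) (21 * sideLen b.1) := by
    intro x hx
    simp only [BHset, mem_iUnion] at hx
    obtain ⟨q, hq, hx⟩ := hx
    have hq' : q ∈ T := hq
    obtain ⟨b, hb, hqb⟩ := huc q hq'
    refine mem_iUnion.2 ⟨⟨b, hb⟩, L.subset_F _ _ (hmem q hq') hx, ?_⟩
    have h1 : x ∈ closedBall (L.center q.2) (2 * (2 * sideLen q)) := by
      have := cube_sub_ball L (hmem q hq') hx
      rw [mem_closedBall]; linarith [sideLen_pos q]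
    have h2 : dist x (L.center b.2) ≤ 5 * (2 * (2 * sideLen b)) := hqb h1
    rw [mem_ball]
    show dist x (L.center b.2) < 21 * sideLen b
    linarith [sideLen_pos b]
  have hfin : ∀ S : Finset u, ∑ b ∈ S, ENNReal.ofReal (C1 * (21 * sideLen b.1) ^ n) ≤
      ENNReal.ofReal (C1 * 21 ^ n * Cl * K) := by
    intro S
    rw [← ENNReal.ofReal_sum_of_nonneg (fun b _ => by have := sideLen_pos b.1; positivity)]
    apply ENNReal.ofReal_le_ofReal
    have h1 : ∀ b ∈ S, C1 * (21 * sideLen b.1) ^ n ≤ C1 * 21 ^ n * Cl * K * hMeasure Ω p (dilCube (frontier Ω) 2 b.1) := by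
      intro b _
      have h2 : (μ b.1.2).toReal ≤ (μ (dilCube (frontier Ω) 2 b.1)).toReal :=
        ENNReal.toReal_mono (hdfin _ (hmu b)) (measure_mono (sub_dil L (hmu b)))
      have h3 := h2.trans (hdens b.1 (huT b.2))
      calc C1 * (21 * sideLen b.1) ^ n = C1 * 21 ^ n * (sideLen b.1 ^ n) := by rw [mul_pow]; ring
        _ ≤ C1 * 21 ^ n * (Cl * (μ b.1.2).toReal) := mul_le_mul_of_nonneg_left (hlb _ (hmu b)) (by positivity)
        _ = C1 * 21 ^ n * Cl * (μ b.1.2).toReal := by ring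
        _ ≤ C1 * 21 ^ n * Cl * (hMeasure Ω p (dilCube (frontier Ω) 2 b.1) * K) := mul_le_mul_of_nonneg_left h3 (by positivity)
        _ = _ := by ring
    refine (Finset.sum_le_sum h1).trans ?_
    rw [← Finset.mul_sum]
    have h4 := superadd (d := n+1) (by omega) hΩ hpΩ hp S (fun b : u => dilCube (frontier Ω) 2 b.1) (fun b => L.center b.1.2)
      (fun b => 2 * sideLen b.1) (fun b _ => by linarith [sideLen_pos b.1])
      (fun b _ => (dil_sub L (hmu b)).trans inter_subset_right)
      (fun b _ b' _ hne => hud b.2 b'.2 (fun h => hne (Subtype.ext h)))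
    exact mul_le_of_le_one_right (by positivity) h4
  calc μ (BHset Ω μ L p R₀ A) ≤ μ (⋃ b : u, (frontier Ω) ∩ ball (L.center b.1.2) (21 * sideLen b.1)) := measure_mono hcov
    _ ≤ ∑' b : u, μ ((frontier Ω) ∩ ball (L.center b.1.2) (21 * sideLen b.1)) := measure_iUnion_le _
    _ ≤ ∑' b : u, ENNReal.ofReal (C1 * (21 * sideLen b.1) ^ n) :=
        ENNReal.tsum_le_tsum fun b => hub _ (hcF _ (hmu b)) _ (by linarith [sideLen_pos b.1])
    _ ≤ ENNReal.ofReal (C1 * 21 ^ n * Cl * K) := by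
        rw [ENNReal.tsum_eq_iSup_sum]
        exact iSup_le hfin
    _ = _ := by
        rw [← ENNReal.ofReal_toReal (cube_fin L hR), ← ENNReal.ofReal_mul (by positivity)]
        congr 1
        rw [hK, div_div, mul_comm c' A]
        ring

/-- Under the standing assumptions, `μ(B_H) ≤ C A⁻¹ μ(R₀)`, with `C`
depending only on `n`, the AD-regularity and lattice constants and `c'`, and
`ω^p(B_L) ≤ A⁻¹ ω^p(R₀)`. -/
theorem high_low_density_estimates
    (n : ℕ) (hn : 2 ≤ n) (C₀ Cl c c' : ℝ) (hC₀ : 1 ≤ C₀) (hCl : 1 ≤ Cl)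
    (hc : 0 < c) (hc' : 0 < c') :
    ∃ C : ℝ, 0 < C ∧
      ∀ D : ℝ → ℝ,
      ∀ (F : Set (Euc (n+1))), IsClosed F → ADRegular n C₀ F →
      ∀ Ω : Set (Euc (n+1)), Ω = Fᶜ → frontier Ω = F →
      ∀ μ : Measure (Euc (n+1)), μ = (μH[n]).restrict (frontier Ω) →
      ∀ (L : DSLattice n (frontier Ω) μ Cl) (R₀ : Cube n) (p : Euc (n+1)),
        L.mem R₀ → p ∈ Ω → p ∉ cubeBall L 4 R₀ →
        c * sideLen R₀ ≤ infDist p (frontier Ω) →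
        infDist p (frontier Ω) ≤ infDist p R₀.2 →
        infDist p R₀.2 ≤ c⁻¹ * sideLen R₀ →
        c' ≤ hMeasure Ω p R₀.2 →
        WeakAInftyBallWith n Ω p (L.center R₀.2) (4 * sideLen R₀) D →
      ∀ A : ℝ, 1 ≤ A →
        μ (BHset Ω μ L p R₀ A) ≤ ENNReal.ofReal (C / A) * μ R₀.2 ∧
        hMeasure Ω p (BLset Ω μ L p R₀ A) ≤ A⁻¹ * hMeasure Ω p R₀.2 := by
  refine ⟨(5 ^ (n+1) * C₀ * 21 ^ n * Cl) * (5 ^ (n+1) * C₀ * 3 ^ n * Cl) / c', by positivity, ?_⟩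
  intro D F hFc hAD Ω hΩ hfr μ hμ L R₀ p hR hp _ _ _ _ hω hw A hA
  have hopen : IsOpen Ω := by rw [hΩ]; exact hFc.isOpen_compl
  have hmin : MinP Ω p := minP_of_pos (lt_of_lt_of_le hc' hω)
  have hAD' : ADRegular n C₀ (frontier Ω) := by rw [hfr]; exact hAD
  exact ⟨hd_part hn hC₀ hc' hopen hAD' hμ L R₀ p hR hp hω hmin hA, ld_part hμ L R₀ p hR hmin hw hA⟩


end HarmMeas
end
end
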